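/- arXiv:1711.02916 — 5 statements merged into one kernel-verified Lean document; each statement's English description precedes it below -/
import Mathlib

section
/- For every η ∈ (0,1) there exists c ∈ (0,1) such that for every ν ∈ (0,c] and every α ≥ 1/c there exist μ₀ > 0 and β > 0 such that for every μ ∈ (0, μ₀] there exists N₀ ∈ ℕ such that for every N ≥ N₀ the following holds: let C₁, …, C_N be finite multisets of ℕ satisfying (B1) νN ≤ |C_i| ≤ N for every i ∈ [N], and (B2) Σ_{i=1}^N m(k, C_i) ≤ μN for every k ∈ ℕ. Let ℓ ∈ ℕ with 1 ≤ ℓ ≤ βνN and αℓ ∈ ℕ, and let U ⊆ ℕ be a set with |U| = αℓ. Then there exists T ⊆ U such that (T1) |T| ≥ ℓ, and (T2) |C_i ∖⁺ T| ≥ (1 − η)|C_i| for every i ∈ [N]. -/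
/-!
View `(C i).count k` as a nonnegative matrix with rows `i` and columns `k ∈ U`, all of whose column
sums are small. The constant weight `η / 2` on `U` has total mass at least `ℓ` and takes at most an
`η / 2` share of every row. It is rounded to a set `T` by the floating-colours method of Beck and
Fiala: as long as more than two weights are fractional, the rows whose mass on the fractional
columns exceeds twice the column bound are, by double counting, so few that the weights can be
moved along a nonzero direction preserving the total mass and all these rows, until another weight
becomes `0` or `1`. A row that ceases to be preserved can gain at most twice the column bound from
then on, and `μ₀ = η * ν / 4` makes this gain at most another `η / 2` share of `C i`.
-/

section Rounding

variable {ι κ 𝕜 : Type*}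

lemma exists_ne_zero_forall_sum_mul_eq_zero [Field 𝕜] (a : ι → κ → 𝕜) {A : Finset ι}
    {F : Finset κ} (h : A.card < F.card) :
    ∃ v : κ → 𝕜, (∀ k ∉ F, v k = 0) ∧ (∃ k ∈ F, v k ≠ 0) ∧
      ∀ i ∈ A, ∑ k ∈ F, a i k * v k = 0 := by
  classical
  have hdep : ¬ LinearIndependent 𝕜 fun (k : F) (i : A) => a i k := fun hli =>
    absurd hli.fintype_card_le_finrank (by simpa using h)
  obtain ⟨w, hw, k, hk⟩ := Fintype.not_linearIndependent_iff.1 hdep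
  refine ⟨fun k => if hk : k ∈ F then w ⟨k, hk⟩ else 0, fun k hk => dif_neg hk,
    ⟨k, k.2, by simpa using hk⟩, fun i hi => ?_⟩
  rw [← Finset.sum_coe_sort F]
  simpa [mul_comm] using congrFun hw ⟨i, hi⟩

variable [Field 𝕜] [LinearOrder 𝕜]

/-- The coordinates in `U` at which the weight vector `x` still has to be rounded. -/
def fractionalSupport (U : Finset κ) (x : κ → 𝕜) : Finset κ :=
  U.filter fun k => x k ∈ Set.Ioo 0 1

lemma mem_fractionalSupport {U : Finset κ} {x : κ → 𝕜} {k : κ} :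
    k ∈ fractionalSupport U x ↔ k ∈ U ∧ x k ∈ Set.Ioo 0 1 :=
  Finset.mem_filter

variable [IsStrictOrderedRing 𝕜]

lemma exists_exit_time {x v : 𝕜} (hx : x ∈ Set.Ioo 0 1) (hv : v ≠ 0) :
    ∃ ρ, 0 ≤ ρ ∧ x + ρ * v ∉ Set.Ioo 0 1 ∧ ∀ r ∈ Set.Icc 0 ρ, x + r * v ∈ Set.Icc 0 1 := by
  obtain ⟨hx₀, hx₁⟩ := hx
  rcases hv.lt_or_gt with hv | hv
  · have hexit : x / -v * v = -x := by field_simp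
    refine ⟨x / -v, div_nonneg hx₀.le (neg_nonneg.2 hv.le), fun h => ?_, fun r hr => ⟨?_, ?_⟩⟩
    · linarith [h.1]
    · linarith [mul_le_mul_of_nonpos_right hr.2 hv.le]
    · linarith [mul_nonpos_of_nonneg_of_nonpos hr.1 hv.le]
  · have hexit : (1 - x) / v * v = 1 - x := div_mul_cancel₀ _ hv.ne'
    refine ⟨(1 - x) / v, div_nonneg (sub_nonneg.2 hx₁.le) hv.le, fun h => ?_, fun r hr => ⟨?_, ?_⟩⟩
    · linarith [h.2]
    · linarith [mul_nonneg hr.1 hv.le]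
    · linarith [mul_le_mul_of_nonneg_right hr.2 hv.le]

lemma exists_add_mul_mem_Icc_notMem_Ioo {x v : κ → 𝕜} {F : Finset κ}
    (hx : ∀ k ∈ F, x k ∈ Set.Ioo 0 1) (hv : ∃ k ∈ F, v k ≠ 0) :
    ∃ r, (∀ k ∈ F, x k + r * v k ∈ Set.Icc 0 1) ∧ ∃ k ∈ F, x k + r * v k ∉ Set.Ioo 0 1 := by
  have hexit : ∀ k, ∃ ρ, k ∈ F → v k ≠ 0 → 0 ≤ ρ ∧ x k + ρ * v k ∉ Set.Ioo 0 1 ∧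
      ∀ r ∈ Set.Icc 0 ρ, x k + r * v k ∈ Set.Icc 0 1 := fun k => by
    by_cases h : k ∈ F ∧ v k ≠ 0
    · obtain ⟨ρ, hρ⟩ := exists_exit_time (hx k h.1) h.2
      exact ⟨ρ, fun _ _ => hρ⟩
    · exact ⟨0, fun hk hvk => absurd ⟨hk, hvk⟩ h⟩
  choose ρ hρ using hexit
  obtain ⟨k₀, hk₀, hmin⟩ :=
    (F.filter (v · ≠ 0)).exists_min_image ρ (Finset.filter_nonempty_iff.2 hv)
  obtain ⟨hk₀F, hvk₀⟩ := Finset.mem_filter.1 hk₀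
  obtain ⟨hρ₀, hout, -⟩ := hρ k₀ hk₀F hvk₀
  refine ⟨ρ k₀, fun k hk => ?_, k₀, hk₀F, hout⟩
  by_cases hvk : v k = 0
  · simpa [hvk] using Set.Ioo_subset_Icc_self (hx k hk)
  · exact (hρ k hk hvk).2.2 _ ⟨hρ₀, hmin k (Finset.mem_filter.2 ⟨hk, hvk⟩)⟩

lemma mul_card_heavy_rows_lt_card [Fintype ι] {a : ι → κ → 𝕜} (ha : ∀ i k, 0 ≤ a i k) {t : 𝕜}
    (ht : 0 ≤ t) {F : Finset κ} (hF : F.Nonempty) (hcol : ∀ k ∈ F, ∑ i, a i k ≤ t) (c : 𝕜) :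
    c * (Finset.univ.filter fun i => c * t < ∑ k ∈ F, a i k).card < F.card := by
  set A := Finset.univ.filter fun i => c * t < ∑ k ∈ F, a i k
  rcases A.eq_empty_or_nonempty with hempty | hne
  · simpa [hempty] using hF.card_pos
  refine lt_of_mul_lt_mul_right ?_ ht
  calc c * A.card * t = ∑ _i ∈ A, c * t := by rw [Finset.sum_const, nsmul_eq_mul]; ring
    _ < ∑ i ∈ A, ∑ k ∈ F, a i k :=
      Finset.sum_lt_sum_of_nonempty hne fun i hi => (Finset.mem_filter.1 hi).2
    _ ≤ ∑ i, ∑ k ∈ F, a i k :=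
      Finset.sum_le_univ_sum_of_nonneg fun i => Finset.sum_nonneg fun k _ => ha i k
    _ = ∑ k ∈ F, ∑ i, a i k := Finset.sum_comm
    _ ≤ F.card * t := by simpa using Finset.sum_le_card_nsmul F _ t hcol

lemma sum_pos_le_sum_mul_add_sum_fractionalSupport {f x : κ → 𝕜} {U : Finset κ}
    (hf : ∀ k, 0 ≤ f k) (hx : ∀ k ∈ U, x k ∈ Set.Icc 0 1) :
    ∑ k ∈ U with 0 < x k, f k ≤ ∑ k ∈ U, f k * x k + ∑ k ∈ fractionalSupport U x, f k := by
  rw [fractionalSupport, Finset.sum_filter, Finset.sum_filter, ← Finset.sum_add_distrib]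
  refine Finset.sum_le_sum fun k hk => ?_
  obtain ⟨h₀, h₁⟩ := hx k hk
  rcases h₀.eq_or_lt with h₀ | h₀
  · simp [← h₀]
  rcases h₁.eq_or_lt with h₁ | h₁
  · simp [h₁]
  · simpa [h₀, h₁] using mul_nonneg (hf k) h₀.le

/-- `x` is an intermediate stage of the Beck–Fiala rounding of the weights `x₀` on `U`: the total
weight has not dropped, and each row of `a` either has not grown in weight, or is such that even
rounding every positive weight up to `1` exceeds its initial weight by at most `2 * t`. -/
structure IsPartialRounding (a : ι → κ → 𝕜) (t : 𝕜) (U : Finset κ) (x₀ x : κ → 𝕜) : Prop where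
  mem_Icc : ∀ k ∈ U, x k ∈ Set.Icc 0 1
  sum_le_sum : ∑ k ∈ U, x₀ k ≤ ∑ k ∈ U, x k
  row_le : ∀ i, ∑ k ∈ U, a i k * x k ≤ ∑ k ∈ U, a i k * x₀ k ∨
    ∑ k ∈ U with 0 < x k, a i k ≤ ∑ k ∈ U, a i k * x₀ k + 2 * t

namespace IsPartialRounding

variable {a : ι → κ → 𝕜} {t : 𝕜} {U : Finset κ} {x₀ x y : κ → 𝕜}

lemma sum_pos_le (hx : IsPartialRounding a t U x₀ x) {i : ι} (ha : ∀ k, 0 ≤ a i k)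
    (hlight : ∑ k ∈ fractionalSupport U x, a i k ≤ 2 * t) :
    ∑ k ∈ U with 0 < x k, a i k ≤ ∑ k ∈ U, a i k * x₀ k + 2 * t := by
  rcases hx.row_le i with hrow | hrow
  · linarith [sum_pos_le_sum_mul_add_sum_fractionalSupport ha hx.mem_Icc]
  · exact hrow

lemma of_heavy_rows_eq (hx : IsPartialRounding a t U x₀ x) (ha : ∀ i k, 0 ≤ a i k)
    (hy : ∀ k ∈ U, y k ∈ Set.Icc 0 1) (hoff : ∀ k ∉ fractionalSupport U x, y k = x k)
    (hsum : ∑ k ∈ U, y k = ∑ k ∈ U, x k)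
    (hheavy : ∀ i, 2 * t < ∑ k ∈ fractionalSupport U x, a i k →
      ∑ k ∈ U, a i k * y k = ∑ k ∈ U, a i k * x k) :
    IsPartialRounding a t U x₀ y where
  mem_Icc := hy
  sum_le_sum := hx.sum_le_sum.trans_eq hsum.symm
  row_le i := by
    have hpos : ∀ k, 0 < y k → 0 < x k := fun k hk => by
      by_cases hkF : k ∈ fractionalSupport U x
      · exact (mem_fractionalSupport.1 hkF).2.1
      · rwa [← hoff k hkF]
    have hmono : ∑ k ∈ U with 0 < y k, a i k ≤ ∑ k ∈ U with 0 < x k, a i k :=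
      Finset.sum_le_sum_of_subset_of_nonneg (Finset.monotone_filter_right U fun k _ => hpos k)
        fun k _ _ => ha i k
    by_cases hi : 2 * t < ∑ k ∈ fractionalSupport U x, a i k
    · exact (hx.row_le i).imp (hheavy i hi).trans_le hmono.trans
    · exact Or.inr (hmono.trans (hx.sum_pos_le (ha i) (not_lt.1 hi)))

lemma exists_card_fractionalSupport_lt [Fintype ι] (hx : IsPartialRounding a t U x₀ x)
    (ha : ∀ i k, 0 ≤ a i k) (ht : 0 ≤ t) (hcol : ∀ k ∈ U, ∑ i, a i k ≤ t)
    (hcard : 2 ≤ (fractionalSupport U x).card) :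
    ∃ y, IsPartialRounding a t U x₀ y ∧
      (fractionalSupport U y).card < (fractionalSupport U x).card := by
  set F := fractionalSupport U x
  have hFU : F ⊆ U := Finset.filter_subset _ _
  set A := Finset.univ.filter fun i => 2 * t < ∑ k ∈ F, a i k with hA
  have hA_card : 2 * A.card < F.card := by
    exact_mod_cast mul_card_heavy_rows_lt_card ha ht (Finset.card_pos.1 (by omega))
      (fun k hk => hcol k (hFU hk)) 2
  -- The all-ones row, indexed by `none`, makes the direction `v` preserve the total weight.
  obtain ⟨v, hv_off, hv_ne, hv⟩ := exists_ne_zero_forall_sum_mul_eq_zero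
    (fun o : Option ι => o.elim 1 a) (A := A.insertNone) (F := F)
    (by rw [Finset.card_insertNone]; omega)
  obtain ⟨r, hr, k₀, hk₀, hk₀_out⟩ :=
    exists_add_mul_mem_Icc_notMem_Ioo (fun k hk => (mem_fractionalSupport.1 hk).2) hv_ne
  have hoff : ∀ k ∉ F, x k + r * v k = x k := fun k hk => by rw [hv_off k hk, mul_zero, add_zero]
  have hpreserve : ∀ f : κ → 𝕜, ∑ k ∈ F, f k * v k = 0 →
      ∑ k ∈ U, f k * (x k + r * v k) = ∑ k ∈ U, f k * x k := fun f hf => by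
    rw [Finset.sum_subset hFU fun k _ hk => by rw [hv_off k hk, mul_zero]] at hf
    simp only [mul_add, mul_left_comm _ r, Finset.sum_add_distrib, ← Finset.mul_sum, hf, mul_zero,
      add_zero]
  refine ⟨fun k => x k + r * v k,
    hx.of_heavy_rows_eq ha (fun k hk => ?_) hoff ?_ fun i hi => ?_, ?_⟩
  · by_cases hkF : k ∈ F
    · exact hr k hkF
    · exact (hoff k hkF).symm ▸ hx.mem_Icc k hk
  · simpa using hpreserve 1 (hv none (by simp))
  · exact hpreserve (a i) (hv (some i) (by simpa [hA] using hi))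
  · refine Finset.card_lt_card (Finset.ssubset_iff_of_subset (fun k hk => ?_) |>.2
      ⟨k₀, hk₀, fun h => hk₀_out (mem_fractionalSupport.1 h).2⟩)
    by_contra hkF
    rw [mem_fractionalSupport, hoff k hkF] at hk
    exact hkF (mem_fractionalSupport.2 hk)

lemma sum_le_card_pos (hx : IsPartialRounding a t U x₀ x) :
    ∑ k ∈ U, x₀ k ≤ (U.filter (0 < x ·)).card := by
  refine hx.sum_le_sum.trans ?_
  rw [Finset.natCast_card_filter]
  refine Finset.sum_le_sum fun k hk => ?_
  split_ifs with h
  · exact (hx.mem_Icc k hk).2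
  · exact not_lt.1 h

end IsPartialRounding

theorem exists_beck_fiala_rounding [Fintype ι] {a : ι → κ → 𝕜} (ha : ∀ i k, 0 ≤ a i k) {t : 𝕜}
    (ht : 0 ≤ t) {U : Finset κ} (hcol : ∀ k ∈ U, ∑ i, a i k ≤ t) {x : κ → 𝕜}
    (hx : ∀ k ∈ U, x k ∈ Set.Icc 0 1) :
    ∃ T ⊆ U, ∑ k ∈ U, x k ≤ T.card ∧
      ∀ i, ∑ k ∈ T, a i k ≤ ∑ k ∈ U, a i k * x k + 2 * t := by
  obtain ⟨y, hy, hmin⟩ := exists_minimalFor_of_wellFoundedLT (IsPartialRounding a t U x)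
    (fun y => (fractionalSupport U y).card) ⟨x, hx, le_rfl, fun _ => Or.inl le_rfl⟩
  have hcard : (fractionalSupport U y).card ≤ 2 := by
    by_contra! h
    obtain ⟨z, hz, hlt⟩ := hy.exists_card_fractionalSupport_lt ha ht hcol h.le
    exact hlt.not_ge (hmin hz hlt.le)
  have hentry : ∀ i, ∀ k ∈ fractionalSupport U y, a i k ≤ t := fun i k hk =>
    (Finset.single_le_sum (fun j _ => ha j k) (Finset.mem_univ i)).trans
      (hcol k (mem_fractionalSupport.1 hk).1)
  refine ⟨U.filter (0 < y ·), Finset.filter_subset _ _, hy.sum_le_card_pos,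
    fun i => hy.sum_pos_le (ha i) ?_⟩
  calc ∑ k ∈ fractionalSupport U y, a i k ≤ (fractionalSupport U y).card * t := by
        simpa using Finset.sum_le_card_nsmul _ _ t (hentry i)
    _ ≤ 2 * t := mul_le_mul_of_nonneg_right (by exact_mod_cast hcard) ht

end Rounding

section Multiset

variable {ι κ : Type*} [DecidableEq κ]

lemma sum_count_eq_card_filter_mem (M : Multiset κ) (T : Finset κ) :
    ∑ k ∈ T, M.count k = (M.filter (· ∈ T)).card := by
  rw [← Multiset.sum_count_eq_card fun k hk => (Multiset.mem_filter.1 hk).2]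
  exact Finset.sum_congr rfl fun k hk => (Multiset.count_filter_of_pos hk).symm

lemma exists_subset_card_filter_mem_le [Fintype ι] (C : ι → Multiset κ) {d : ℝ} (hd : 0 ≤ d)
    (U : Finset κ) (hcol : ∀ k ∈ U, ((∑ i, (C i).count k : ℕ) : ℝ) ≤ d) {p : ℝ}
    (hp : p ∈ Set.Icc 0 1) :
    ∃ T ⊆ U, p * U.card ≤ T.card ∧
      ∀ i, (((C i).filter (· ∈ T)).card : ℝ) ≤ p * (C i).card + 2 * d := by
  obtain ⟨T, hTU, hT, hrow⟩ := exists_beck_fiala_rounding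
    (a := fun i k => ((C i).count k : ℝ)) (fun _ _ => Nat.cast_nonneg _) hd
    (fun k hk => by exact_mod_cast hcol k hk) (x := fun _ => p) fun _ _ => hp
  refine ⟨T, hTU, by simpa [mul_comm] using hT, fun i => ?_⟩
  have hcount : ∀ S : Finset κ,
      ∑ k ∈ S, ((C i).count k : ℝ) = (((C i).filter (· ∈ S)).card : ℝ) := fun S => by
    exact_mod_cast sum_count_eq_card_filter_mem (C i) S
  have hsub : (((C i).filter (· ∈ U)).card : ℝ) ≤ (C i).card := by
    exact_mod_cast Multiset.card_le_card (Multiset.filter_le _ _)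
  calc (((C i).filter (· ∈ T)).card : ℝ) ≤ ((C i).filter (· ∈ U)).card * p + 2 * d := by
        simpa only [← Finset.sum_mul, hcount] using hrow i
    _ ≤ p * (C i).card + 2 * d := by
        rw [mul_comm]; gcongr; exact hp.1

theorem multiset_colour_deletion_general [Fintype ι] {η ν α μ n : ℝ} (hη : η ∈ Set.Ioo 0 1)
    (hα : 1 / (η / 2) ≤ α) (hμ : μ ∈ Set.Icc 0 (η * ν / 4)) (hn : 0 ≤ n) (C : ι → Multiset κ)
    (hC : ∀ i, ν * n ≤ (C i).card) {ℓ : ℕ} (U : Finset κ)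
    (hcol : ∀ k ∈ U, ((∑ i, (C i).count k : ℕ) : ℝ) ≤ μ * n) (hU : α * ℓ ≤ U.card) :
    ∃ T ⊆ U, ℓ ≤ T.card ∧
      ∀ i, (1 - η) * ((C i).card : ℝ) ≤ (((C i).filter (· ∉ T)).card : ℝ) := by
  obtain ⟨hη₀, hη₁⟩ := hη
  obtain ⟨T, hTU, hT, hdel⟩ := exists_subset_card_filter_mem_le C (mul_nonneg hμ.1 hn) U hcol
    (p := η / 2) ⟨by linarith, by linarith⟩
  refine ⟨T, hTU, ?_, fun i => ?_⟩
  · have hαη : 1 ≤ η / 2 * α := (div_le_iff₀' (half_pos hη₀)).1 hα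
    have hℓT : (ℓ : ℝ) ≤ T.card :=
      calc (ℓ : ℝ) ≤ η / 2 * α * ℓ := le_mul_of_one_le_left ℓ.cast_nonneg hαη
        _ = η / 2 * (α * ℓ) := mul_assoc _ _ _
        _ ≤ η / 2 * U.card := by gcongr
        _ ≤ T.card := hT
    exact_mod_cast hℓT
  · have hμn : μ * n ≤ η / 4 * (C i).card :=
      calc μ * n ≤ η * ν / 4 * n := by gcongr; exact hμ.2
        _ = η / 4 * (ν * n) := by ring
        _ ≤ η / 4 * (C i).card := by gcongr; exact hC i
    have hsplit : (((C i).filter (· ∈ T)).card : ℝ) + ((C i).filter (· ∉ T)).card =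
        (C i).card := by
      rw [← Nat.cast_add, ← Multiset.card_add, Multiset.filter_add_not]
    linarith [hdel i]

end Multiset

/-- technical multiset lemma. For every η ∈ (0,1) there exists c ∈ (0,1) such
that for every ν ∈ (0,c] and α ≥ 1/c there are μ₀ > 0 and β > 0 such that for every
μ ∈ (0,μ₀] there is N₀ such that for every N ≥ N₀ the following holds: if C₁,…,C_N are
multisets of ℕ with (B1) νN ≤ |Cᵢ| ≤ N and (B2) Σᵢ m(k,Cᵢ) ≤ μN for every k, and if
ℓ ∈ ℕ satisfies 1 ≤ ℓ ≤ βνN with αℓ ∈ ℕ, and U ⊆ ℕ has |U| = αℓ, then there is T ⊆ U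
with (T1) |T| ≥ ℓ and (T2) |Cᵢ ∖⁺ T| ≥ (1−η)|Cᵢ| for every i. -/
theorem multiset_colour_deletion :
    ∀ η : ℝ, η ∈ Set.Ioo (0 : ℝ) 1 →
    ∃ c ∈ Set.Ioo (0 : ℝ) 1, ∀ ν α : ℝ, ν ∈ Set.Ioc (0 : ℝ) c → 1 / c ≤ α →
    ∃ μ₀ β : ℝ, 0 < μ₀ ∧ 0 < β ∧ ∀ μ ∈ Set.Ioc (0 : ℝ) μ₀,
    ∃ N₀ : ℕ, ∀ N : ℕ, N₀ ≤ N →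
      ∀ C : Fin N → Multiset ℕ,
        (∀ i : Fin N, ν * N ≤ ((C i).card : ℝ) ∧ ((C i).card : ℝ) ≤ N) →
        (∀ k : ℕ, ((∑ i : Fin N, (C i).count k : ℕ) : ℝ) ≤ μ * N) →
        ∀ ℓ : ℕ, 1 ≤ ℓ → (ℓ : ℝ) ≤ β * ν * N →
        ∀ U : Finset ℕ, (U.card : ℝ) = α * ℓ →
        ∃ T : Finset ℕ, T ⊆ U ∧ ℓ ≤ T.card ∧
          ∀ i : Fin N,
            (1 - η) * ((C i).card : ℝ) ≤ (((C i).filter (fun k => k ∉ T)).card : ℝ) := by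
  exact fun η hη => ⟨η / 2, ⟨half_pos hη.1, by linarith [hη.2]⟩, fun ν α hν hα =>
    ⟨η * ν / 4, 1, div_pos (mul_pos hη.1 hν.1) four_pos, one_pos, fun μ hμ =>
      ⟨0, fun N _ C hC hcol _ _ _ U hU => multiset_colour_deletion_general hη hα
        (Set.Ioc_subset_Icc_self hμ) N.cast_nonneg C (fun i => (hC i).1) U (fun k _ => hcol k)
        hU.ge⟩⟩⟩
end

section
/- There exists ε₀ ∈ (0,1) such that for every ε ∈ (0, ε₀] there exist μ > 0 and n₀ ∈ ℕ such that for every n ≥ n₀ the following holds: if G = (A ∪ B, E) is an ε-extremal Dirac bipartite graph on 2n vertices, then for every μn-bounded edge colouring χ of G there exists a perfect matching of G that is rainbow with respect to χ. -/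
/-- `ε`-extremal balanced bipartite graph with parts `A`, `B` of size `n`. -/
def EpsExtremal {V : Type*} (G : SimpleGraph V) (A B : Set V) (n : ℕ) (ε : ℝ) : Prop :=
  ∃ A₁ A₂ B₁ B₂ : Set V,
    A₁ ∪ A₂ = A ∧ Disjoint A₁ A₂ ∧ B₁ ∪ B₂ = B ∧ Disjoint B₁ B₂ ∧
    |(A₁.ncard : ℝ) - (A₂.ncard : ℝ)| ≤ ε * n ∧
    |(B₁.ncard : ℝ) - (B₂.ncard : ℝ)| ≤ ε * n ∧
    (({p : V × V | p.1 ∈ A₁ ∧ p.2 ∈ B₂ ∧ G.Adj p.1 p.2}).ncard : ℝ) ≤ ε * n ^ 2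

/-!
An `ε`-extremal Dirac bipartite graph is close to the disjoint union of two balanced complete
bipartite graphs. Reassign the few vertices with few neighbours in their own class, and keep moving
vertices with many neighbours across until the two classes are balanced, or they differ by some
`k > 0` and all crossing degrees are small. In the latter case the degree condition yields about
`n k / 4` crossing edges, so there is room to choose greedily a rainbow matching of `1003 k`
crossing edges, the *gadget edges*, which is divided into `k` blocks.

Consider the perfect matchings that contain exactly one gadget edge of each block and otherwise
only edges inside the classes. They exist by Hall's theorem. Restricting the neighbourhoods of the
ends of a block to their common neighbours makes the gadget edges of a block interchangeable, so
every edge of such a matching can be switched away in many ways: a gadget edge is exchanged for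
another one of its block, and any other edge trades ends with another such edge of the matching.
For a uniformly random matching of this kind, the events that it contains two given edges of the
same colour therefore satisfy the hypotheses of the lopsided local lemma, which provides a rainbow
one.
-/

open Finset MeasureTheory

/-! ### The lopsided local lemma -/

section LocalLemma

variable {Ω ι : Type*} {bad : ι → Set Ω}

/-- The event that none of the bad events indexed by `S` occurs. -/
def avoiding (bad : ι → Set Ω) (S : Finset ι) : Set Ω := {ω | ∀ i ∈ S, ω ∉ bad i}

theorem avoiding_anti {S T : Finset ι} (h : S ⊆ T) : avoiding bad T ⊆ avoiding bad S :=
  fun _ hω i hi ↦ hω i (h hi)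

variable [MeasurableSpace Ω] {μ : Measure Ω} [IsFiniteMeasure μ] {I : Finset ι}
  {Γ : ι → Finset ι} {p : ι → ℝ}

theorem measureReal_avoiding_le_add_sum [DecidableEq ι] (S T : Finset ι) :
    μ.real (avoiding bad S) ≤
      μ.real (avoiding bad (S ∪ T)) + ∑ i ∈ T, μ.real (bad i ∩ avoiding bad S) := by
  have hcover : avoiding bad S ⊆ avoiding bad (S ∪ T) ∪ ⋃ i ∈ T, bad i ∩ avoiding bad S := by
    intro ω hω
    by_cases h : ∃ i ∈ T, ω ∈ bad i
    · obtain ⟨i, hi, hb⟩ := h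
      exact Or.inr (Set.mem_biUnion hi ⟨hb, hω⟩)
    · push Not at h
      exact Or.inl fun i hi ↦ (mem_union.1 hi).elim (hω i) (h i)
  calc μ.real (avoiding bad S)
      ≤ μ.real (avoiding bad (S ∪ T) ∪ ⋃ i ∈ T, bad i ∩ avoiding bad S) :=
        measureReal_mono hcover
    _ ≤ _ := (measureReal_union_le _ _).trans <| by
        gcongr; exact measureReal_biUnion_finset_le _ _

theorem measureReal_bad_inter_avoiding_le (hp : ∀ i, 0 ≤ p i)
    (hsum : ∀ i ∈ I, ∑ j ∈ Γ i, p j ≤ 1 / 4)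
    (hcond : ∀ i ∈ I, ∀ S ⊆ I, Disjoint S (Γ i) →
      μ.real (bad i ∩ avoiding bad S) ≤ p i * μ.real (avoiding bad S))
    {i : ι} (hi : i ∈ I) {S : Finset ι} (hS : S ⊆ I) :
    μ.real (bad i ∩ avoiding bad S) ≤ 2 * p i * μ.real (avoiding bad S) := by
  classical
  induction S using Finset.strongInduction generalizing i with
  | H S ih =>
    have hfar : μ.real (bad i ∩ avoiding bad S) ≤ p i * μ.real (avoiding bad (S \ Γ i)) :=
      (measureReal_mono (Set.inter_subset_inter_right _ (avoiding_anti sdiff_subset))).trans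
        (hcond i hi _ (sdiff_subset.trans hS) sdiff_disjoint)
    have hhalf : μ.real (avoiding bad (S \ Γ i)) ≤ 2 * μ.real (avoiding bad S) := by
      obtain hdisj | hmeet := (S ∩ Γ i).eq_empty_or_nonempty
      · rw [sdiff_eq_self_of_disjoint (disjoint_iff_inter_eq_empty.2 hdisj)]
        linarith [measureReal_nonneg (μ := μ) (s := avoiding bad S)]
      have hss : S \ Γ i ⊂ S := by
        rw [← sdiff_inter_self_left]
        exact sdiff_ssubset inter_subset_left hmeet
      have hnear : ∑ j ∈ S ∩ Γ i, μ.real (bad j ∩ avoiding bad (S \ Γ i)) ≤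
          1 / 2 * μ.real (avoiding bad (S \ Γ i)) :=
        calc ∑ j ∈ S ∩ Γ i, μ.real (bad j ∩ avoiding bad (S \ Γ i))
            ≤ ∑ j ∈ S ∩ Γ i, 2 * p j * μ.real (avoiding bad (S \ Γ i)) :=
              sum_le_sum fun j hj ↦ ih _ hss (hS (mem_inter.1 hj).1) (sdiff_subset.trans hS)
          _ = 2 * (∑ j ∈ S ∩ Γ i, p j) * μ.real (avoiding bad (S \ Γ i)) := by
              rw [mul_sum, sum_mul]
          _ ≤ 2 * (1 / 4) * μ.real (avoiding bad (S \ Γ i)) := by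
              gcongr
              exact (sum_le_sum_of_subset_of_nonneg inter_subset_right fun j _ _ ↦ hp j).trans
                (hsum i hi)
          _ = _ := by ring
      have hadd := measureReal_avoiding_le_add_sum (μ := μ) (bad := bad) (S \ Γ i) (S ∩ Γ i)
      rw [sdiff_union_inter] at hadd
      linarith
    calc _ ≤ p i * (2 * μ.real (avoiding bad S)) :=
          hfar.trans (mul_le_mul_of_nonneg_left hhalf (hp i))
      _ = _ := by ring

theorem lopsided_local_lemma [NeZero μ] (hp : ∀ i, 0 ≤ p i) (hself : ∀ i ∈ I, i ∈ Γ i)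
    (hsum : ∀ i ∈ I, ∑ j ∈ Γ i, p j ≤ 1 / 4)
    (hcond : ∀ i ∈ I, ∀ S ⊆ I, Disjoint S (Γ i) →
      μ.real (bad i ∩ avoiding bad S) ≤ p i * μ.real (avoiding bad S)) :
    0 < μ.real (avoiding bad I) := by
  classical
  suffices ∀ S ⊆ I, 0 < μ.real (avoiding bad S) from this I Subset.rfl
  intro S
  induction S using Finset.induction_on with
  | empty => simp [avoiding]
  | insert i S _ ih =>
    intro hiS
    have hi : i ∈ I := hiS (mem_insert_self i S)
    have hS : S ⊆ I := (subset_insert i S).trans hiS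
    have hpi : p i ≤ 1 / 4 := (single_le_sum (fun j _ ↦ hp j) (hself i hi)).trans (hsum i hi)
    have hbad := measureReal_bad_inter_avoiding_le hp hsum hcond hi hS
    have hadd := measureReal_avoiding_le_add_sum (μ := μ) (bad := bad) S {i}
    rw [sum_singleton, union_comm, ← insert_eq] at hadd
    nlinarith [ih hS]

end LocalLemma

/-! ### Switchable edges -/

section Switching

variable {Ω E κ : Type*}

theorem sum_union_le {ι : Type*} [DecidableEq ι] {f : ι → ℝ} (hf : ∀ i, 0 ≤ f i)
    (s t : Finset ι) : ∑ i ∈ s ∪ t, f i ≤ ∑ i ∈ s, f i + ∑ i ∈ t, f i := by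
  rw [← sum_union_inter]
  exact le_add_of_nonneg_right (sum_nonneg fun i _ ↦ hf i)

theorem ncard_le_mul_ncard_of_pairwiseDisjoint [Finite Ω] {R Q : Set Ω} {sw : Ω → Set Ω} {q : ℝ}
    (hq : 0 ≤ q) (hmaps : ∀ ω ∈ R, sw ω ⊆ Q) (hdisj : R.PairwiseDisjoint sw)
    (hcard : ∀ ω ∈ R, 1 ≤ q * (sw ω).ncard) : (R.ncard : ℝ) ≤ q * Q.ncard := by
  classical
  have := Fintype.ofFinite Ω
  have hunion : ∑ ω ∈ R.toFinset, (sw ω).ncard ≤ Q.ncard := by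
    simp only [Set.ncard_eq_toFinset_card']
    rw [← card_biUnion fun _ hω _ hω' hne ↦ Set.disjoint_toFinset.2 <|
      hdisj (Set.mem_toFinset.1 hω) (Set.mem_toFinset.1 hω') hne]
    exact card_le_card <| biUnion_subset.2 fun _ hω ↦
      Set.toFinset_subset_toFinset.2 (hmaps _ (Set.mem_toFinset.1 hω))
  calc (R.ncard : ℝ) = ∑ _ω ∈ R.toFinset, (1 : ℝ) := by simp [Set.ncard_eq_toFinset_card']
    _ ≤ ∑ ω ∈ R.toFinset, q * (sw ω).ncard :=
        sum_le_sum fun ω hω ↦ hcard ω (Set.mem_toFinset.1 hω)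
    _ = q * (∑ ω ∈ R.toFinset, (sw ω).ncard : ℕ) := by rw [← mul_sum]; push_cast; rfl
    _ ≤ q * Q.ncard := by gcongr

/-- `IsSwitchable M T q e` says that `e` can be switched away: each outcome `ω` whose edge set `M ω`
contains `e` has a set `sw ω` of modifications all of whose new edges lie in `T e`; an outcome can
be recovered from each of its modifications; and every other edge `f` of `ω` is kept by at least
`1 / q` modifications. -/
def IsSwitchable (M : Ω → Set E) (T : E → Finset E) (q : ℝ) (e : E) : Prop :=
  ∃ sw : Ω → Set Ω,
    (∀ ω, e ∈ M ω → ∀ ω' ∈ sw ω, M ω' ⊆ M ω ∪ T e) ∧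
    {ω | e ∈ M ω}.PairwiseDisjoint sw ∧
    ∀ ω, e ∈ M ω → ∀ f ≠ e, 1 ≤ q * {ω' ∈ sw ω | f ∈ M ω → f ∈ M ω'}.ncard

variable {M : Ω → Set E} {T : E → Finset E} {q : ℝ} {e f : E}

theorem isSwitchable_of_forall_notMem (h : ∀ ω, e ∉ M ω) : IsSwitchable M T q e :=
  ⟨fun _ ↦ ∅, fun ω he ↦ absurd he (h ω), fun ω he ↦ absurd he (h ω),
    fun ω he ↦ absurd he (h ω)⟩

/-- The event that the edge set of the outcome contains both edges of the pair `c`. -/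
def containsPair (M : Ω → Set E) (c : E × E) : Set Ω := {ω | c.1 ∈ M ω ∧ c.2 ∈ M ω}

theorem mem_avoiding_of_subset_union {S : Finset (E × E)} {ω ω' : Ω}
    (hS : ∀ s ∈ S, s.1 ∉ T e ∧ s.2 ∉ T e) (hω : ω ∈ avoiding (containsPair M) S)
    (hsub : M ω' ⊆ M ω ∪ T e) : ω' ∈ avoiding (containsPair M) S :=
  fun s hs hmem ↦ hω s hs
    ⟨(hsub hmem.1).resolve_right (hS s hs).1, (hsub hmem.2).resolve_right (hS s hs).2⟩

variable [Finite Ω]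

theorem IsSwitchable.ncard_mem_inter_le (he : IsSwitchable M T q e) (hq : 0 ≤ q) (hfe : f ≠ e)
    {P Q : Set Ω}
    (hPQ : ∀ ω ∈ P, ∀ ω', M ω' ⊆ M ω ∪ T e → (f ∈ M ω → f ∈ M ω') → ω' ∈ Q) :
    (({ω | e ∈ M ω} ∩ P).ncard : ℝ) ≤ q * Q.ncard := by
  obtain ⟨sw, hT, hdisj, hcard⟩ := he
  refine ncard_le_mul_ncard_of_pairwiseDisjoint (sw := fun ω ↦ {ω' ∈ sw ω | f ∈ M ω → f ∈ M ω'}) hq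
    (fun ω hω ω' hω' ↦ hPQ ω hω.2 ω' (hT ω hω.1 ω' hω'.1) hω'.2) ?_
    fun ω hω ↦ hcard ω hω.1 f hfe
  exact (hdisj.subset Set.inter_subset_left).mono fun _ ↦ Set.sep_subset _ _

theorem ncard_containsPair_inter_avoiding_le {q : E → ℝ} (hq : ∀ e, 0 ≤ q e) (hef : e ≠ f)
    (he : IsSwitchable M T (q e) e) (hf : IsSwitchable M T (q f) f) {S : Finset (E × E)}
    (hSe : ∀ s ∈ S, s.1 ∉ T e ∧ s.2 ∉ T e) (hSf : ∀ s ∈ S, s.1 ∉ T f ∧ s.2 ∉ T f) :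
    ((containsPair M (e, f) ∩ avoiding (containsPair M) S).ncard : ℝ) ≤
      q e * q f * (avoiding (containsPair M) S).ncard :=
  calc ((containsPair M (e, f) ∩ avoiding (containsPair M) S).ncard : ℝ)
      = ({ω | e ∈ M ω} ∩ ({ω | f ∈ M ω} ∩ avoiding (containsPair M) S)).ncard := by
        rw [← Set.inter_assoc]; rfl
    _ ≤ q e * ({ω | f ∈ M ω} ∩ avoiding (containsPair M) S).ncard :=
        he.ncard_mem_inter_le (hq e) hef.symm fun _ hω _ hsub hkeep ↦
          ⟨hkeep hω.1, mem_avoiding_of_subset_union hSe hω.2 hsub⟩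
    _ ≤ q e * (q f * (avoiding (containsPair M) S).ncard) := by
        refine mul_le_mul_of_nonneg_left ?_ (hq e)
        exact hf.ncard_mem_inter_le (hq f) hef fun _ hω _ hsub _ ↦
          mem_avoiding_of_subset_union hSf hω hsub
    _ = _ := (mul_assoc _ _ _).symm

/-- The pairs in `K` one of whose edges lies in `T e`. -/
def pairsMeeting [DecidableEq E] (T : E → Finset E) (K : Finset (E × E)) (e : E) :
    Finset (E × E) :=
  {s ∈ K | s.1 ∈ T e ∨ s.2 ∈ T e}

/-- The pairs of distinct edges with the same colour. -/
def monochromaticPairs [Fintype E] [DecidableEq E] [DecidableEq κ] (χ : E → κ) : Finset (E × E) :=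
  {s | s.1 ≠ s.2 ∧ χ s.1 = χ s.2}

theorem sum_pairsMeeting_monochromaticPairs_le [Fintype E] [DecidableEq E] [DecidableEq κ]
    {χ : E → κ} {q : E → ℝ} {D η : ℝ} (hq : ∀ e, 0 ≤ q e) (hη : 0 ≤ η)
    (hD : ∑ g ∈ T e, q g ≤ D) (hχ : ∀ c, ∑ g with χ g = c, q g ≤ η) :
    ∑ s ∈ pairsMeeting T (monochromaticPairs χ) e, q s.1 * q s.2 ≤ 2 * (D * η) := by
  have hpairs : ∑ g ∈ T e, ∑ h with χ h = χ g, q g * q h ≤ D * η :=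
    calc ∑ g ∈ T e, ∑ h with χ h = χ g, q g * q h ≤ ∑ g ∈ T e, q g * η :=
          sum_le_sum fun g _ ↦ by rw [← mul_sum]; exact mul_le_mul_of_nonneg_left (hχ _) (hq g)
      _ ≤ D * η := by rw [← sum_mul]; gcongr
  rw [← sum_finset_product' {s : E × E | s.1 ∈ T e ∧ χ s.2 = χ s.1} _ _ (by simp)] at hpairs
  have hswap : ∑ s : E × E with s.2 ∈ T e ∧ χ s.1 = χ s.2, q s.1 * q s.2 ≤ D * η := by
    refine (sum_equiv (Equiv.prodComm E E) (by simp) fun s _ ↦ ?_).trans_le hpairs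
    exact mul_comm _ _
  have hsub : pairsMeeting T (monochromaticPairs χ) e ⊆
      ({s | s.1 ∈ T e ∧ χ s.2 = χ s.1} : Finset (E × E)) ∪
        ({s | s.2 ∈ T e ∧ χ s.1 = χ s.2} : Finset (E × E)) := by
    intro s hs
    simp only [pairsMeeting, monochromaticPairs, mem_filter, mem_union, mem_univ,
      true_and] at hs ⊢
    exact hs.2.imp (⟨·, hs.1.2.symm⟩) (⟨·, hs.1.2⟩)
  have hq₂ (s : E × E) : 0 ≤ q s.1 * q s.2 := mul_nonneg (hq _) (hq _)
  linarith [sum_le_sum_of_subset_of_nonneg hsub fun s _ _ ↦ hq₂ s, sum_union_le hq₂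
    ({s | s.1 ∈ T e ∧ χ s.2 = χ s.1} : Finset (E × E)) {s | s.2 ∈ T e ∧ χ s.1 = χ s.2}]

theorem exists_injOn_of_isSwitchable [Nonempty Ω] [Fintype E] [DecidableEq κ] {χ : E → κ}
    {q : E → ℝ} {D η : ℝ} (hq : ∀ e, 0 ≤ q e) (hη : 0 ≤ η) (hsw : ∀ e, IsSwitchable M T (q e) e)
    (hT : ∀ e, e ∈ T e) (hD : ∀ e, ∑ g ∈ T e, q g ≤ D) (hχ : ∀ c, ∑ g with χ g = c, q g ≤ η)
    (hDη : 16 * (D * η) ≤ 1) :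
    ∃ ω, (M ω).InjOn χ := by
  classical
  let : MeasurableSpace Ω := ⊤
  set K := monochromaticPairs χ
  have hcount (s : Set Ω) : Measure.count.real s = s.ncard := by
    rw [measureReal_def, Measure.count_apply MeasurableSpace.measurableSet_top,
      ← s.toFinite.cast_ncard_eq, ENat.toENNReal_coe, ENNReal.toReal_natCast]
  have hpos := lopsided_local_lemma (μ := Measure.count) (bad := containsPair M) (I := K)
    (Γ := fun c ↦ pairsMeeting T K c.1 ∪ pairsMeeting T K c.2) (p := fun c ↦ q c.1 * q c.2)
    (fun c ↦ mul_nonneg (hq _) (hq _)) (by simp +contextual [pairsMeeting, hT]) ?_ ?_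
  · rw [hcount, Nat.cast_pos, Set.ncard_pos] at hpos
    obtain ⟨ω, hω⟩ := hpos
    refine ⟨ω, fun e he f hf hef ↦ by_contra fun hne ↦ hω (e, f) ?_ ⟨he, hf⟩⟩
    simp [K, monochromaticPairs, hne, hef]
  · intro c _
    refine (sum_union_le (fun s ↦ mul_nonneg (hq _) (hq _)) _ _).trans ?_
    linarith [sum_pairsMeeting_monochromaticPairs_le hq hη (hD c.1) hχ,
      sum_pairsMeeting_monochromaticPairs_le hq hη (hD c.2) hχ]
  · intro c hc S hSK hS
    have hne : c.1 ≠ c.2 := (mem_filter.1 hc).2.1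
    rw [disjoint_union_right] at hS
    have hfar {e : E} (hSe : Disjoint S (pairsMeeting T K e)) :
        ∀ s ∈ S, s.1 ∉ T e ∧ s.2 ∉ T e := fun s hs ↦ by
      simpa [pairsMeeting, hSK hs] using disjoint_left.1 hSe hs
    simpa only [hcount] using
      ncard_containsPair_inter_avoiding_le hq hne (hsw c.1) (hsw c.2) (hfar hS.1) (hfar hS.2)

end Switching

section BlockPerm

variable {ι τ γ : Type*} (f : ι × τ ↪ γ) (π : ι → Equiv.Perm τ)

/-- The permutation of `γ` that moves `f (i, j)` to `f (i, π i j)` and fixes all points outside the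
range of `f`. -/
noncomputable def blockPerm : Equiv.Perm γ :=
  Equiv.Perm.viaEmbedding (Equiv.prodCongrRight π) f

theorem blockPerm_apply (i : ι) (j : τ) : blockPerm f π (f (i, j)) = f (i, π i j) :=
  Equiv.Perm.viaEmbedding_apply ..

variable {f}

theorem blockPerm_of_notMem_range {c : γ} (hc : c ∉ Set.range f) : blockPerm f π c = c :=
  Equiv.Perm.viaEmbedding_apply_of_notMem _ _ _ hc

theorem blockPerm_update_swap_of_ne [DecidableEq ι] [DecidableEq τ] {i : ι} {j j' : τ} {c : γ}
    (h : c ≠ f (i, j)) (h' : c ≠ f (i, j')) :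
    blockPerm f (Function.update 1 i (Equiv.swap j j')) c = c := by
  by_cases hc : c ∈ Set.range f
  · obtain ⟨⟨i', k⟩, rfl⟩ := hc
    rw [blockPerm_apply]
    obtain rfl | hi := eq_or_ne i' i
    · rw [Function.update_self, Equiv.swap_apply_of_ne_of_ne (by rintro rfl; exact h rfl)
        (by rintro rfl; exact h' rfl)]
    · simp [hi]
  · exact blockPerm_of_notMem_range _ hc

end BlockPerm

/-! ### Gadget systems -/

/-- A bipartite graph `H` whose edges respect a two-class structure given by `sideA` and `sideB`,
with a family of *gadget edges* `x (i, j)`–`y (i, j)` joining the `true` class of `α` to the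
`false` class of `β`. The gadget edges come in blocks indexed by `i : ι`, and within a block all
the `x (i, j)` have the same `H`-neighbours, as have all the `y (i, j)`. -/
structure GadgetSystem (α β ι τ : Type*) where
  sideA : α → Bool
  sideB : β → Bool
  H : α → β → Prop
  x : ι × τ ↪ α
  y : ι × τ ↪ β
  sideA_eq_of_H {a : α} {b : β} : H a b → sideA a = sideB b
  sideA_x (p : ι × τ) : sideA (x p) = true
  sideB_y (p : ι × τ) : sideB (y p) = false
  H_x_congr {i : ι} {j j' : τ} {b : β} : H (x (i, j)) b → H (x (i, j')) b
  H_y_congr {i : ι} {j j' : τ} {a : α} : H a (y (i, j)) → H a (y (i, j'))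

namespace GadgetSystem

variable {α β ι τ κ : Type*} (G : GadgetSystem α β ι τ)

/-- The gadget edges of `G`. -/
def F (a : α) (b : β) : Prop := ∃ p, G.x p = a ∧ G.y p = b

/-- A bijection is good if, seen as a perfect matching, it uses only edges of `H` and gadget edges,
with exactly one gadget edge from each block. -/
def IsGood (σ : α ≃ β) : Prop :=
  (∀ a, G.H a (σ a) ∨ G.F a (σ a)) ∧ ∀ i, ∃! j, σ (G.x (i, j)) = G.y (i, j)

variable {G} {a : α} {b : β} {σ : α ≃ β} {i : ι} {j j' : τ}

theorem F.sideA_eq (h : G.F a b) : G.sideA a = true := by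
  obtain ⟨p, rfl, -⟩ := h
  exact G.sideA_x p

theorem F.sideB_eq (h : G.F a b) : G.sideB b = false := by
  obtain ⟨p, -, rfl⟩ := h
  exact G.sideB_y p

theorem F.not_H (h : G.F a b) : ¬ G.H a b := fun hH ↦
  Bool.noConfusion (h.sideA_eq ▸ h.sideB_eq ▸ G.sideA_eq_of_H hH)

theorem F.right_unique {b' : β} (h : G.F a b) (h' : G.F a b') : b = b' := by
  obtain ⟨p, rfl, rfl⟩ := h
  obtain ⟨q, hq, rfl⟩ := h'
  rw [G.x.injective hq]

theorem F.left_unique {a' : α} (h : G.F a b) (h' : G.F a' b) : a = a' := by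
  obtain ⟨p, rfl, rfl⟩ := h
  obtain ⟨q, rfl, hq⟩ := h'
  rw [G.y.injective hq]

theorem IsGood.H_of_sideA_eq (hσ : G.IsGood σ) (h : G.sideA a = G.sideB (σ a)) :
    G.H a (σ a) :=
  (hσ.1 a).resolve_right fun hF ↦ Bool.noConfusion (hF.sideA_eq ▸ hF.sideB_eq ▸ h)

theorem ne_y_of_H {p : ι × τ} (h : G.H (G.x p) b) : b ≠ G.y p := by
  rintro rfl
  exact F.not_H ⟨p, rfl, rfl⟩ h

theorem IsGood.sideA_eq_true (hσ : G.IsGood σ) (h : G.sideB (σ a) = true) : G.sideA a = true :=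
  (hσ.1 a).elim (fun hH ↦ (G.sideA_eq_of_H hH).trans h) F.sideA_eq

theorem IsGood.swap_trans [DecidableEq α] (hσ : G.IsGood σ) {x : α} (hab : G.H a (σ a))
    (hax : G.H a (σ x)) (hxa : G.H x (σ a)) : G.IsGood ((Equiv.swap a x).trans σ) := by
  have hxx : G.H x (σ x) := hσ.H_of_sideA_eq <| by
    rw [G.sideA_eq_of_H hxa, ← G.sideA_eq_of_H hab, G.sideA_eq_of_H hax]
  have hgadget (p : ι × τ) :
      (Equiv.swap a x).trans σ (G.x p) = G.y p ↔ σ (G.x p) = G.y p := by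
    by_cases ha : G.x p = a
    · subst ha
      simp [ne_y_of_H hax, ne_y_of_H hab]
    by_cases hx : G.x p = x
    · subst hx
      simp [ne_y_of_H hxa, ne_y_of_H hxx]
    simp [Equiv.swap_apply_of_ne_of_ne ha hx]
  refine ⟨fun u ↦ ?_, fun i ↦ by simpa only [hgadget] using hσ.2 i⟩
  rw [Equiv.trans_apply, Equiv.swap_apply_def]
  split_ifs with ha hx
  · exact Or.inl (ha ▸ hax)
  · exact Or.inl (hx ▸ hxa)
  · exact hσ.1 u

theorem IsGood.le_ncard_swap [Finite α] [Finite β] {m : ℝ}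
    (hmA : {u | G.sideA u = true}.ncard ≤ m) (hmB : {v | G.sideB v = false}.ncard ≤ m)
    (hσ : G.IsGood σ) (hab : G.H a b) :
    ({v | G.H a v}.ncard + {u | G.H u b}.ncard - m : ℝ) ≤
      {x | G.H a (σ x) ∧ G.H x b}.ncard := by
  have hpre (s : Set β) : {x | σ x ∈ s}.ncard = s.ncard :=
    Set.ncard_preimage_of_injective_subset_range σ.injective (by simp)
  have hunion : (({x | G.H a (σ x)} ∪ {x | G.H x b}).ncard : ℝ) ≤ m := by
    have hside : G.sideA a = G.sideB b := G.sideA_eq_of_H hab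
    cases ha : G.sideA a
    · refine le_trans ?_ hmB
      rw [← hpre {v | G.sideB v = false}, Nat.cast_le]
      refine Set.ncard_le_ncard (Set.union_subset (fun x hx ↦ ?_) fun x hx ↦ ?_)
      · exact (G.sideA_eq_of_H hx).symm.trans ha
      · refine Bool.eq_false_of_not_eq_true fun h ↦ ?_
        have hxa : G.sideA x = false := (G.sideA_eq_of_H hx).trans (hside.symm.trans ha)
        exact Bool.noConfusion (hxa.symm.trans (hσ.sideA_eq_true h))
    · refine le_trans ?_ hmA
      rw [Nat.cast_le]
      refine Set.ncard_le_ncard (Set.union_subset (fun x hx ↦ ?_) fun x hx ↦ ?_)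
      · exact hσ.sideA_eq_true ((G.sideA_eq_of_H hx).symm.trans ha)
      · exact (G.sideA_eq_of_H hx).trans (hside.symm.trans ha)
  have hinter : ({x | G.H a (σ x)} ∪ {x | G.H x b}).ncard + {x | G.H a (σ x) ∧ G.H x b}.ncard =
      {x | G.H a (σ x)}.ncard + {x | G.H x b}.ncard :=
    Set.ncard_union_add_ncard_inter _ _
  rw [← hpre {v | G.H a v}]
  have : (_ : ℝ) = _ := congrArg Nat.cast hinter
  push_cast at this
  simp only [Set.mem_ofPred_eq]
  linarith

variable (G) in
/-- The edges of a good bijection, as a random variable on the good bijections. -/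
def edges (ω : {σ : α ≃ β // G.IsGood σ}) : Set (α × β) := {e | ω.1 e.1 = e.2}

/-- The edges that switching `e` away may create: those sharing an endpoint with `e` and, if `e` is
a gadget edge, the gadget edges of its block. -/
noncomputable def touching [Fintype α] [Fintype β] (G : GadgetSystem α β ι τ) (e : α × β) :
    Finset (α × β) :=
  open Classical in
  {e.1} ×ˢ univ ∪ univ ×ˢ {e.2} ∪
    ({g | ∃ i j j', e = (G.x (i, j), G.y (i, j)) ∧ g = (G.x (i, j'), G.y (i, j'))} :
      Finset (α × β))

theorem isSwitchable_of_H [Fintype α] [Fintype β] {m q : ℝ}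
    (hmA : {u | G.sideA u = true}.ncard ≤ m) (hmB : {v | G.sideB v = false}.ncard ≤ m)
    (hq : 0 ≤ q) (hab : G.H a b)
    (hcard : 1 ≤ q * ({v | G.H a v}.ncard + {u | G.H u b}.ncard - m - 1)) :
    IsSwitchable G.edges G.touching q (a, b) := by
  classical
  refine ⟨fun ω ↦ {ω' | ∃ x, G.H a (ω.1 x) ∧ G.H x b ∧ ω'.1 = (Equiv.swap a x).trans ω.1},
    ?_, ?_, ?_⟩
  · rintro ω (hωa : ω.1 a = b) ω' ⟨x, -, -, hω'⟩ ⟨u, v⟩ (huv : ω'.1 u = v)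
    rw [hω', Equiv.trans_apply, Equiv.swap_apply_def] at huv
    split_ifs at huv with hua hux
    · exact Or.inr (by simp [touching, hua])
    · exact Or.inr (by simp [touching, ← huv, hωa])
    · exact Or.inl huv
  · rintro ω (hω : ω.1 a = b) ω' (hω' : ω'.1 a = b) hne
    refine Set.disjoint_left.2 ?_
    rintro ρ ⟨x, -, -, hx⟩ ⟨x', -, -, hx'⟩
    have hxx' : x = x' := ρ.1.injective <| by
      rw [show ρ.1 x = b by simp [hx, hω], show ρ.1 x' = b by simp [hx', hω']]
    subst hxx'
    refine hne (Subtype.ext (Equiv.ext fun u ↦ ?_))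
    simpa using DFunLike.congr_fun (hx.symm.trans hx') (Equiv.swap a x u)
  · rintro ω (hωa : ω.1 a = b) ⟨u, v⟩ hf
    have hrecover : {x | G.H a (ω.1 x) ∧ G.H x b} \ {u} ⊆
        (fun ω' : {σ : α ≃ β // G.IsGood σ} ↦ ω'.1.symm b) ''
          {ω' | (∃ x, G.H a (ω.1 x) ∧ G.H x b ∧ ω'.1 = (Equiv.swap a x).trans ω.1) ∧
            (ω.1 u = v → ω'.1 u = v)} := by
      rintro x ⟨⟨hax, hxb⟩, hxu⟩
      refine ⟨⟨_, ω.2.swap_trans (hωa ▸ hab) hax (hωa ▸ hxb)⟩,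
        ⟨⟨x, hax, hxb, rfl⟩, fun huv ↦ ?_⟩, by simp [← hωa]⟩
      have hua : u ≠ a := by rintro rfl; exact hf (by rw [← huv, hωa])
      simpa [Equiv.swap_apply_of_ne_of_ne hua (Ne.symm hxu)] using huv
    refine hcard.trans (mul_le_mul_of_nonneg_left (le_trans ?_ <| Nat.cast_le.2 <|
      (Set.ncard_le_ncard hrecover).trans (Set.ncard_image_le (Set.toFinite _))) hq)
    have hdiff := Set.ncard_le_ncard_sdiff_add_ncard {x | G.H a (ω.1 x) ∧ G.H x b} {u}
    rw [Set.ncard_singleton, ← Nat.cast_le (α := ℝ), Nat.cast_add, Nat.cast_one] at hdiff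
    linarith [ω.2.le_ncard_swap hmA hmB hab]

theorem H_blockPerm (π : ι → Equiv.Perm τ) (h : G.H a b) :
    G.H (blockPerm G.x π a) (blockPerm G.y π b) := by
  have hx : G.H (blockPerm G.x π a) b := by
    by_cases ha : a ∈ Set.range G.x
    · obtain ⟨⟨i, j⟩, rfl⟩ := ha
      exact (blockPerm_apply G.x π i j).symm ▸ G.H_x_congr h
    · rwa [blockPerm_of_notMem_range π ha]
  by_cases hb : b ∈ Set.range G.y
  · obtain ⟨⟨i, j⟩, rfl⟩ := hb
    exact (blockPerm_apply G.y π i j).symm ▸ G.H_y_congr hx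
  · rwa [blockPerm_of_notMem_range π hb]

variable (G) in
/-- The conjugate of `σ` by a permutation of the gadget edges within each block. -/
noncomputable def relabel (π : ι → Equiv.Perm τ) (σ : α ≃ β) : α ≃ β :=
  (blockPerm G.x π).symm.trans (σ.trans (blockPerm G.y π))

theorem relabel_blockPerm (π : ι → Equiv.Perm τ) (σ : α ≃ β) (a : α) :
    G.relabel π σ (blockPerm G.x π a) = blockPerm G.y π (σ a) := by
  simp [relabel]

theorem relabel_x_eq_y_iff (π : ι → Equiv.Perm τ) :
    G.relabel π σ (G.x (i, π i j)) = G.y (i, π i j) ↔ σ (G.x (i, j)) = G.y (i, j) := by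
  rw [← blockPerm_apply, ← blockPerm_apply, relabel_blockPerm, Equiv.apply_eq_iff_eq]

theorem IsGood.relabel (hσ : G.IsGood σ) (π : ι → Equiv.Perm τ) : G.IsGood (G.relabel π σ) := by
  refine ⟨(blockPerm G.x π).surjective.forall.2 fun a ↦ ?_, fun i ↦ ?_⟩
  · rw [relabel_blockPerm]
    refine (hσ.1 a).imp (H_blockPerm π) ?_
    rintro ⟨⟨i, j⟩, rfl, hj⟩
    exact ⟨(i, π i j), (blockPerm_apply ..).symm, hj ▸ (blockPerm_apply ..).symm⟩
  · obtain ⟨j, hj, huniq⟩ := hσ.2 i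
    refine ⟨π i j, (relabel_x_eq_y_iff π).2 hj, (π i).surjective.forall.2 fun j' hj' ↦ ?_⟩
    rw [huniq j' ((relabel_x_eq_y_iff π).1 hj')]

section SwapInBlock

variable [DecidableEq ι] [DecidableEq τ]

variable (G) in
/-- The bijection obtained from `σ` by exchanging the roles of the `j`th and the `j'`th gadget edge
of the block `i`. -/
noncomputable def swapInBlock (i : ι) (j j' : τ) (σ : α ≃ β) : α ≃ β :=
  G.relabel (Function.update 1 i (Equiv.swap j j')) σ

theorem swapInBlock_apply_of_ne (hx : a ≠ G.x (i, j)) (hx' : a ≠ G.x (i, j'))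
    (hy : σ a ≠ G.y (i, j)) (hy' : σ a ≠ G.y (i, j')) : G.swapInBlock i j j' σ a = σ a := by
  have h := relabel_blockPerm (G := G) (Function.update 1 i (Equiv.swap j j')) σ a
  rwa [blockPerm_update_swap_of_ne hx hx', blockPerm_update_swap_of_ne hy hy'] at h

theorem swapInBlock_x (hσ : σ (G.x (i, j)) = G.y (i, j)) :
    G.swapInBlock i j j' σ (G.x (i, j')) = G.y (i, j') := by
  have h := (relabel_x_eq_y_iff (Function.update 1 i (Equiv.swap j j'))).2 hσ
  rwa [Function.update_self, Equiv.swap_apply_left] at h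

theorem swapInBlock_injective (i : ι) (j j' : τ) :
    Function.Injective (G.swapInBlock i j j') := fun σ σ' h ↦ Equiv.ext fun a ↦ by
  have h' := DFunLike.congr_fun h (blockPerm G.x (Function.update 1 i (Equiv.swap j j')) a)
  rwa [swapInBlock, swapInBlock, relabel_blockPerm, relabel_blockPerm,
    Equiv.apply_eq_iff_eq] at h'

theorem eq_or_mem_touching_of_swapInBlock_apply_eq [Fintype α] [Fintype β]
    (hσ : σ (G.x (i, j)) = G.y (i, j)) (hab : G.swapInBlock i j j' σ a = b) :
    σ a = b ∨ (a, b) ∈ G.touching (G.x (i, j), G.y (i, j)) := by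
  obtain rfl | hx := eq_or_ne a (G.x (i, j))
  · exact Or.inr (by simp [touching])
  obtain rfl | hx' := eq_or_ne a (G.x (i, j'))
  · rw [swapInBlock_x hσ] at hab
    subst hab
    right
    classical exact mem_union_right _ (mem_filter.2 ⟨mem_univ _, i, j, j', rfl, rfl⟩)
  have hy : σ a ≠ G.y (i, j) := fun h ↦ hx (σ.injective (h.trans hσ.symm))
  obtain hy' | hy' := eq_or_ne (σ a) (G.y (i, j'))
  · have h := relabel_blockPerm (G := G) (Function.update 1 i (Equiv.swap j j')) σ a
    rw [blockPerm_update_swap_of_ne hx hx', hy', blockPerm_apply, Function.update_self,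
      Equiv.swap_apply_right] at h
    exact Or.inr (by simp [touching, ← hab, swapInBlock, h])
  · exact Or.inl (swapInBlock_apply_of_ne hx hx' hy hy' ▸ hab)

end SwapInBlock

variable (G) in
theorem card_le_ncard_ne_add_three [Finite τ] (i : ι) (j : τ) (u : α) (v : β) :
    Nat.card τ ≤ {k | k ≠ j ∧ u ≠ G.x (i, k) ∧ v ≠ G.y (i, k)}.ncard + 3 := by
  have hx : {k | u = G.x (i, k)}.ncard ≤ 1 :=
    (Set.ncard_le_one_iff (Set.toFinite _)).2 fun hk hk' ↦
      (Prod.mk.inj (G.x.injective (hk.symm.trans hk'))).2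
  have hy : {k | v = G.y (i, k)}.ncard ≤ 1 :=
    (Set.ncard_le_one_iff (Set.toFinite _)).2 fun hk hk' ↦
      (Prod.mk.inj (G.y.injective (hk.symm.trans hk'))).2
  have hcompl : {k | k ≠ j ∧ u ≠ G.x (i, k) ∧ v ≠ G.y (i, k)}ᶜ ⊆
      {j} ∪ ({k | u = G.x (i, k)} ∪ {k | v = G.y (i, k)}) := fun k hk ↦ by
    simp only [Set.mem_compl_iff, Set.mem_ofPred_eq, not_and_or, not_not] at hk
    exact hk
  have hle := (Set.ncard_le_ncard hcompl).trans ((Set.ncard_union_le _ _).trans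
    (Nat.add_le_add_left (Set.ncard_union_le _ _) _))
  rw [Set.ncard_singleton] at hle
  have := Set.ncard_add_ncard_compl {k | k ≠ j ∧ u ≠ G.x (i, k) ∧ v ≠ G.y (i, k)}
  lia

theorem isSwitchable_of_F [Fintype α] [Fintype β] [Finite τ] {q : ℝ} (hq : 0 ≤ q)
    (hcard : 1 ≤ q * (Nat.card τ - 3)) (i : ι) (j : τ) :
    IsSwitchable G.edges G.touching q (G.x (i, j), G.y (i, j)) := by
  classical
  refine ⟨fun ω ↦ {ω' | ∃ j' ≠ j, ω'.1 = G.swapInBlock i j j' ω.1}, ?_, ?_, ?_⟩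
  · rintro ω hω ω' ⟨j', -, hω'⟩ ⟨u, v⟩ (huv : ω'.1 u = v)
    exact eq_or_mem_touching_of_swapInBlock_apply_eq hω (hω' ▸ huv)
  · rintro ω hω ω' hω' hne
    refine Set.disjoint_left.2 ?_
    rintro ρ ⟨k, -, hk⟩ ⟨k', -, hk'⟩
    have hkk' : k = k' := (ρ.2.2 i).unique (hk ▸ swapInBlock_x hω) (hk' ▸ swapInBlock_x hω')
    subst hkk'
    exact hne (Subtype.ext (swapInBlock_injective i j k (hk.symm.trans hk')))
  · rintro ω (hω : ω.1 _ = _) ⟨u, v⟩ hf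
    have hmaps : {k | k ≠ j ∧ u ≠ G.x (i, k) ∧ v ≠ G.y (i, k)}.ncard ≤
        {ω' : {σ : α ≃ β // G.IsGood σ} | (∃ k ≠ j, ω'.1 = G.swapInBlock i j k ω.1) ∧
          (ω.1 u = v → ω'.1 u = v)}.ncard := by
      refine Set.ncard_le_ncard_of_injOn (fun k ↦ ⟨G.swapInBlock i j k ω.1, ω.2.relabel _⟩)
        (fun k hk ↦ ⟨⟨k, hk.1, rfl⟩, fun huv ↦ ?_⟩) fun k _ k' _ h ↦ ?_
      · have hx : u ≠ G.x (i, j) := by rintro rfl; exact hf (by rw [← huv, hω])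
        have hy : v ≠ G.y (i, j) := by rintro rfl; exact hx (ω.1.injective (huv.trans hω.symm))
        exact huv ▸ swapInBlock_apply_of_ne hx hk.2.1 (huv ▸ hy) (huv ▸ hk.2.2)
      · have h' : G.swapInBlock i j k ω.1 = G.swapInBlock i j k' ω.1 := congrArg Subtype.val h
        have hgood : G.IsGood (G.swapInBlock i j k ω.1) := ω.2.relabel _
        exact (hgood.2 i).unique (swapInBlock_x hω) (h' ▸ swapInBlock_x hω)
    refine hcard.trans (mul_le_mul_of_nonneg_left (le_trans ?_ (Nat.cast_le.2 hmaps)) hq)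
    rw [sub_le_iff_le_add]
    exact_mod_cast G.card_le_ncard_ne_add_three i j u v

section Weight

variable {w : α × β → ℝ} {p : ℝ}

variable (G) in
/-- The weight `w` on the edges of `H`, extended by `p` on the gadget edges. -/
noncomputable def edgeWeight (w : α × β → ℝ) (p : ℝ) (e : α × β) : ℝ :=
  open Classical in w e + if G.F e.1 e.2 then p else 0

theorem edgeWeight_nonneg (hw : ∀ e, 0 ≤ w e) (hp : 0 ≤ p) (e : α × β) :
    0 ≤ G.edgeWeight w p e := by
  unfold edgeWeight
  split_ifs <;> simp [hw, add_nonneg, hp]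

theorem sum_edgeWeight_le_sum_add (hp : 0 ≤ p) {S : Finset (α × β)}
    (hS : {e ∈ (S : Set (α × β)) | G.F e.1 e.2}.Subsingleton) :
    ∑ e ∈ S, G.edgeWeight w p e ≤ ∑ e ∈ S, w e + p := by
  classical
  have hcard : #{e ∈ S | G.F e.1 e.2} ≤ 1 := card_le_one.2 fun e he f hf ↦
    hS (mem_filter.1 he) (mem_filter.1 hf)
  simp only [edgeWeight, sum_add_distrib, ← sum_filter, sum_const, nsmul_eq_mul]
  gcongr
  exact mul_le_of_le_one_left hp (mod_cast hcard)

theorem sum_edgeWeight_block_le [Finite τ] (hp : 0 ≤ p) (hw : ∀ e, ¬ G.H e.1 e.2 → w e = 0)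
    (e : α × β) {S : Finset (α × β)} (hS : ∀ g ∈ S, ∃ i j j', e = (G.x (i, j), G.y (i, j)) ∧
      g = (G.x (i, j'), G.y (i, j'))) :
    ∑ g ∈ S, G.edgeWeight w p g ≤ Nat.card τ * p := by
  classical
  have := Fintype.ofFinite τ
  obtain rfl | ⟨g, hg⟩ := S.eq_empty_or_nonempty
  · simp only [sum_empty]; positivity
  obtain ⟨i, j, -, he, -⟩ := hS g hg
  have hsub : S ⊆ univ.image fun j' ↦ (G.x (i, j'), G.y (i, j')) := fun g hg ↦ by
    obtain ⟨i', k, j', he', rfl⟩ := hS g hg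
    have hi : i = i' := (Prod.mk.inj (G.x.injective (Prod.mk.inj (he.symm.trans he')).1)).1
    exact mem_image.2 ⟨j', mem_univ _, by rw [hi]⟩
  have hcard : #S ≤ Nat.card τ :=
    (card_le_card hsub).trans (card_image_le.trans (by simp [Nat.card_eq_fintype_card]))
  have hterm : ∀ g ∈ S, G.edgeWeight w p g = p := fun g hg ↦ by
    obtain ⟨i', k, j', -, rfl⟩ := hS g hg
    have hF : G.F (G.x (i', j')) (G.y (i', j')) := ⟨_, rfl, rfl⟩
    simp [edgeWeight, hF, hw (G.x (i', j'), G.y (i', j')) hF.not_H]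
  rw [sum_congr rfl hterm, sum_const, nsmul_eq_mul]
  gcongr

theorem sum_touching_edgeWeight_le [Fintype α] [Fintype β] [Finite τ] {D : ℝ} (hp : 0 ≤ p)
    (hw0 : ∀ e, 0 ≤ w e) (hw : ∀ e, ¬ G.H e.1 e.2 → w e = 0) (hrow : ∀ a, ∑ b, w (a, b) ≤ D)
    (hcol : ∀ b, ∑ a, w (a, b) ≤ D) (e : α × β) :
    ∑ g ∈ G.touching e, G.edgeWeight w p g ≤ 2 * D + (Nat.card τ + 2) * p := by
  classical
  have hnonneg := G.edgeWeight_nonneg hw0 hp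
  have hrow' : ∑ g ∈ {e.1} ×ˢ univ, G.edgeWeight w p g ≤ D + p := by
    refine (sum_edgeWeight_le_sum_add hp ?_).trans ?_
    · simp only [coe_product, coe_singleton, Set.mem_prod, Set.mem_singleton_iff]
      exact fun g hg g' hg' ↦ Prod.ext (hg.1.1.trans hg'.1.1.symm)
        (hg.2.right_unique (hg.1.1.trans hg'.1.1.symm ▸ hg'.2))
    · rw [sum_product, sum_singleton]
      exact add_le_add_left (hrow e.1) p
  have hcol' : ∑ g ∈ univ ×ˢ {e.2}, G.edgeWeight w p g ≤ D + p := by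
    refine (sum_edgeWeight_le_sum_add hp ?_).trans ?_
    · simp only [coe_product, coe_singleton, Set.mem_prod, Set.mem_singleton_iff]
      exact fun g hg g' hg' ↦ Prod.ext
        (hg.2.left_unique (hg.1.2.trans hg'.1.2.symm ▸ hg'.2)) (hg.1.2.trans hg'.1.2.symm)
    · simp only [sum_product, sum_singleton]
      exact add_le_add_left (hcol e.2) p
  have hblock := sum_edgeWeight_block_le hp hw e
    (S := {g | ∃ i j j', e = (G.x (i, j), G.y (i, j)) ∧ g = (G.x (i, j'), G.y (i, j'))})
    (fun g hg ↦ (mem_filter.1 hg).2)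
  unfold touching
  linarith [sum_union_le hnonneg ({e.1} ×ˢ univ ∪ univ ×ˢ {e.2})
    {g | ∃ i j j', e = (G.x (i, j), G.y (i, j)) ∧ g = (G.x (i, j'), G.y (i, j'))},
    sum_union_le hnonneg ({e.1} ×ˢ univ) (univ ×ˢ {e.2})]

end Weight

theorem exists_isGood_rainbow [Fintype α] [Fintype β] [Finite τ] [DecidableEq κ]
    {χ : α × β → κ} {w : α × β → ℝ} {m p D η : ℝ}
    (hmA : {u | G.sideA u = true}.ncard ≤ m) (hmB : {v | G.sideB v = false}.ncard ≤ m)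
    (hw0 : ∀ e, 0 ≤ w e) (hw : ∀ e, ¬ G.H e.1 e.2 → w e = 0)
    (hdeg : ∀ a b, G.H a b →
      1 ≤ w (a, b) * ({v | G.H a v}.ncard + {u | G.H u b}.ncard - m - 1))
    (hrow : ∀ a, ∑ b, w (a, b) ≤ D) (hcol : ∀ b, ∑ a, w (a, b) ≤ D) (hη : 0 ≤ η)
    (hcolour : ∀ c, ∑ e with χ e = c, w e ≤ η)
    (hgadget : Function.Injective fun i ↦ χ (G.x i, G.y i))
    (hp : 0 ≤ p) (hτ : 1 ≤ p * (Nat.card τ - 3))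
    (hsmall : 16 * ((2 * D + (Nat.card τ + 2) * p) * (η + p)) ≤ 1) (hgood : ∃ σ, G.IsGood σ) :
    ∃ σ, G.IsGood σ ∧ Function.Injective fun a ↦ χ (a, σ a) := by
  have : Nonempty {σ : α ≃ β // G.IsGood σ} := nonempty_subtype.2 hgood
  have hswitch (e : α × β) : IsSwitchable G.edges G.touching (G.edgeWeight w p e) e := by
    obtain ⟨a, b⟩ := e
    by_cases hH : G.H a b
    · have hF : ¬ G.F a b := fun hF ↦ hF.not_H hH
      have hweight : G.edgeWeight w p (a, b) = w (a, b) := by simp [edgeWeight, hF]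
      rw [hweight]
      exact isSwitchable_of_H hmA hmB (hw0 _) hH (hdeg a b hH)
    by_cases hF : G.F a b
    · have hweight : G.edgeWeight w p (a, b) = p := by simp [edgeWeight, hF, hw (a, b) hH]
      obtain ⟨⟨i, j⟩, rfl, rfl⟩ := hF
      rw [hweight]
      exact isSwitchable_of_F hp hτ i j
    · exact isSwitchable_of_forall_notMem fun ω (hω : ω.1 a = b) ↦
        (hω ▸ ω.2.1 a).elim hH hF
  have hcolour' (c : κ) : ∑ e with χ e = c, G.edgeWeight w p e ≤ η + p := by
    refine (sum_edgeWeight_le_sum_add hp ?_).trans (by gcongr; exact hcolour c)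
    rintro ⟨a, b⟩ ⟨hc, r, rfl, rfl⟩ ⟨a', b'⟩ ⟨hc', r', rfl, rfl⟩
    rw [hgadget ((mem_filter.1 hc).2.trans (mem_filter.1 hc').2.symm)]
  obtain ⟨ω, hω⟩ := exists_injOn_of_isSwitchable (edgeWeight_nonneg hw0 hp)
    (add_nonneg hη hp) hswitch (by simp [touching])
    (sum_touching_edgeWeight_le hp hw0 hw hrow hcol) hcolour' hsmall
  exact ⟨ω.1, ω.2, fun a a' h ↦
    congrArg Prod.fst (@hω (a, ω.1 a) rfl (a', ω.1 a') rfl h)⟩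

end GadgetSystem

section Hall

theorem exists_equiv_forall_rel_of_le_ncard {α β : Type*} [Finite α] [Finite β] {r : α → β → Prop}
    {D : ℝ} (hcard : Nat.card α = Nat.card β) (hα : ∀ a, D ≤ {b | r a b}.ncard)
    (hβ : ∀ b, D ≤ {a | r a b}.ncard) (hfew : {a | D ≤ {b | ¬ r a b}.ncard}.ncard ≤ D) :
    ∃ σ : α ≃ β, ∀ a, r a (σ a) := by
  classical
  have := Fintype.ofFinite α
  have := Fintype.ofFinite β
  obtain ⟨f, hf, hr⟩ := (Fintype.all_card_le_filter_rel_iff_exists_injective r).1 fun S ↦ by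
    set N : Finset β := {b | ∃ a ∈ S, r a b}
    have hN {a : α} (ha : a ∈ S) : {b | r a b}.ncard ≤ #N := by
      rw [← Set.ncard_coe_finset]
      exact Set.ncard_le_ncard fun b hb ↦ by simpa [N] using ⟨a, ha, hb⟩
    by_contra! hlt
    have hSD : D < #S := by
      obtain ⟨a, ha⟩ := card_pos.1 hlt.pos
      exact (hα a).trans_lt (mod_cast (hN ha).trans_lt hlt)
    obtain ⟨a, ha, haD⟩ : ∃ a ∈ (S : Set α), a ∉ {a | D ≤ {b | ¬ r a b}.ncard} := by
      refine Set.exists_mem_notMem_of_ncard_lt_ncard ?_ (Set.toFinite _)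
      rw [Set.ncard_coe_finset]
      exact_mod_cast hfew.trans_lt hSD
    obtain ⟨b, hb⟩ : ∃ b, b ∉ N := by
      by_contra! hall
      rw [eq_univ_iff_forall.2 hall, card_univ, ← Nat.card_eq_fintype_card, ← hcard,
        Nat.card_eq_fintype_card] at hlt
      exact hlt.not_ge S.card_le_univ
    have hS : #S ≤ {a | r a b}ᶜ.ncard := by
      rw [← Set.ncard_coe_finset]
      exact Set.ncard_le_ncard fun a' ha' hab ↦ hb (by simpa [N] using ⟨a', ha', hab⟩)
    have hsumβ := Set.ncard_add_ncard_compl {a | r a b}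
    have hsumα := Set.ncard_add_ncard_compl {b | r a b}
    have hSD : D + #N < {b | r a b}.ncard + D := by
      have : ({b | r a b}ᶜ.ncard : ℝ) < D := not_le.1 haD
      have hle : {a | r a b}.ncard + #N ≤ {b | r a b}ᶜ.ncard + {b | r a b}.ncard := by lia
      have : ({a | r a b}.ncard + #N : ℝ) ≤ {b | r a b}ᶜ.ncard + {b | r a b}.ncard := mod_cast hle
      linarith [hβ b]
    have : (_ : ℝ) ≤ _ := Nat.cast_le.2 (hN ha)
    linarith
  exact ⟨.ofBijective f ((Nat.bijective_iff_injective_and_card f).2 ⟨hf, hcard⟩), hr⟩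

theorem exists_equiv_forall_rel_of_fiberwise {α β γ : Type*} {r : α → β → Prop} (f : α → γ)
    (g : β → γ) (h : ∀ c, ∃ σ : {a // f a = c} ≃ {b // g b = c}, ∀ a, r a.1 (σ a).1) :
    ∃ σ : α ≃ β, ∀ a, r a (σ a) ∧ g (σ a) = f a := by
  choose σ hσ using h
  exact ⟨.ofFiberEquiv σ, fun a ↦ ⟨hσ _ ⟨a, rfl⟩, Equiv.ofFiberEquiv_map σ a⟩⟩

end Hall

section Puncture

variable {ι α : Type*} (z : ι ↪ α) (side : α → Bool)

open Classical in
/-- The value of `side` outside the range of `z`, and `none` on the range of `z`. -/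
noncomputable def puncture (a : α) : Option Bool := if ∃ i, z i = a then none else some (side a)

variable {z side} {a : α} {c : Bool}

theorem puncture_eq_none_iff : puncture z side a = none ↔ ∃ i, z i = a := by
  simp [puncture]

theorem puncture_eq_some_iff : puncture z side a = some c ↔ side a = c ∧ ¬ ∃ i, z i = a := by
  unfold puncture
  split_ifs with h <;> simp [h]

theorem card_puncture_eq_some_add [Finite α] (h : ∀ i, side (z i) = c) :
    Nat.card {a // puncture z side a = some c} + Nat.card ι = {a | side a = c}.ncard := by
  have hrange : Set.range z ⊆ {a | side a = c} := Set.range_subset_iff.2 h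
  rw [← Set.ncard_sdiff_add_ncard_of_subset hrange, ← Set.ncard_range_of_injective z.injective]
  congr 1
  exact Nat.card_congr (Equiv.subtypeEquivRight fun a ↦ puncture_eq_some_iff)

theorem card_puncture_eq_some (h : ∀ i, side (z i) ≠ c) :
    Nat.card {a // puncture z side a = some c} = {a | side a = c}.ncard := by
  refine Nat.card_congr (Equiv.subtypeEquivRight fun a ↦ ?_)
  refine puncture_eq_some_iff.trans (and_iff_left_of_imp ?_)
  rintro rfl ⟨i, rfl⟩
  exact h i rfl

theorem exists_equiv_puncture_none {β : Type*} (zA : ι ↪ α) (zB : ι ↪ β) (sideA : α → Bool)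
    (sideB : β → Bool) :
    ∃ σ : {a // puncture zA sideA a = none} ≃ {b // puncture zB sideB b = none},
      ∀ a i, zA i = a.1 → zB i = (σ a).1 := by
  let eA : ι ≃ {a // puncture zA sideA a = none} := (Equiv.ofInjective zA zA.injective).trans
    (Equiv.subtypeEquivRight fun _ ↦ puncture_eq_none_iff.symm)
  let eB : ι ≃ {b // puncture zB sideB b = none} := (Equiv.ofInjective zB zB.injective).trans
    (Equiv.subtypeEquivRight fun _ ↦ puncture_eq_none_iff.symm)
  refine ⟨eA.symm.trans eB, eA.surjective.forall.2 fun i i' hi ↦ ?_⟩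
  rw [Equiv.trans_apply, eA.symm_apply_apply, zA.injective (hi : zA i' = zA i)]
  rfl

theorem ncard_le_ncard_puncture_add [Finite α] {p : α → Prop} (h : ∀ a, p a → side a = c) :
    {a | p a}.ncard ≤ {a : {a // puncture z side a = some c} | p a}.ncard + Nat.card ι := by
  have hsub : {a | p a} ⊆
      Subtype.val '' {a : {a // puncture z side a = some c} | p a} ∪ Set.range z := fun a ha ↦ by
    by_cases hz : ∃ i, z i = a
    · exact Or.inr hz
    · exact Or.inl ⟨⟨a, puncture_eq_some_iff.2 ⟨h a ha, hz⟩⟩, ha, rfl⟩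
  rw [← Set.ncard_range_of_injective z.injective,
    ← Set.ncard_image_of_injective _ Subtype.val_injective]
  exact (Set.ncard_le_ncard hsub).trans (Set.ncard_union_le _ _)

end Puncture

namespace GadgetSystem

variable {α β ι τ : Type*} {G : GadgetSystem α β ι τ}

theorem isGood_of_gadget_of_H {σ : α ≃ β} (j : τ)
    (hgadget : ∀ i, σ (G.x (i, j)) = G.y (i, j))
    (hH : ∀ a, (¬ ∃ i, G.x (i, j) = a) → G.H a (σ a)) : G.IsGood σ := by
  refine ⟨fun a ↦ ?_, fun i ↦ ⟨j, hgadget i, fun j' hj' ↦ ?_⟩⟩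
  · by_cases ha : ∃ i, G.x (i, j) = a
    · obtain ⟨i, rfl⟩ := ha
      exact Or.inr ⟨(i, j), rfl, (hgadget i).symm⟩
    · exact Or.inl (hH a ha)
  · by_contra hne
    refine ne_y_of_H (hH (G.x (i, j')) ?_) hj'
    rintro ⟨i', hi'⟩
    exact hne (Prod.mk.inj (G.x.injective hi')).2.symm

theorem exists_equiv_puncture_some [Finite α] [Finite β] {zA : ι ↪ α} {zB : ι ↪ β} {D : ℝ}
    {c : Bool} (hcard : Nat.card {a // puncture zA G.sideA a = some c} =
      Nat.card {b // puncture zB G.sideB b = some c})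
    (hdegA : ∀ a, D + Nat.card ι ≤ {b | G.H a b}.ncard)
    (hdegB : ∀ b, D + Nat.card ι ≤ {a | G.H a b}.ncard)
    (hfew : {a | D ≤ {b | G.sideA a = G.sideB b ∧ ¬ G.H a b}.ncard}.ncard ≤ D) :
    ∃ σ : {a // puncture zA G.sideA a = some c} ≃ {b // puncture zB G.sideB b = some c},
      ∀ a, G.H a.1 (σ a).1 := by
  refine exists_equiv_forall_rel_of_le_ncard (r := fun a b ↦ G.H a.1 b.1) (D := D) hcard
    (fun a ↦ ?_) (fun b ↦ ?_) ?_
  · have hside := (puncture_eq_some_iff.1 a.2).1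
    have := ncard_le_ncard_puncture_add (z := zB) (p := G.H a)
      fun b hb ↦ (G.sideA_eq_of_H hb).symm.trans hside
    have : (_ : ℝ) ≤ _ := Nat.cast_le.2 this
    push_cast at this
    linarith [hdegA a]
  · have hside := (puncture_eq_some_iff.1 b.2).1
    have := ncard_le_ncard_puncture_add (z := zA) (p := (G.H · b))
      fun a ha ↦ (G.sideA_eq_of_H ha).trans hside
    have : (_ : ℝ) ≤ _ := Nat.cast_le.2 this
    push_cast at this
    linarith [hdegB b]
  · refine (Nat.cast_le.2 ?_).trans hfew
    refine Set.ncard_le_ncard_of_injOn Subtype.val (fun a ha ↦ ?_)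
      Subtype.val_injective.injOn
    refine (Set.mem_ofPred_eq ▸ ha).trans (Nat.cast_le.2 ?_)
    refine Set.ncard_le_ncard_of_injOn Subtype.val (fun b hb ↦ ⟨?_, hb⟩)
      Subtype.val_injective.injOn
    exact (puncture_eq_some_iff.1 a.2).1.trans (puncture_eq_some_iff.1 b.2).1.symm

theorem exists_isGood [Finite α] [Finite β] [Nonempty τ] {D : ℝ}
    (hA : {a | G.sideA a = true}.ncard = {b | G.sideB b = true}.ncard + Nat.card ι)
    (hB : {b | G.sideB b = false}.ncard = {a | G.sideA a = false}.ncard + Nat.card ι)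
    (hdegA : ∀ a, D + Nat.card ι ≤ {b | G.H a b}.ncard)
    (hdegB : ∀ b, D + Nat.card ι ≤ {a | G.H a b}.ncard)
    (hfew : {a | D ≤ {b | G.sideA a = G.sideB b ∧ ¬ G.H a b}.ncard}.ncard ≤ D) :
    ∃ σ, G.IsGood σ := by
  let j : τ := Classical.arbitrary τ
  let zA : ι ↪ α := (Function.Embedding.sectL ι j).trans G.x
  let zB : ι ↪ β := (Function.Embedding.sectL ι j).trans G.y
  have hzA (i : ι) : G.sideA (zA i) = true := G.sideA_x _
  have hzB (i : ι) : G.sideB (zB i) = false := G.sideB_y _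
  obtain ⟨σ, hσ⟩ := exists_equiv_forall_rel_of_fiberwise
    (r := fun a b ↦ (∀ i, zA i = a → zB i = b) ∧ ((¬ ∃ i, zA i = a) → G.H a b))
    (puncture zA G.sideA) (puncture zB G.sideB) fun c ↦ by
    obtain _ | c := c
    · obtain ⟨σ, hσ⟩ := exists_equiv_puncture_none zA zB G.sideA G.sideB
      exact ⟨σ, fun a ↦ ⟨hσ a, fun ha ↦ (ha (puncture_eq_none_iff.1 a.2)).elim⟩⟩
    · have hcard : Nat.card {a // puncture zA G.sideA a = some c} =
          Nat.card {b // puncture zB G.sideB b = some c} := by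
        cases c
        · have hA' := card_puncture_eq_some (z := zA) (side := G.sideA) (c := false)
            fun i ↦ by simp [hzA]
          have hB' := card_puncture_eq_some_add hzB
          lia
        · have hA' := card_puncture_eq_some_add hzA
          have hB' := card_puncture_eq_some (z := zB) (side := G.sideB) (c := true)
            fun i ↦ by simp [hzB]
          lia
      obtain ⟨σ, hσ⟩ := exists_equiv_puncture_some hcard hdegA hdegB hfew
      exact ⟨σ, fun a ↦ ⟨fun i hi ↦ ((puncture_eq_some_iff.1 a.2).2 ⟨i, hi⟩).elim, fun _ ↦ hσ a⟩⟩
  exact ⟨σ, isGood_of_gadget_of_H j (fun i ↦ ((hσ _).1.1 i rfl).symm) fun a ↦ (hσ a).1.2⟩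

end GadgetSystem

theorem cast_ncard_le_add_of_subset_union {α : Type*} [Finite α] {s t u : Set α} (h : s ⊆ t ∪ u) :
    (s.ncard : ℝ) ≤ t.ncard + u.ncard :=
  mod_cast (Set.ncard_le_ncard h).trans (Set.ncard_union_le t u)

/-! ### Two-cluster graphs -/

/-- A bipartite graph `E` whose two parts are split into a `true` and a `false` cluster each, with
sets `specialA`, `specialB` of vertices of possibly irregular behaviour, and with pairs `x p`, `y p`
joining the `true` cluster of `α` to the `false` cluster of `β`, which are to become the gadget
edges of a `GadgetSystem`. -/
structure TwoClusterGraph (α β ι τ : Type*) where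
  E : α → β → Prop
  sideA : α → Bool
  sideB : β → Bool
  specialA : Set α
  specialB : Set β
  x : ι × τ ↪ α
  y : ι × τ ↪ β
  sideA_x (p : ι × τ) : sideA (x p) = true
  sideB_y (p : ι × τ) : sideB (y p) = false
  x_mem_specialA (p : ι × τ) : x p ∈ specialA
  y_mem_specialB (p : ι × τ) : y p ∈ specialB

namespace TwoClusterGraph

variable {α β ι τ κ : Type*} (G : TwoClusterGraph α β ι τ)

/-- The graph with `α` and `β` exchanged. The clusters are renamed so that the gadget edges still
leave the `true` cluster of the first part. -/
def dual : TwoClusterGraph β α ι τ where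
  E b a := G.E a b
  sideA b := !G.sideB b
  sideB a := !G.sideA a
  specialA := G.specialB
  specialB := G.specialA
  x := G.y
  y := G.x
  sideA_x p := by rw [G.sideB_y, Bool.not_false]
  sideB_y p := by rw [G.sideA_x, Bool.not_true]
  x_mem_specialA := G.y_mem_specialB
  y_mem_specialB := G.x_mem_specialA

/-- The edges of `G` within the clusters that avoid pairs of special vertices, restricted to common
neighbours at the gadget vertices so that the vertices of a block become twins. -/
def H (a : α) (b : β) : Prop :=
  G.sideA a = G.sideB b ∧ G.E a b ∧ ¬ (a ∈ G.specialA ∧ b ∈ G.specialB) ∧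
    (∀ i j j', G.x (i, j) = a → G.E (G.x (i, j')) b) ∧
      ∀ i j j', G.y (i, j) = b → G.E a (G.y (i, j'))

variable {G} {a : α} {b : β}

theorem dual_H : G.dual.H b a ↔ G.H a b := by
  have hside : G.dual.sideA b = G.dual.sideB a ↔ G.sideA a = G.sideB b := by
    simp [dual, eq_comm]
  unfold H
  rw [hside, and_comm (a := b ∈ _)]
  exact and_congr_right' (and_congr_right' (and_congr_right' and_comm))

theorem H_of_notMem_specialB (hside : G.sideA a = G.sideB b)
    (hx : ∀ i j j', G.x (i, j) = a → G.E (G.x (i, j')) b) (hE : G.E a b) (hb : b ∉ G.specialB) :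
    G.H a b :=
  ⟨hside, hE, fun h ↦ hb h.2, hx,
    fun i j _ hy ↦ (hb (hy ▸ G.y_mem_specialB (i, j))).elim⟩

theorem H_x_congr {i : ι} {j j' : τ} (h : G.H (G.x (i, j)) b) : G.H (G.x (i, j')) b := by
  refine H_of_notMem_specialB ?_ ?_ (h.2.2.2.1 i j j' rfl) fun hb ↦
    h.2.2.1 ⟨G.x_mem_specialA _, hb⟩
  · rw [G.sideA_x, ← h.1, G.sideA_x]
  · rintro i' k k' hk
    exact h.2.2.2.1 i' j k' (by rw [(Prod.mk.inj (G.x.injective hk)).1])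

variable (G) in
/-- The gadget system on the graph `G.H`. -/
def toGadgetSystem : GadgetSystem α β ι τ where
  sideA := G.sideA
  sideB := G.sideB
  H := G.H
  x := G.x
  y := G.y
  sideA_eq_of_H h := h.1
  sideA_x := G.sideA_x
  sideB_y := G.sideB_y
  H_x_congr := H_x_congr
  H_y_congr h := dual_H.1 (H_x_congr (dual_H.2 h))

/-- The part of the regularity conditions on a `TwoClusterGraph` that concerns the neighbourhoods of
the vertices of `α`; the remaining ones are those of the dual. Here `N` stands for the size of the
parts, and `s` for a small multiple of `N`. -/
structure IsRegular (G : TwoClusterGraph α β ι τ) (N s : ℝ) : Prop where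
  le_ncard_sideB (c : Bool) : N / 2 - s ≤ {b | G.sideB b = c}.ncard
  ncard_sideB_le (c : Bool) : {b | G.sideB b = c}.ncard ≤ N / 2 + s
  ncard_specialB_le : G.specialB.ncard ≤ s
  ncard_not_E_le {a : α} (ha : a ∉ G.specialA) :
    {b | G.sideA a = G.sideB b ∧ ¬ G.E a b}.ncard ≤ 2 * s
  le_ncard_E (a : α) : 45 * s ≤ {b | G.sideA a = G.sideB b ∧ G.E a b}.ncard
  ncard_not_E_x_le (p : ι × τ) : {b | G.sideB b = true ∧ ¬ G.E (G.x p) b}.ncard ≤ 100 * s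

/-- A `TwoClusterGraph` that is regular in both directions, with `1 ≤ s ≤ N / 10 ^ 6`. -/
structure IsBiregular (G : TwoClusterGraph α β ι τ) (N s : ℝ) : Prop where
  isRegular : G.IsRegular N s
  dual : G.dual.IsRegular N s
  one_le : 1 ≤ s
  le_size : 10 ^ 6 * s ≤ N

namespace IsBiregular

variable {N s : ℝ}

theorem flip (h : G.IsBiregular N s) : G.dual.IsBiregular N s where
  isRegular := h.dual
  dual := by simpa [TwoClusterGraph.dual] using h.isRegular
  one_le := h.one_le
  le_size := h.le_size

theorem ncard_not_H_le [Finite β] (h : G.IsBiregular N s) (ha : a ∉ G.specialA) :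
    {b | G.sideA a = G.sideB b ∧ ¬ G.H a b}.ncard ≤ 3 * s := by
  have hsub : {b | G.sideA a = G.sideB b ∧ ¬ G.H a b} ⊆
      {b | G.sideA a = G.sideB b ∧ ¬ G.E a b} ∪ G.specialB := fun b ⟨hside, hH⟩ ↦ by
    by_contra hb
    simp only [Set.mem_union, Set.mem_ofPred_eq, hside, true_and, not_or, not_not] at hb
    exact hH (H_of_notMem_specialB hside
      (fun i j _ hx ↦ (ha (hx ▸ G.x_mem_specialA (i, j))).elim) hb.1 hb.2)
  linarith [cast_ncard_le_add_of_subset_union hsub, h.isRegular.ncard_not_E_le ha,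
    h.isRegular.ncard_specialB_le]

theorem le_ncard_H_of_notMem [Finite β] (h : G.IsBiregular N s) (ha : a ∉ G.specialA) :
    N / 2 - 4 * s ≤ {b | G.H a b}.ncard := by
  have hsub : {b | G.sideB b = G.sideA a} ⊆
      {b | G.H a b} ∪ {b | G.sideA a = G.sideB b ∧ ¬ G.H a b} := fun b hb ↦
    (em (G.H a b)).imp id fun hH ↦ ⟨hb.symm, hH⟩
  linarith [cast_ncard_le_add_of_subset_union hsub, h.ncard_not_H_le ha,
    h.isRegular.le_ncard_sideB (G.sideA a)]

theorem le_ncard_H_x [Finite β] [Finite τ] (h : G.IsBiregular N s) (hτ : Nat.card τ = 1003)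
    (p : ι × τ) : 40 * s ≤ {b | G.H (G.x p) b}.ncard := by
  have := Fintype.ofFinite τ
  obtain ⟨i, j⟩ := p
  set U : Set β := ⋃ j', {b | G.sideB b = true ∧ ¬ G.E (G.x (i, j')) b} with hU
  have hsub : {b | G.sideB b = true} ⊆ ({b | G.H (G.x (i, j)) b} ∪ G.specialB) ∪ U := fun b hb ↦ by
    by_contra hnot
    simp only [hU, Set.mem_union, Set.mem_iUnion, Set.mem_ofPred_eq, not_or, not_exists, not_and,
      not_not] at hnot
    have hE (j' : τ) : G.E (G.x (i, j')) b := hnot.2 j' hb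
    refine hnot.1.1 (H_of_notMem_specialB ((G.sideA_x _).trans hb.symm) ?_ (hE j) hnot.1.2)
    intro i' k j' hx
    exact (Prod.mk.inj (G.x.injective hx)).1 ▸ hE j'
  have hUcard : (U.ncard : ℝ) ≤ 1003 * (100 * s) := by
    refine (Nat.cast_le.2 (Set.ncard_iUnion_le_of_fintype _)).trans ?_
    push_cast
    refine (sum_le_card_nsmul _ _ _ fun j' _ ↦ h.isRegular.ncard_not_E_x_le (i, j')).trans_eq ?_
    rw [card_univ, ← Nat.card_eq_fintype_card, hτ, nsmul_eq_mul, Nat.cast_ofNat]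
  linarith [cast_ncard_le_add_of_subset_union hsub, h.isRegular.le_ncard_sideB true,
    cast_ncard_le_add_of_subset_union (s := {b | G.H (G.x (i, j)) b} ∪ G.specialB) subset_rfl,
    h.isRegular.ncard_specialB_le, h.le_size, h.one_le]

theorem le_ncard_H [Finite β] [Finite τ] (h : G.IsBiregular N s) (hτ : Nat.card τ = 1003) (a : α) :
    40 * s ≤ {b | G.H a b}.ncard := by
  by_cases hx : ∃ p, G.x p = a
  · obtain ⟨p, rfl⟩ := hx
    exact h.le_ncard_H_x hτ p
  have hsub : {b | G.sideA a = G.sideB b ∧ G.E a b} ⊆ {b | G.H a b} ∪ G.specialB := fun b hb ↦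
    or_iff_not_imp_right.2 (H_of_notMem_specialB hb.1 (fun i j _ hx' ↦ (hx ⟨_, hx'⟩).elim) hb.2)
  linarith [cast_ncard_le_add_of_subset_union hsub, h.isRegular.le_ncard_E a,
    h.isRegular.ncard_specialB_le, h.one_le]

end IsBiregular

end TwoClusterGraph

namespace TwoClusterGraph

variable {α β ι τ κ : Type*} {G : TwoClusterGraph α β ι τ} {a : α} {b : β}

variable (G) in
/-- The weight of an edge of `H`: twice the sum of the reciprocals of the degrees of its ends. -/
noncomputable def weight (e : α × β) : ℝ :=
  open Classical in
  if G.H e.1 e.2 then 2 / {b | G.H e.1 b}.ncard + 2 / {a | G.H a e.2}.ncard else 0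

theorem weight_nonneg (e : α × β) : 0 ≤ G.weight e := by
  unfold weight
  positivity

theorem weight_of_not_H {e : α × β} (h : ¬ G.H e.1 e.2) : G.weight e = 0 := if_neg h

theorem dual_weight (e : β × α) : G.dual.weight e = G.weight e.swap := by
  by_cases h : G.H e.2 e.1 <;> simp [weight, dual_H, h, add_comm]

namespace IsBiregular

variable {N s : ℝ}

theorem weight_le [Finite α] [Finite β] [Finite τ] (h : G.IsBiregular N s)
    (hτ : Nat.card τ = 1003) (e : α × β) : G.weight e ≤ 1 / (10 * s) := by
  have hs := h.one_le
  have hα : 40 * s ≤ {b | G.H e.1 b}.ncard := h.le_ncard_H hτ e.1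
  have hβ : 40 * s ≤ {a | G.H a e.2}.ncard := by simpa only [dual_H] using h.flip.le_ncard_H hτ e.2
  unfold weight
  split_ifs
  · calc (2 / {b | G.H e.1 b}.ncard + 2 / {a | G.H a e.2}.ncard : ℝ)
        ≤ 2 / (40 * s) + 2 / (40 * s) := by gcongr
      _ = 1 / (10 * s) := by field_simp; norm_num
  · positivity

theorem two_div_ncard_le [Finite α] [Finite τ] (h : G.IsBiregular N s) (hτ : Nat.card τ = 1003)
    (b : β) : 2 / ({a | G.H a b}.ncard : ℝ) ≤
      G.specialB.indicator (fun _ ↦ 2 / (40 * s)) b + 2 / (N / 2 - 4 * s) := by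
  have hs := h.one_le
  have hN := h.le_size
  by_cases hb : b ∈ G.specialB
  · have hdeg : 40 * s ≤ {a | G.H a b}.ncard := by simpa only [dual_H] using h.flip.le_ncard_H hτ b
    rw [Set.indicator_of_mem hb]
    exact (div_le_div_of_nonneg_left (by simp) (by linarith) hdeg).trans
      (le_add_of_nonneg_right (div_nonneg (by simp) (by linarith)))
  · have hdeg : N / 2 - 4 * s ≤ {a | G.H a b}.ncard := by
      simpa only [dual_H] using h.flip.le_ncard_H_of_notMem hb
    rw [Set.indicator_of_notMem hb, zero_add]
    exact div_le_div_of_nonneg_left (by simp) (by linarith) hdeg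

theorem sum_two_div_ncard_le [Finite α] [Finite β] [Finite τ] (h : G.IsBiregular N s)
    (hτ : Nat.card τ = 1003) (a : α) {S : Finset β} (hS : ∀ b ∈ S, G.H a b) :
    ∑ b ∈ S, 2 / ({a | G.H a b}.ncard : ℝ) ≤ 3 := by
  classical
  have hs := h.one_le
  have hN := h.le_size
  have hcard : #S ≤ N / 2 + s := by
    refine le_trans (Nat.cast_le.2 ?_) (h.isRegular.ncard_sideB_le (G.sideA a))
    rw [← Set.ncard_coe_finset]
    exact Set.ncard_le_ncard fun b hb ↦ (hS b hb).1.symm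
  have hspecial : (#{b ∈ S | b ∈ G.specialB} : ℝ) ≤ s := by
    refine le_trans (Nat.cast_le.2 ?_) h.isRegular.ncard_specialB_le
    rw [← Set.ncard_coe_finset]
    exact Set.ncard_le_ncard fun b hb ↦ (mem_filter.1 hb).2
  calc ∑ b ∈ S, 2 / ({a | G.H a b}.ncard : ℝ)
      ≤ ∑ b ∈ S, (G.specialB.indicator (fun _ ↦ 2 / (40 * s)) b + 2 / (N / 2 - 4 * s)) :=
        sum_le_sum fun b _ ↦ h.two_div_ncard_le hτ b
    _ = #{b ∈ S | b ∈ G.specialB} * (2 / (40 * s)) + #S * (2 / (N / 2 - 4 * s)) := by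
        simp only [Set.indicator_apply, sum_add_distrib, ← sum_filter, sum_const, nsmul_eq_mul]
    _ ≤ s * (2 / (40 * s)) + (N / 2 + s) * (2 / (N / 2 - 4 * s)) := by
        have hpos : 0 ≤ N / 2 - 4 * s := by linarith
        gcongr
    _ ≤ 1 / 2 + 5 / 2 := by
        gcongr
        · rw [mul_div_assoc', div_le_iff₀ (by linarith)]
          linarith
        · rw [mul_div_assoc', div_le_iff₀ (by linarith)]
          linarith
    _ = 3 := by norm_num

theorem sum_weight_le [Finite α] [Fintype β] [Finite τ] (h : G.IsBiregular N s)
    (hτ : Nat.card τ = 1003) (a : α) : ∑ b, G.weight (a, b) ≤ 5 := by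
  classical
  have hs := h.one_le
  have hrow : ∑ b with G.H a b, (2 / {b | G.H a b}.ncard : ℝ) = 2 := by
    have hdeg : 40 * s ≤ {b | G.H a b}.ncard := h.le_ncard_H hτ a
    have hcard : #{b | G.H a b} = {b | G.H a b}.ncard := by
      rw [← Set.ncard_coe_finset, coe_filter_univ]
    rw [sum_const, nsmul_eq_mul, hcard, mul_div_cancel₀]
    linarith
  simp only [weight]
  rw [← sum_filter, sum_add_distrib, hrow]
  linarith [h.sum_two_div_ncard_le hτ a (S := {b | G.H a b}) fun b hb ↦ (mem_filter.1 hb).2]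

theorem ncard_sideA_le (h : G.IsBiregular N s) (c : Bool) :
    {a | G.sideA a = c}.ncard ≤ N / 2 + s := by
  simpa [TwoClusterGraph.dual] using h.dual.ncard_sideB_le (!c)

theorem one_le_weight_mul_of_notMem [Finite α] [Finite β] [Finite τ] (h : G.IsBiregular N s)
    (hτ : Nat.card τ = 1003) (hab : G.H a b) (ha : a ∉ G.specialA) :
    1 ≤ G.weight (a, b) * ({v | G.H a v}.ncard + {u | G.H u b}.ncard - (N / 2 + s) - 1) := by
  have hs := h.one_le
  have hdegA : N / 2 - 4 * s ≤ {v | G.H a v}.ncard := h.le_ncard_H_of_notMem ha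
  have hdegB : 40 * s ≤ {u | G.H u b}.ncard := by simpa only [dual_H] using h.flip.le_ncard_H hτ b
  have hweight : 2 / ({u | G.H u b}.ncard : ℝ) ≤ G.weight (a, b) := by
    rw [weight, if_pos hab]
    exact le_add_of_nonneg_left (by positivity)
  calc (1 : ℝ) = 2 / {u | G.H u b}.ncard * ({u | G.H u b}.ncard / 2) := by
        rw [div_mul_div_cancel₀ (by linarith), div_self two_ne_zero]
    _ ≤ _ := mul_le_mul hweight (by linarith) (by positivity) (weight_nonneg _)

theorem one_le_weight_mul [Finite α] [Finite β] [Finite τ] (h : G.IsBiregular N s)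
    (hτ : Nat.card τ = 1003) (hab : G.H a b) :
    1 ≤ G.weight (a, b) * ({v | G.H a v}.ncard + {u | G.H u b}.ncard - (N / 2 + s) - 1) := by
  by_cases ha : a ∈ G.specialA
  · have hdual := h.flip.one_le_weight_mul_of_notMem hτ (dual_H.2 hab) fun hb ↦ hab.2.2.1 ⟨ha, hb⟩
    simp only [dual_weight, dual_H, Prod.swap_prod_mk] at hdual
    rwa [add_comm ({v | G.H a v}.ncard : ℝ)]
  · exact h.one_le_weight_mul_of_notMem hτ hab ha

theorem sum_weight_colour_le [Fintype α] [Fintype β] [Finite τ] [DecidableEq κ]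
    (h : G.IsBiregular N s) (hτ : Nat.card τ = 1003) {χ : α × β → κ} {c : κ}
    (hχ : {e | G.E e.1 e.2 ∧ χ e = c}.ncard ≤ s / 1000) :
    ∑ e with χ e = c, G.weight e ≤ 1 / 10000 := by
  classical
  have hs := h.one_le
  have hcard : (#{e ∈ {e | χ e = c} | G.H e.1 e.2} : ℝ) ≤ s / 1000 := by
    refine le_trans (Nat.cast_le.2 ?_) hχ
    rw [← Set.ncard_coe_finset]
    refine Set.ncard_le_ncard fun e he ↦ ?_
    simp only [coe_filter, mem_filter_univ, Set.mem_ofPred_eq] at he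
    exact ⟨he.2.2.1, he.1⟩
  calc ∑ e with χ e = c, G.weight e = ∑ e ∈ {e | χ e = c} with G.H e.1 e.2, G.weight e :=
        (sum_filter_of_ne fun e _ he ↦ by_contra fun hH ↦ he (weight_of_not_H hH)).symm
    _ ≤ s / 1000 * (1 / (10 * s)) := by
        refine (sum_le_card_nsmul _ _ _ fun e _ ↦ h.weight_le hτ e).trans ?_
        rw [nsmul_eq_mul]
        gcongr
    _ = 1 / 10000 := by field_simp; norm_num

theorem exists_isGood [Finite α] [Finite β] [Finite τ] (h : G.IsBiregular N s)
    (hτ : Nat.card τ = 1003) (hι : Nat.card ι ≤ s)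
    (hA : {a | G.sideA a = true}.ncard = {b | G.sideB b = true}.ncard + Nat.card ι)
    (hB : {b | G.sideB b = false}.ncard = {a | G.sideA a = false}.ncard + Nat.card ι) :
    ∃ σ, G.toGadgetSystem.IsGood σ := by
  have : Nonempty τ := (Nat.card_pos_iff.1 (by lia)).1
  have hs := h.one_le
  refine GadgetSystem.exists_isGood (D := 4 * s) hA hB (fun a ↦ ?_) (fun b ↦ ?_) ?_
  · have := h.le_ncard_H hτ a
    exact le_trans (by linarith) this
  · have := h.flip.le_ncard_H hτ b
    simp only [dual_H] at this
    exact le_trans (by linarith) this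
  · have hspecial : G.specialA.ncard ≤ s := h.dual.ncard_specialB_le
    have hsub : {a | 4 * s ≤ {b | G.sideA a = G.sideB b ∧ ¬ G.H a b}.ncard} ⊆ G.specialA :=
      fun a ha ↦ by
        by_contra hspec
        linarith [h.ncard_not_H_le hspec, Set.mem_ofPred_eq ▸ ha]
    exact (Nat.cast_le.2 (Set.ncard_le_ncard hsub)).trans (hspecial.trans (by linarith))

theorem exists_rainbow [Finite α] [Finite β] [Finite τ] (h : G.IsBiregular N s)
    (hτ : Nat.card τ = 1003) (hι : Nat.card ι ≤ s)
    (hA : {a | G.sideA a = true}.ncard = {b | G.sideB b = true}.ncard + Nat.card ι)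
    (hB : {b | G.sideB b = false}.ncard = {a | G.sideA a = false}.ncard + Nat.card ι)
    (hE : ∀ p, G.E (G.x p) (G.y p)) {χ : α × β → κ}
    (hχ : ∀ c, {e | G.E e.1 e.2 ∧ χ e = c}.ncard ≤ s / 1000)
    (hgadget : Function.Injective fun p ↦ χ (G.x p, G.y p)) :
    ∃ σ : α ≃ β, (∀ a, G.E a (σ a)) ∧ Function.Injective fun a ↦ χ (a, σ a) := by
  -- A block has 1003 edges since, with `p = 1 / 1000`, the hypothesis `1 ≤ p * (|τ| - 3)` of
  -- `GadgetSystem.exists_isGood_rainbow` has to hold.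
  classical
  have := Fintype.ofFinite α
  have := Fintype.ofFinite β
  have hcol (b : β) : ∑ a, G.weight (a, b) ≤ 5 := by
    simpa [dual_weight] using h.flip.sum_weight_le hτ b
  obtain ⟨σ, hσ, hinj⟩ := GadgetSystem.exists_isGood_rainbow (G := G.toGadgetSystem)
    (p := 1 / 1000) (h.ncard_sideA_le true) (h.isRegular.ncard_sideB_le false) weight_nonneg
    (fun e ↦ weight_of_not_H) (fun a b ↦ h.one_le_weight_mul hτ) (h.sum_weight_le hτ) hcol
    (by norm_num) (fun c ↦ h.sum_weight_colour_le hτ (hχ c)) hgadget (by norm_num)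
    (by norm_num [hτ]) (by norm_num [hτ]) (h.exists_isGood hτ hι hA hB)
  have hF {a : α} {b : β} : G.toGadgetSystem.F a b → G.E a b := by
    rintro ⟨p, rfl, rfl⟩
    exact hE p
  exact ⟨σ, fun a ↦ (hσ.1 a).elim (fun hH ↦ hH.2.1) hF, hinj⟩

end IsBiregular

end TwoClusterGraph

/-! ### Rainbow matchings of crossing edges -/

section Greedy

theorem exists_subset_card_eq_pairwise_not {E : Type*} {r : E → E → Prop} [DecidableRel r]
    (hrefl : ∀ e, r e e) (hsymm : ∀ e f, r e f → r f e) {F : Finset E} {K : ℝ} (hK0 : 0 < K)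
    (hK : ∀ e ∈ F, #{f ∈ F | r e f} ≤ K) {n : ℕ} (hn : n * K ≤ #F) :
    ∃ S ⊆ F, #S = n ∧ (S : Set E).Pairwise fun e f ↦ ¬ r e f := by
  classical
  induction n with
  | zero => exact ⟨∅, empty_subset F, card_empty, by simp⟩
  | succ n ih =>
    push_cast at hn
    obtain ⟨S, hSF, rfl, hS⟩ := ih (by linarith)
    have hblocked : (#(S.biUnion fun e ↦ {f ∈ F | r e f}) : ℝ) ≤ #S * K := by
      refine (Nat.cast_le.2 card_biUnion_le).trans ?_
      rw [Nat.cast_sum, ← nsmul_eq_mul]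
      exact sum_le_card_nsmul _ _ _ fun e he ↦ hK e (hSF he)
    obtain ⟨f, hfF, hf⟩ := exists_mem_notMem_of_card_lt_card
      (Nat.cast_lt.1 (hblocked.trans_lt (by linarith) : (_ : ℝ) < #F))
    have hfS (e : E) (he : e ∈ S) : ¬ r e f := fun hef ↦
      hf (mem_biUnion.2 ⟨e, he, mem_filter.2 ⟨hfF, hef⟩⟩)
    refine ⟨insert f S, insert_subset hfF hSF,
      card_insert_of_notMem fun hfS' ↦ hfS f hfS' (hrefl f), ?_⟩
    rw [coe_insert]
    exact hS.insert fun e he _ ↦ ⟨fun h ↦ hfS e he (hsymm _ _ h), hfS e he⟩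

end Greedy

section EdgeCount

variable {α β : Type*}

theorem ncard_preimage_swap (s : Set (α × β)) : (Prod.swap ⁻¹' s).ncard = s.ncard :=
  Set.ncard_preimage_of_injective_subset_range Prod.swap_injective fun e _ ↦ ⟨e.swap, e.swap_swap⟩

variable [Finite α] [Finite β] {r : α → β → Prop} {d : ℝ}

theorem ncard_mul_le_ncard {X : Set α} (h : ∀ a ∈ X, d ≤ {b | r a b}.ncard) :
    X.ncard * d ≤ {e : α × β | e.1 ∈ X ∧ r e.1 e.2}.ncard := by
  classical
  have := Fintype.ofFinite α
  have := Fintype.ofFinite β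
  calc (X.ncard * d : ℝ) = ∑ a with a ∈ X, d := by
        rw [sum_const, nsmul_eq_mul, ← Set.ncard_coe_finset, coe_filter_univ, Set.ofPred_mem_eq]
    _ ≤ ∑ a with a ∈ X, (#{b | r a b} : ℝ) := sum_le_sum fun a ha ↦ by
        rw [← Set.ncard_coe_finset, coe_filter_univ]
        exact h a (mem_filter.1 ha).2
    _ ≤ _ := by
        rw [← Nat.cast_sum, ← card_sigma, ← Set.ncard_coe_finset]
        refine Nat.cast_le.2 (Set.ncard_le_ncard_of_injOn (fun e ↦ (e.1, e.2)) ?_ ?_)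
        · simp
        · rintro ⟨a, b⟩ - ⟨a', b'⟩ - h
          simpa using h

theorem ncard_mul_le_ncard_flip {Y : Set β} (h : ∀ b ∈ Y, d ≤ {a | r a b}.ncard) :
    Y.ncard * d ≤ {e : α × β | e.2 ∈ Y ∧ r e.1 e.2}.ncard :=
  (ncard_mul_le_ncard h).trans_eq <| congrArg Nat.cast <|
    ncard_preimage_swap {e : α × β | e.2 ∈ Y ∧ r e.1 e.2}

end EdgeCount

section RainbowMatching

variable {α β ι κ : Type*} [Finite α] [Finite β] [Finite ι]

theorem exists_rainbow_matching {E : α → β → Prop} {χ : α × β → κ} {D d : ℝ}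
    (hα : ∀ a, {b | E a b}.ncard ≤ D) (hβ : ∀ b, {a | E a b}.ncard ≤ D)
    (hχ : ∀ c, {e | E e.1 e.2 ∧ χ e = c}.ncard ≤ d) (hpos : 0 < 2 * D + d)
    (hcard : Nat.card ι * (2 * D + d) ≤ {e : α × β | E e.1 e.2}.ncard) :
    ∃ (x : ι ↪ α) (y : ι ↪ β), (∀ p, E (x p) (y p)) ∧ Function.Injective fun p ↦ χ (x p, y p) := by
  classical
  have := Fintype.ofFinite α
  have := Fintype.ofFinite β
  let conflict (e f : α × β) : Prop := f.1 = e.1 ∨ f.2 = e.2 ∨ χ f = χ e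
  have hconflict (e : α × β) : #{f ∈ {f | E f.1 f.2} | conflict e f} ≤ 2 * D + d := by
    have hsub : {f | E f.1 f.2 ∧ conflict e f} ⊆
        (Prod.mk e.1 '' {b | E e.1 b} ∪ (·, e.2) '' {a | E a e.2}) ∪
          {f | E f.1 f.2 ∧ χ f = χ e} := by
      rintro ⟨a, b⟩ ⟨hE, rfl | rfl | hc⟩
      · exact .inl (.inl ⟨b, hE, rfl⟩)
      · exact .inl (.inr ⟨a, hE, rfl⟩)
      · exact .inr ⟨hE, hc⟩
    have hfst : ((Prod.mk e.1 '' {b | E e.1 b}).ncard : ℝ) ≤ D :=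
      (Nat.cast_le.2 Set.ncard_image_le).trans (hα e.1)
    have hsnd : (((·, e.2) '' {a | E a e.2}).ncard : ℝ) ≤ D :=
      (Nat.cast_le.2 Set.ncard_image_le).trans (hβ e.2)
    rw [filter_filter, ← Set.ncard_coe_finset, coe_filter_univ]
    linarith [cast_ncard_le_add_of_subset_union hsub, hχ (χ e), cast_ncard_le_add_of_subset_union
      (Set.Subset.refl (Prod.mk e.1 '' {b | E e.1 b} ∪ (·, e.2) '' {a | E a e.2}))]
  obtain ⟨S, hSE, hSι, hS⟩ := exists_subset_card_eq_pairwise_not (r := conflict)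
    (fun e ↦ .inl rfl) (fun e f h ↦ h.imp .symm (.imp .symm .symm)) hpos
    (fun e _ ↦ hconflict e) (hcard.trans_eq (by rw [← Set.ncard_coe_finset, coe_filter_univ]))
  have φ : ι ≃ S := (Finite.equivFin ι).trans ((finCongr hSι.symm).trans S.equivFin.symm)
  have hφ {p q : ι} (h : conflict (φ q) (φ p)) : p = q := by
    by_contra hne
    exact hS (φ q).2 (φ p).2 (fun h' ↦ hne (φ.injective (Subtype.ext h'.symm))) h
  exact ⟨⟨fun p ↦ (φ p).1.1, fun p q h ↦ hφ (.inl h)⟩,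
    ⟨fun p ↦ (φ p).1.2, fun p q h ↦ hφ (.inr (.inl h))⟩,
    fun p ↦ (mem_filter.1 (hSE (φ p).2)).2, fun p q h ↦ hφ (.inr (.inr h))⟩

end RainbowMatching

/-- A bipartite graph with parts of size `n` is Dirac if all its degrees are at least `n / 2`. -/
structure IsDirac {α β : Type*} (E : α → β → Prop) (n : ℕ) : Prop where
  card_left : Nat.card α = n
  card_right : Nat.card β = n
  le_degree_left (a : α) : (n : ℝ) / 2 ≤ {b | E a b}.ncard
  le_degree_right (b : β) : (n : ℝ) / 2 ≤ {a | E a b}.ncard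

theorem IsDirac.flip {α β : Type*} {E : α → β → Prop} {n : ℕ} (h : IsDirac E n) :
    IsDirac (flip E) n :=
  ⟨h.card_right, h.card_left, h.le_degree_right, h.le_degree_left⟩

theorem ncard_eq_true_add_ncard_eq_false {α : Type*} [Finite α] (p : α → Bool) :
    {a | p a = true}.ncard + {a | p a = false}.ncard = Nat.card α := by
  rw [← Set.ncard_add_ncard_compl {a | p a = true}, Set.compl_ofPred]
  simp only [Bool.not_eq_true]

theorem abs_ncard_eq_sub_le {α : Type*} [Finite α] {p : α → Bool} {δ : ℝ}
    (h : |({a | p a = true}.ncard : ℝ) - {a | p a = false}.ncard| ≤ δ) (c : Bool) :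
    |({a | p a = c}.ncard : ℝ) - Nat.card α / 2| ≤ δ / 2 := by
  have hcard : ({a | p a = true}.ncard : ℝ) + {a | p a = false}.ncard = Nat.card α :=
    mod_cast ncard_eq_true_add_ncard_eq_false p
  rw [abs_le] at h ⊢
  cases c <;> constructor <;> linarith

section Crossing

variable {α β κ : Type*} [Finite β] {E : α → β → Prop} {n k : ℕ}
  {sideA : α → Bool} {sideB : β → Bool}

theorem IsDirac.sub_ncard_le_ncard_crossing (hE : IsDirac E n) (c : Bool) (a : α) :
    n / 2 - {b | sideB b = !c}.ncard ≤ ({b | sideB b = c ∧ E a b}.ncard : ℝ) := by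
  have hsub : {b | E a b} ⊆ {b | sideB b = !c} ∪ {b | sideB b = c ∧ E a b} := fun b hb ↦ by
    by_cases h : sideB b = c
    · exact .inr ⟨h, hb⟩
    · exact .inl (Bool.eq_not.2 h)
  linarith [cast_ncard_le_add_of_subset_union hsub, hE.le_degree_left a]

variable [Finite α]

theorem IsDirac.le_ncard_crossing (hE : IsDirac E n)
    (hk : {a | sideA a = true}.ncard = {b | sideB b = true}.ncard + k)
    (hA : 0.48 * n ≤ ({a | sideA a = true}.ncard : ℝ))
    (hB : 0.48 * n ≤ ({b | sideB b = false}.ncard : ℝ)) :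
    0.24 * n * k ≤
      ({e : α × β | sideA e.1 = true ∧ sideB e.2 = false ∧ E e.1 e.2}.ncard : ℝ) := by
  have hleft := ncard_mul_le_ncard (X := {a | sideA a = true})
    (r := fun a b ↦ sideB b = false ∧ E a b)
    fun a _ ↦ hE.sub_ncard_le_ncard_crossing (sideB := sideB) false a
  have hright := ncard_mul_le_ncard_flip (Y := {b | sideB b = false})
    (r := fun a b ↦ sideA a = true ∧ E a b)
    fun b _ ↦ hE.flip.sub_ncard_le_ncard_crossing (sideB := sideA) true b
  simp only [Set.mem_ofPred_eq, Bool.not_true, Bool.not_false, and_left_comm (a := _ = false)]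
    at hleft hright
  have hcard : ({a | sideA a = true}.ncard : ℝ) + {a | sideA a = false}.ncard = n :=
    mod_cast (ncard_eq_true_add_ncard_eq_false sideA).trans hE.card_left
  have hk' : ({a | sideA a = true}.ncard : ℝ) = {b | sideB b = true}.ncard + k := mod_cast hk
  rcases le_total ({b | sideB b = true}.ncard : ℝ) (n / 2 - k / 2) with h | h
  · refine le_trans ?_ hleft
    calc (0.24 * n * k : ℝ) = 0.48 * n * (k / 2) := by ring
      _ ≤ _ := by gcongr; linarith
  · refine le_trans ?_ hright
    calc (0.24 * n * k : ℝ) = 0.48 * n * (k / 2) := by ring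
      _ ≤ _ := by gcongr; linarith

theorem IsDirac.exists_rainbow_crossing_matching {s : ℝ} (hE : IsDirac E n) (hs : 0 < s)
    (hsn : 10 ^ 6 * s ≤ n)
    (hk : {a | sideA a = true}.ncard = {b | sideB b = true}.ncard + k)
    (hA : 0.48 * n ≤ ({a | sideA a = true}.ncard : ℝ))
    (hB : 0.48 * n ≤ ({b | sideB b = false}.ncard : ℝ))
    (hcrossA : k ≠ 0 → ∀ a, sideA a = true → {b | sideB b = false ∧ E a b}.ncard ≤ 60 * s)
    (hcrossB : k ≠ 0 → ∀ b, sideB b = false → {a | sideA a = true ∧ E a b}.ncard ≤ 60 * s)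
    {χ : α × β → κ} (hχ : ∀ c, {e | E e.1 e.2 ∧ χ e = c}.ncard ≤ s / 1000) :
    ∃ (x : Fin k × Fin 1003 ↪ α) (y : Fin k × Fin 1003 ↪ β),
      (∀ p, sideA (x p) = true ∧ sideB (y p) = false ∧ E (x p) (y p)) ∧
        Function.Injective fun p ↦ χ (x p, y p) := by
  rcases eq_or_ne k 0 with rfl | hk0
  · exact ⟨⟨isEmptyElim, isEmptyElim⟩, ⟨isEmptyElim, isEmptyElim⟩, isEmptyElim, isEmptyElim⟩
  refine exists_rainbow_matching
    (E := fun a b ↦ sideA a = true ∧ sideB b = false ∧ E a b) (D := 60 * s) (d := s / 1000)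
    (fun a ↦ ?_) (fun b ↦ ?_) (fun c ↦ ?_) (by positivity) ?_
  · by_cases ha : sideA a = true
    · simpa only [ha, true_and] using hcrossA hk0 a ha
    · simpa [ha] using hs.le
  · by_cases hb : sideB b = false
    · simpa only [hb, true_and] using hcrossB hk0 b hb
    · simpa [hb] using hs.le
  · refine le_trans (Nat.cast_le.2 (Set.ncard_le_ncard fun e he ↦ ?_)) (hχ c)
    exact ⟨he.1.2.2, he.2⟩
  · refine le_trans ?_ (hE.le_ncard_crossing hk hA hB)
    rw [Nat.card_prod, Nat.card_fin, Nat.card_fin]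
    push_cast
    nlinarith [mul_le_mul_of_nonneg_left hsn (Nat.cast_nonneg (α := ℝ) k),
      mul_nonneg (Nat.cast_nonneg (α := ℝ) k) hs.le]

end Crossing

section Clusters

/-- The part concerning the neighbourhoods of the vertices of `α` of the assertion that `E` is
close to the disjoint union of two complete bipartite graphs, of which `sideA` and `sideB` are the
indicator functions. Here `N` stands for the size of the parts, and `s` for a small multiple
of `N`. -/
structure IsClustered {α β : Type*} (E : α → β → Prop) (sideA : α → Bool) (sideB : β → Bool)
    (N s : ℝ) : Prop where
  le_ncard_side (c : Bool) : N / 2 - s ≤ {b | sideB b = c}.ncard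
  ncard_side_le (c : Bool) : {b | sideB b = c}.ncard ≤ N / 2 + s
  ncard_atypical_le : {a | 2 * s < {b | sideA a = sideB b ∧ ¬ E a b}.ncard}.ncard ≤ s / 2
  le_ncard_same (a : α) : 45 * s ≤ {b | sideA a = sideB b ∧ E a b}.ncard

variable {α β κ ι τ : Type*} {E : α → β → Prop} {n k : ℕ} {s : ℝ}
  {sideA : α → Bool} {sideB : β → Bool}

theorem IsClustered.not (h : IsClustered E sideA sideB n s) :
    IsClustered E (fun a ↦ !sideA a) (fun b ↦ !sideB b) n s where
  le_ncard_side c := by simpa only [Bool.not_eq_eq_eq_not] using h.le_ncard_side !c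
  ncard_side_le c := by simpa only [Bool.not_eq_eq_eq_not] using h.ncard_side_le !c
  ncard_atypical_le := by simpa only [Bool.not_inj_iff] using h.ncard_atypical_le
  le_ncard_same := by simpa only [Bool.not_inj_iff] using h.le_ncard_same

/-- The `TwoClusterGraph` with given gadget edges whose special vertices are the ends of the gadget
edges and the vertices with many non-neighbours in their own cluster. -/
def TwoClusterGraph.ofCrossing (E : α → β → Prop) (sideA : α → Bool)
    (sideB : β → Bool) (s : ℝ) (x : ι × τ ↪ α) (y : ι × τ ↪ β)
    (h : ∀ p, sideA (x p) = true ∧ sideB (y p) = false ∧ E (x p) (y p)) :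
    TwoClusterGraph α β ι τ where
  E := E
  sideA := sideA
  sideB := sideB
  specialA := {a | 2 * s < {b | sideA a = sideB b ∧ ¬ E a b}.ncard} ∪ Set.range x
  specialB := {b | 2 * s < {a | sideB b = sideA a ∧ ¬ E a b}.ncard} ∪ Set.range y
  x := x
  y := y
  sideA_x p := (h p).1
  sideB_y p := (h p).2.1
  x_mem_specialA p := .inr ⟨p, rfl⟩
  y_mem_specialB p := .inr ⟨p, rfl⟩

theorem TwoClusterGraph.dual_ofCrossing {x : ι × τ ↪ α} {y : ι × τ ↪ β}
    (h : ∀ p, sideA (x p) = true ∧ sideB (y p) = false ∧ E (x p) (y p)) :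
    (ofCrossing E sideA sideB s x y h).dual =
      ofCrossing (flip E) (fun b ↦ !sideB b) (fun a ↦ !sideA a) s y x
        (fun p ↦ by simpa [flip] using ⟨(h p).2.1, (h p).1, (h p).2.2⟩) := by
  simp [ofCrossing, dual, funext_iff, flip]

variable [Finite β]

theorem IsClustered.ncard_not_le_of_crossing (h : IsClustered E sideA sideB n s) (hE : IsDirac E n)
    {a : α} (hcross : {b | sideB b = false ∧ E a b}.ncard ≤ 60 * s) :
    {b | sideB b = true ∧ ¬ E a b}.ncard ≤ 61 * s := by
  have hdisj : Disjoint {b | sideB b = true ∧ ¬ E a b} {b | sideB b = true ∧ E a b} :=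
    Set.disjoint_left.2 fun b hb hb' ↦ hb.2 hb'.2
  have hunion : {b | sideB b = true ∧ ¬ E a b} ∪ {b | sideB b = true ∧ E a b} =
      {b | sideB b = true} := by
    ext b
    simp [← and_or_left, or_comm, em]
  have hsplit := Set.ncard_union_eq hdisj
  rw [hunion] at hsplit
  have hsplit' : ({b | sideB b = true}.ncard : ℝ) =
    {b | sideB b = true ∧ ¬ E a b}.ncard + {b | sideB b = true ∧ E a b}.ncard := mod_cast hsplit
  have hsub : {b | E a b} ⊆ {b | sideB b = true ∧ E a b} ∪ {b | sideB b = false ∧ E a b} :=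
    fun b hb ↦ by cases h : sideB b <;> simp_all
  linarith [h.ncard_side_le true, hE.le_degree_left a, cast_ncard_le_add_of_subset_union hsub]

theorem IsClustered.isRegular_ofCrossing (h : IsClustered E sideA sideB n s)
    (h' : IsClustered (flip E) sideB sideA n s) {x : ι × τ ↪ α} {y : ι × τ ↪ β}
    (hxy : ∀ p, sideA (x p) = true ∧ sideB (y p) = false ∧ E (x p) (y p))
    (hcard : (Nat.card (ι × τ) : ℝ) ≤ s / 2)
    (hx : ∀ p, {b | sideB b = true ∧ ¬ E (x p) b}.ncard ≤ 100 * s) :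
    (TwoClusterGraph.ofCrossing E sideA sideB s x y hxy).IsRegular n s where
  le_ncard_sideB := h.le_ncard_side
  ncard_sideB_le := h.ncard_side_le
  ncard_specialB_le := by
    have hrange : ((Set.range y).ncard : ℝ) ≤ s / 2 := by
      rwa [Set.ncard_range_of_injective y.injective]
    exact (cast_ncard_le_add_of_subset_union (Set.Subset.refl _)).trans
      ((add_le_add h'.ncard_atypical_le hrange).trans_eq (add_halves s))
  ncard_not_E_le ha := not_lt.1 fun h ↦ ha (.inl h)
  le_ncard_E := h.le_ncard_same
  ncard_not_E_x_le := hx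

theorem IsClustered.exists_rainbow [Finite α] (h : IsClustered E sideA sideB n s)
    (h' : IsClustered (flip E) sideB sideA n s) (hE : IsDirac E n) (hs : 1 ≤ s)
    (hsn : 10 ^ 6 * s ≤ n) (hks : 1003 * k ≤ s / 2)
    (hk : {a | sideA a = true}.ncard = {b | sideB b = true}.ncard + k)
    (hcrossA : k ≠ 0 → ∀ a, sideA a = true → {b | sideB b = false ∧ E a b}.ncard ≤ 60 * s)
    (hcrossB : k ≠ 0 → ∀ b, sideB b = false → {a | sideA a = true ∧ E a b}.ncard ≤ 60 * s)
    {χ : α × β → κ} (hχ : ∀ c, {e | E e.1 e.2 ∧ χ e = c}.ncard ≤ s / 1000) :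
    ∃ σ : α ≃ β, (∀ a, E a (σ a)) ∧ Function.Injective fun a ↦ χ (a, σ a) := by
  obtain ⟨x, y, hxy, hrainbow⟩ := hE.exists_rainbow_crossing_matching (by linarith) hsn hk
    (by linarith [h'.le_ncard_side true]) (by linarith [h.le_ncard_side false])
    hcrossA hcrossB hχ
  have hk0 (p : Fin k × Fin 1003) : k ≠ 0 := fun hk ↦ (hk ▸ p.1).elim0
  have hcard : (Nat.card (Fin k × Fin 1003) : ℝ) ≤ s / 2 := by
    simpa [mul_comm] using hks
  refine TwoClusterGraph.IsBiregular.exists_rainbow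
    (G := TwoClusterGraph.ofCrossing E sideA sideB s x y hxy) (N := n) (s := s)
    ⟨h.isRegular_ofCrossing h' hxy hcard fun p ↦ ?_, ?_, hs, hsn⟩ (Nat.card_fin _) ?_ ?_ ?_
    (fun p ↦ (hxy p).2.2) hχ hrainbow
  · linarith [h.ncard_not_le_of_crossing hE (hcrossA (hk0 p) (x p) (hxy p).1)]
  · rw [TwoClusterGraph.dual_ofCrossing]
    refine h'.not.isRegular_ofCrossing h.not _ hcard fun p ↦ ?_
    have := h'.not.ncard_not_le_of_crossing hE.flip (a := y p)
      (by simpa [flip] using hcrossB (hk0 p) (y p) (hxy p).2.1)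
    linarith
  · rw [Nat.card_fin]; linarith
  · rwa [Nat.card_fin]
  · rw [Nat.card_fin]
    have := ncard_eq_true_add_ncard_eq_false sideA
    have := ncard_eq_true_add_ncard_eq_false sideB
    have := hE.card_left.trans hE.card_right.symm
    change {b | sideB b = false}.ncard = {a | sideA a = false}.ncard + k
    lia

end Clusters

/-! ### Balancing the clusters -/

section NearlySplit

variable {α β : Type*} {E : α → β → Prop} {n : ℕ} {r m m' d d' s : ℝ}
  {pA qA : α → Bool} {pB qB : β → Bool}

/-- The graph `E` is close to the disjoint union of two balanced complete bipartite graphs, of which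
`pA` and `pB` are the indicator functions: the classes have size close to `n / 2`, and few edges
inside the classes are missing. -/
structure IsNearlySplit (E : α → β → Prop) (pA : α → Bool) (pB : β → Bool) (n : ℕ) (r : ℝ) :
    Prop where
  abs_ncard_left_sub_le (c : Bool) : |({a | pA a = c}.ncard : ℝ) - n / 2| ≤ r
  abs_ncard_right_sub_le (c : Bool) : |({b | pB b = c}.ncard : ℝ) - n / 2| ≤ r
  ncard_nonedge_le : {e : α × β | pA e.1 = pB e.2 ∧ ¬ E e.1 e.2}.ncard ≤ r * n

theorem IsNearlySplit.flip (h : IsNearlySplit E pA pB n r) : IsNearlySplit (flip E) pB pA n r where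
  abs_ncard_left_sub_le := h.abs_ncard_right_sub_le
  abs_ncard_right_sub_le := h.abs_ncard_left_sub_le
  ncard_nonedge_le := by
    have := h.ncard_nonedge_le
    rw [← ncard_preimage_swap] at this
    simpa only [Set.preimage_ofPred_eq, Prod.fst_swap, Prod.snd_swap, _root_.flip, eq_comm]
      using this

theorem ncard_and_le_add_ncard_ne [Finite α] {p q : α → Bool} (P : α → Prop) (c : Bool) :
    ({a | c = p a ∧ P a}.ncard : ℝ) ≤ {a | c = q a ∧ P a}.ncard + {a | p a ≠ q a}.ncard :=
  cast_ncard_le_add_of_subset_union fun a ⟨hac, ha⟩ ↦ by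
    by_cases hpq : p a = q a
    · exact .inl ⟨hac.trans hpq, ha⟩
    · exact .inr hpq

/-- `qA` differs from `pA` at no more than `m` vertices, and assigns each vertex to a class of `pB`
in which it has at least `d` neighbours. -/
structure IsReassignment (E : α → β → Prop) (pA qA : α → Bool) (pB : β → Bool) (m d : ℝ) :
    Prop where
  ncard_ne_le : {a | qA a ≠ pA a}.ncard ≤ m
  le_ncard_same (a : α) : d ≤ {b | qA a = pB b ∧ E a b}.ncard

namespace IsReassignment

theorem mono (h : IsReassignment E pA qA pB m d) (hm : m ≤ m') (hd : d' ≤ d) :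
    IsReassignment E pA qA pB m' d' :=
  ⟨h.ncard_ne_le.trans hm, fun a ↦ hd.trans (h.le_ncard_same a)⟩

theorem update [DecidableEq α] [Finite α] (h : IsReassignment E pA qA pB m d) {a : α} {c : Bool}
    (ha : d ≤ {b | c = pB b ∧ E a b}.ncard) :
    IsReassignment E pA (Function.update qA a c) pB (m + 1) d where
  ncard_ne_le := by
    have hsub : {a' | Function.update qA a c a' ≠ pA a'} ⊆ {a' | qA a' ≠ pA a'} ∪ {a} :=
      fun a' ha' ↦ by
        rcases eq_or_ne a' a with rfl | hne
        · exact .inr rfl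
        · exact .inl (by simpa [hne] using ha')
    have := cast_ncard_le_add_of_subset_union hsub
    rw [Set.ncard_singleton, Nat.cast_one] at this
    linarith [h.ncard_ne_le]
  le_ncard_same a' := by
    rcases eq_or_ne a' a with rfl | hne
    · simpa using ha
    · simpa [hne] using h.le_ncard_same a'

theorem ncard_le [Finite α] (h : IsReassignment E pA qA pB m d) (P : α → Prop) (c : Bool) :
    {a | c = qA a ∧ P a}.ncard ≤ ({a | c = pA a ∧ P a}.ncard : ℝ) + m := by
  linarith [ncard_and_le_add_ncard_ne (p := qA) (q := pA) P c, h.ncard_ne_le]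

theorem le_ncard [Finite α] (h : IsReassignment E pA qA pB m d) (P : α → Prop) (c : Bool) :
    ({a | c = pA a ∧ P a}.ncard : ℝ) - m ≤ {a | c = qA a ∧ P a}.ncard := by
  have := ncard_and_le_add_ncard_ne (p := pA) (q := qA) P c
  simp only [ne_comm (a := pA _)] at this
  linarith [h.ncard_ne_le]

end IsReassignment

variable [Finite α] [Finite β]

theorem IsNearlySplit.ncard_le_of_forall_le_ncard_not (h : IsNearlySplit E pA pB n r) {X : Set α}
    (hd : 0 < d) (hX : ∀ a ∈ X, d ≤ {b | pA a = pB b ∧ ¬ E a b}.ncard) :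
    X.ncard ≤ r * n / d := by
  rw [le_div_iff₀ hd]
  exact (ncard_mul_le_ncard hX).trans
    ((Nat.cast_le.2 (Set.ncard_le_ncard fun e he ↦ he.2)).trans h.ncard_nonedge_le)

theorem IsNearlySplit.exists_isReassignment (h : IsNearlySplit E pA pB n r) (hE : IsDirac E n)
    (hn : 0 < n) (hr : 20 * r ≤ n) : ∃ qA, IsReassignment E pA qA pB (5 * r) (n / 4) := by
  classical
  have hdeg (a : α) (c : Bool) :
      (n / 2 : ℝ) ≤ {b | c = pB b ∧ E a b}.ncard + {b | (!c) = pB b ∧ E a b}.ncard :=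
    (hE.le_degree_left a).trans <| cast_ncard_le_add_of_subset_union fun b hb ↦
      (em (c = pB b)).imp (⟨·, hb⟩) fun hc ↦ ⟨Bool.not_eq.2 hc, hb⟩
  let X : Set α := {a | ({b | pA a = pB b ∧ E a b}.ncard : ℝ) < n / 4}
  have hX : X.ncard ≤ 5 * r := by
    refine (h.ncard_le_of_forall_le_ncard_not (d := n / 5) (by positivity) fun a ha ↦ ?_).trans_eq
      (by field_simp)
    have hsub : {b | pB b = pA a} ⊆
        {b | pA a = pB b ∧ E a b} ∪ {b | pA a = pB b ∧ ¬ E a b} := fun b hb ↦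
      (em (E a b)).imp (⟨hb.symm, ·⟩) (⟨hb.symm, ·⟩)
    linarith [Set.mem_ofPred_eq ▸ ha, cast_ncard_le_add_of_subset_union hsub,
      (abs_le.1 (h.abs_ncard_right_sub_le (pA a))).1]
  refine ⟨fun a ↦ if a ∈ X then !pA a else pA a, ?_, fun a ↦ ?_⟩
  · have hsub : {a | (if a ∈ X then !pA a else pA a) ≠ pA a} ⊆ X := fun a ha ↦
      by_contra fun haX ↦ ha (if_neg haX)
    exact (Nat.cast_le.2 (Set.ncard_le_ncard hsub)).trans hX
  · split_ifs with haX
    · linarith [hdeg a (pA a), Set.mem_ofPred_eq ▸ haX]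
    · exact not_lt.1 haX

theorem IsReassignment.isClustered (hA : IsReassignment E pA qA pB m (50 * s))
    (hB : IsReassignment (flip E) pB qB pA m (50 * s)) (h : IsNearlySplit E pA pB n r)
    (hs : 0 < s) (hms : r + m ≤ s) (hrs : m + r * n / s ≤ s / 2) : IsClustered E qA qB n s where
  le_ncard_side c := by
    have := hB.le_ncard (fun _ ↦ True) c
    simp only [and_true, eq_comm (a := c)] at this
    linarith [(abs_le.1 (h.abs_ncard_right_sub_le c)).1]
  ncard_side_le c := by
    have := hB.ncard_le (fun _ ↦ True) c
    simp only [and_true, eq_comm (a := c)] at this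
    linarith [(abs_le.1 (h.abs_ncard_right_sub_le c)).2]
  ncard_atypical_le := by
    have hmany := h.ncard_le_of_forall_le_ncard_not
      (X := {a | s ≤ ({b | pA a = pB b ∧ ¬ E a b}.ncard : ℝ)}) hs fun a ha ↦ ha
    have hsub : {a | 2 * s < ({b | qA a = qB b ∧ ¬ E a b}.ncard : ℝ)} ⊆
        {a | qA a ≠ pA a} ∪ {a | s ≤ ({b | pA a = pB b ∧ ¬ E a b}.ncard : ℝ)} := fun a ha ↦ by
      refine or_iff_not_imp_left.2 fun hqa ↦ ?_
      have hqa : qA a = pA a := not_not.1 hqa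
      have hnot := hB.ncard_le (fun b ↦ ¬ E a b) (qA a)
      rw [Set.mem_ofPred_eq] at ha ⊢
      rw [← hqa]
      linarith
    linarith [cast_ncard_le_add_of_subset_union hsub, hA.ncard_ne_le]
  le_ncard_same a := by
    have hr := (abs_nonneg _).trans (h.abs_ncard_left_sub_le true)
    linarith [hB.le_ncard (fun b ↦ E a b) (qA a), hA.le_ncard_same a]

theorem ncard_update_false_eq_true_add_one [DecidableEq α] {a : α} (ha : pA a = true) :
    {a' | Function.update pA a false a' = true}.ncard + 1 = {a' | pA a' = true}.ncard := by
  rw [← Set.ncard_sdiff_singleton_add_one (s := {a' | pA a' = true}) ha]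
  congr 2
  ext a'
  rcases eq_or_ne a' a with rfl | hne <;> simp [*]

theorem IsReassignment.exists_balanced {k : ℕ} (hA : IsReassignment E pA qA pB m d)
    (hB : IsReassignment (flip E) pB qB pA m d)
    (hk : {a | qA a = true}.ncard = {b | qB b = true}.ncard + k) :
    ∃ qA' qB', IsReassignment E pA qA' pB (m + k) d ∧
      IsReassignment (flip E) pB qB' pA (m + k) d ∧
      ∃ k' ≤ k, {a | qA' a = true}.ncard = {b | qB' b = true}.ncard + k' ∧
        (k' ≠ 0 → ∀ a, qA' a = true → {b | false = pB b ∧ E a b}.ncard < d) ∧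
        (k' ≠ 0 → ∀ b, qB' b = false → {a | true = pA a ∧ E a b}.ncard < d) := by
  classical
  induction k generalizing qA qB m with
  | zero => exact ⟨qA, qB, by simpa, by simpa, 0, le_rfl, hk, by simp, by simp⟩
  | succ k ih =>
    have hm : m + 1 + k = m + (k + 1 : ℕ) := by push_cast; ring
    by_cases hmoveA : ∃ a, qA a = true ∧ d ≤ {b | false = pB b ∧ E a b}.ncard
    · obtain ⟨a, ha, had⟩ := hmoveA
      have hcard := ncard_update_false_eq_true_add_one ha
      obtain ⟨qA', qB', hA', hB', k', hk', h⟩ := ih (hA.update had) (hB.mono (by simp) le_rfl)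
        (by lia)
      exact ⟨qA', qB', hm ▸ hA', hm ▸ hB', k', hk'.trans k.le_succ, h⟩
    by_cases hmoveB : ∃ b, qB b = false ∧ d ≤ {a | true = pA a ∧ E a b}.ncard
    · obtain ⟨b, hb, hbd⟩ := hmoveB
      have hcard := ncard_update_false_eq_true_add_one (Function.update_self b true qB)
      rw [Function.update_idem, ← hb, Function.update_eq_self] at hcard
      obtain ⟨qA', qB', hA', hB', k', hk', h⟩ := ih (hA.mono (by simp) le_rfl) (hB.update hbd)
        (by lia)
      exact ⟨qA', qB', hm ▸ hA', hm ▸ hB', k', hk'.trans k.le_succ, h⟩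
    push Not at hmoveA hmoveB
    have hmono : m ≤ m + (k + 1 : ℕ) := le_add_of_nonneg_right (Nat.cast_nonneg _)
    exact ⟨qA, qB, hA.mono hmono le_rfl, hB.mono hmono le_rfl, k + 1, le_rfl, hk, fun _ ↦ hmoveA,
      fun _ ↦ hmoveB⟩

theorem IsReassignment.exists_rainbow {κ : Type*} {k : ℕ}
    (hA : IsReassignment E pA qA pB m (50 * s)) (hB : IsReassignment (flip E) pB qB pA m (50 * s))
    (h : IsNearlySplit E pA pB n r) (hE : IsDirac E n)
    (hk : {a | qA a = true}.ncard = {b | qB b = true}.ncard + k)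
    (hs : 1 ≤ s) (hsn : 10 ^ 6 * s ≤ n) (hms : r + (m + k) ≤ s)
    (hrs : m + k + r * n / s ≤ s / 2) (hks : 1003 * k ≤ s / 2)
    {χ : α × β → κ} (hχ : ∀ c, {e | E e.1 e.2 ∧ χ e = c}.ncard ≤ s / 1000) :
    ∃ σ : α ≃ β, (∀ a, E a (σ a)) ∧ Function.Injective fun a ↦ χ (a, σ a) := by
  obtain ⟨qA', qB', hA', hB', k', hk', himb, hcrossA, hcrossB⟩ := hA.exists_balanced hB hk
  have hs0 : 0 < s := by linarith
  have hr := (abs_nonneg _).trans (h.abs_ncard_left_sub_le true)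
  have hk'' : (k' : ℝ) ≤ k := Nat.cast_le.2 hk'
  refine (hA'.isClustered hB' h hs0 hms hrs).exists_rainbow (hB'.isClustered hA' h.flip hs0 hms hrs)
    hE hs hsn (by linarith) himb (fun hk0 a ha ↦ ?_) (fun hk0 b hb ↦ ?_) hχ
  · have := hB'.ncard_le (fun b ↦ E a b) false
    simp only [eq_comm (b := qB' _)] at this
    linarith [hcrossA hk0 a ha]
  · have := hA'.ncard_le (fun a ↦ E a b) true
    simp only [eq_comm (b := qA' _)] at this
    linarith [hcrossB hk0 b hb]

theorem IsReassignment.exists_rainbow_of_ncard_le {κ : Type*}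
    (hA : IsReassignment E pA qA pB (5 * r) (n / 4))
    (hB : IsReassignment (flip E) pB qB pA (5 * r) (n / 4))
    (h : IsNearlySplit E pA pB n r) (hE : IsDirac E n)
    (hle : {b | qB b = true}.ncard ≤ {a | qA a = true}.ncard)
    (hn : 10 ^ 6 ≤ n) (hr : 10 ^ 13 * r ≤ n)
    {χ : α × β → κ} (hχ : ∀ c, {e | E e.1 e.2 ∧ χ e = c}.ncard ≤ (n / 10 ^ 9 : ℝ)) :
    ∃ σ : α ≃ β, (∀ a, E a (σ a)) ∧ Function.Injective fun a ↦ χ (a, σ a) := by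
  obtain ⟨k, hk⟩ := Nat.exists_eq_add_of_le hle
  have hn' : (10 ^ 6 : ℝ) ≤ n := mod_cast hn
  have hk12 : (k : ℝ) ≤ 12 * r := by
    have hqA := hA.ncard_le (fun _ ↦ True) true
    have hqB := hB.le_ncard (fun _ ↦ True) true
    simp only [and_true, eq_comm (a := true)] at hqA hqB
    have hk' : ({a | qA a = true}.ncard : ℝ) = {b | qB b = true}.ncard + k := mod_cast hk
    linarith [(abs_le.1 (h.abs_ncard_left_sub_le true)).2,
      (abs_le.1 (h.abs_ncard_right_sub_le true)).1]
  have hdiv : r * n / (n / 10 ^ 6) = 10 ^ 6 * r := by field_simp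
  refine (hA.mono le_rfl ?_).exists_rainbow (s := n / 10 ^ 6) (hB.mono le_rfl ?_) h hE hk
    ?_ ?_ ?_ ?_ ?_ fun c ↦ (hχ c).trans_eq (by ring)
  all_goals linarith

theorem IsNearlySplit.exists_rainbow {κ : Type*} (h : IsNearlySplit E pA pB n r) (hE : IsDirac E n)
    (hn : 10 ^ 6 ≤ n) (hr : 10 ^ 13 * r ≤ n)
    {χ : α × β → κ} (hχ : ∀ c, {e | E e.1 e.2 ∧ χ e = c}.ncard ≤ (n / 10 ^ 9 : ℝ)) :
    ∃ σ : α ≃ β, (∀ a, E a (σ a)) ∧ Function.Injective fun a ↦ χ (a, σ a) := by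
  have hr0 := (abs_nonneg _).trans (h.abs_ncard_left_sub_le true)
  obtain ⟨qA, hA⟩ := h.exists_isReassignment hE (by lia) (by linarith [hr0])
  obtain ⟨qB, hB⟩ := h.flip.exists_isReassignment hE.flip (by lia) (by linarith [hr0])
  rcases le_total {b | qB b = true}.ncard {a | qA a = true}.ncard with hle | hle
  · exact hA.exists_rainbow_of_ncard_le hB h hE hle hn hr hχ
  · have hχ' (c : κ) : {e : β × α | E e.2 e.1 ∧ χ e.swap = c}.ncard ≤ (n / 10 ^ 9 : ℝ) :=
      (congrArg Nat.cast (ncard_preimage_swap {e | E e.1 e.2 ∧ χ e = c})).trans_le (hχ c)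
    obtain ⟨σ, hσE, hσ⟩ := hB.exists_rainbow_of_ncard_le (χ := fun e ↦ χ e.swap) hA h.flip hE.flip
      hle hn hr hχ'
    refine ⟨σ.symm, fun a ↦ ?_, fun a a' haa' ↦ σ.symm.injective (hσ ?_)⟩
    · simpa only [_root_.flip, σ.apply_symm_apply] using hσE (σ.symm a)
    · simpa only [Prod.swap_prod_mk, σ.apply_symm_apply] using haa'

theorem ncard_not_le_of_forall_le_ncard {X : Set α} {Y : Set β}
    (h : ∀ a ∈ X, d ≤ {b | E a b}.ncard) :
    ({e : α × β | (e.1 ∈ X ∧ e.2 ∈ Y) ∧ ¬ E e.1 e.2}.ncard : ℝ) ≤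
      X.ncard * (Y.ncard - d) + {e : α × β | e.1 ∈ X ∧ e.2 ∉ Y ∧ E e.1 e.2}.ncard := by
  have hedges : {e : α × β | e.1 ∈ X ∧ E e.1 e.2} ⊆
      {e | (e.1 ∈ X ∧ e.2 ∈ Y) ∧ E e.1 e.2} ∪ {e | e.1 ∈ X ∧ e.2 ∉ Y ∧ E e.1 e.2} :=
    fun e he ↦ (em (e.2 ∈ Y)).imp (⟨⟨he.1, ·⟩, he.2⟩) (⟨he.1, ·, he.2⟩)
  have hprod : {e : α × β | (e.1 ∈ X ∧ e.2 ∈ Y) ∧ E e.1 e.2}.ncard +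
      {e : α × β | (e.1 ∈ X ∧ e.2 ∈ Y) ∧ ¬ E e.1 e.2}.ncard = X.ncard * Y.ncard := by
    rw [← Set.ncard_prod, ← Set.ncard_inter_add_ncard_sdiff_eq_ncard (X ×ˢ Y) {e | E e.1 e.2}]
    rfl
  have hprod' : ({e : α × β | (e.1 ∈ X ∧ e.2 ∈ Y) ∧ E e.1 e.2}.ncard : ℝ) +
      {e : α × β | (e.1 ∈ X ∧ e.2 ∈ Y) ∧ ¬ E e.1 e.2}.ncard = X.ncard * Y.ncard := mod_cast hprod
  linarith [ncard_mul_le_ncard h, cast_ncard_le_add_of_subset_union hedges]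

theorem IsDirac.ncard_class_not_le (hE : IsDirac E n) {X : Set α} {Y : Set β} {δ : ℝ}
    (hY : |(Y.ncard : ℝ) - n / 2| ≤ δ) :
    ({e : α × β | (e.1 ∈ X ∧ e.2 ∈ Y) ∧ ¬ E e.1 e.2}.ncard : ℝ) ≤
      n * δ + {e : α × β | e.1 ∈ X ∧ e.2 ∉ Y ∧ E e.1 e.2}.ncard := by
  have hX : (X.ncard : ℝ) ≤ n := mod_cast hE.card_left ▸ Set.ncard_le_card X
  refine (ncard_not_le_of_forall_le_ncard fun a _ ↦ hE.le_degree_left a).trans ?_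
  gcongr ?_ + _
  calc (X.ncard * (Y.ncard - n / 2) : ℝ) ≤ X.ncard * δ := by gcongr; exact (abs_le.1 hY).2
    _ ≤ n * δ := mul_le_mul_of_nonneg_right hX ((abs_nonneg _).trans hY)

theorem IsDirac.isNearlySplit (hE : IsDirac E n) {ε : ℝ}
    (hA : |({a | pA a = true}.ncard : ℝ) - {a | pA a = false}.ncard| ≤ ε * n)
    (hB : |({b | pB b = true}.ncard : ℝ) - {b | pB b = false}.ncard| ≤ ε * n)
    (hcross : ({e : α × β | pA e.1 = true ∧ pB e.2 = false ∧ E e.1 e.2}.ncard : ℝ) ≤ ε * n ^ 2) :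
    IsNearlySplit E pA pB n (3 * ε * n) := by
  have hεn := (abs_nonneg _).trans hA
  have hA' := abs_ncard_eq_sub_le hA
  have hB' := abs_ncard_eq_sub_le hB
  rw [hE.card_left] at hA'
  rw [hE.card_right] at hB'
  refine ⟨fun c ↦ (hA' c).trans (by linarith), fun c ↦ (hB' c).trans (by linarith), ?_⟩
  have htrue := hE.ncard_class_not_le (X := {a | pA a = true}) (hB' true)
  have hfalse := hE.flip.ncard_class_not_le (X := {b | pB b = false}) (hA' false)
  rw [← ncard_preimage_swap, ← ncard_preimage_swap {e : β × α | _ ∧ _ ∧ _}] at hfalse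
  simp only [Set.preimage_ofPred_eq, Prod.fst_swap, Prod.snd_swap, Set.mem_ofPred_eq,
    Bool.not_eq_true, Bool.not_eq_false, _root_.flip, and_left_comm (a := pB _ = false)]
    at htrue hfalse
  have hsub : {e : α × β | pA e.1 = pB e.2 ∧ ¬ E e.1 e.2} ⊆
      {e | (pA e.1 = true ∧ pB e.2 = true) ∧ ¬ E e.1 e.2} ∪
        {e | (pB e.2 = false ∧ pA e.1 = false) ∧ ¬ E e.1 e.2} := fun e ⟨he, hne⟩ ↦ by
    rcases h : pA e.1
    · exact .inr ⟨⟨he ▸ h, h⟩, hne⟩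
    · exact .inl ⟨⟨h, he ▸ h⟩, hne⟩
  calc ({e : α × β | pA e.1 = pB e.2 ∧ ¬ E e.1 e.2}.ncard : ℝ)
      ≤ (n * (ε * n / 2) + ε * n ^ 2) + (n * (ε * n / 2) + ε * n ^ 2) := by
        linarith [cast_ncard_le_add_of_subset_union hsub]
    _ = 3 * ε * n * n := by ring

end NearlySplit

section Transfer

variable {V κ : Type*} {G : SimpleGraph V} {A B : Set V} {n : ℕ} {ε : ℝ}

/-- The spanning subgraph of `G` formed by the edges that join each vertex `a` of `A` to `σ a`. -/
def equivSubgraph (σ : A ≃ B) (hσ : ∀ a : A, G.Adj a (σ a)) : G.Subgraph where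
  verts := Set.univ
  Adj u v := ∃ a : A, s((a : V), (σ a : V)) = s(u, v)
  adj_sub := fun ⟨a, ha⟩ ↦ G.mem_edgeSet.1 (ha ▸ hσ a)
  edge_vert _ := Set.mem_univ _
  symm := ⟨fun _ _ ⟨a, ha⟩ ↦ ⟨a, ha.trans Sym2.eq_swap⟩⟩

theorem edgeSet_equivSubgraph (σ : A ≃ B) (hσ : ∀ a : A, G.Adj a (σ a)) :
    (equivSubgraph σ hσ).edgeSet = Set.range fun a : A ↦ s((a : V), (σ a : V)) := by
  ext e
  cases e
  rfl

theorem isPerfectMatching_equivSubgraph (hAB : A ∪ B = Set.univ) (hdisj : Disjoint A B)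
    (σ : A ≃ B) (hσ : ∀ a : A, G.Adj a (σ a)) : (equivSubgraph σ hσ).IsPerfectMatching := by
  rw [SimpleGraph.Subgraph.isPerfectMatching_iff]
  intro v
  rcases hAB.symm ▸ Set.mem_univ v with hv | hv
  · refine ⟨σ ⟨v, hv⟩, ⟨⟨v, hv⟩, rfl⟩, fun w ⟨a, ha⟩ ↦ ?_⟩
    rcases Sym2.eq_iff.1 ha with ⟨rfl, rfl⟩ | ⟨-, rfl⟩
    · rfl
    · exact (hdisj.ne_of_mem hv (σ a).2 rfl).elim
  · obtain ⟨a, ha⟩ := σ.surjective ⟨v, hv⟩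
    obtain rfl : σ a = v := congrArg Subtype.val ha
    refine ⟨a, ⟨a, Sym2.eq_swap⟩, fun w ⟨a', ha'⟩ ↦ ?_⟩
    rcases Sym2.eq_iff.1 ha' with ⟨h, -⟩ | ⟨rfl, h⟩
    · exact (hdisj.ne_of_mem a'.2 hv h).elim
    · rw [σ.injective (Subtype.ext h)]

theorem ncard_coe_mem {s t : Set V} (h : t ⊆ s) : {x : s | (x : V) ∈ t}.ncard = t.ncard :=
  Set.ncard_preimage_of_injective_subset_range Subtype.val_injective (by simpa using h)

theorem isDirac_adj (hG : G.IsBipartiteWith A B) (hA : A.ncard = n) (hB : B.ncard = n)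
    (hdeg : ∀ v, (n : ℝ) / 2 ≤ (G.neighborSet v).ncard) :
    IsDirac (fun (a : A) (b : B) ↦ G.Adj a b) n where
  card_left := hA
  card_right := hB
  le_degree_left a :=
    (hdeg a).trans_eq (congrArg Nat.cast (ncard_coe_mem
      (SimpleGraph.isBipartiteWith_neighborSet_subset hG a.2)).symm)
  le_degree_right b := by
    simp_rw [G.adj_comm _ (b : V)]
    exact (hdeg b).trans_eq (congrArg Nat.cast (ncard_coe_mem
      (SimpleGraph.isBipartiteWith_neighborSet_subset hG.symm b.2)).symm)

variable [Finite V]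

theorem EpsExtremal.exists_isNearlySplit (h : EpsExtremal G A B n ε)
    (hE : IsDirac (fun (a : A) (b : B) ↦ G.Adj a b) n) :
    ∃ pA pB, IsNearlySplit (fun (a : A) (b : B) ↦ G.Adj a b) pA pB n (3 * ε * n) := by
  classical
  obtain ⟨A₁, A₂, B₁, B₂, rfl, hA, rfl, hB, hAcard, hBcard, hcross⟩ := h
  have hA₂ (a : ↥(A₁ ∪ A₂)) : (a : V) ∉ A₁ ↔ (a : V) ∈ A₂ :=
    ⟨a.2.resolve_left, fun h h' ↦ hA.ne_of_mem h' h rfl⟩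
  have hB₂ (b : ↥(B₁ ∪ B₂)) : (b : V) ∉ B₁ ↔ (b : V) ∈ B₂ :=
    ⟨b.2.resolve_left, fun h h' ↦ hB.ne_of_mem h' h rfl⟩
  refine ⟨fun a ↦ a ∈ A₁, fun b ↦ b ∈ B₁, hE.isNearlySplit ?_ ?_ ?_⟩
  · simpa only [decide_eq_true_eq, decide_eq_false_iff_not, hA₂,
      ncard_coe_mem Set.subset_union_left, ncard_coe_mem Set.subset_union_right] using hAcard
  · simpa only [decide_eq_true_eq, decide_eq_false_iff_not, hB₂,
      ncard_coe_mem Set.subset_union_left, ncard_coe_mem Set.subset_union_right] using hBcard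
  · simp only [decide_eq_true_eq, decide_eq_false_iff_not, hB₂]
    refine le_trans (Nat.cast_le.2 ?_) hcross
    exact Set.ncard_le_ncard_of_injOn (Prod.map (↑) (↑)) (fun _ he ↦ he)
      (Subtype.val_injective.prodMap Subtype.val_injective).injOn

theorem ncard_adj_and_color_eq_le (hdisj : Disjoint A B) (χ : Sym2 V → κ) (c : κ) :
    {e : A × B | G.Adj e.1 e.2 ∧ χ s(↑e.1, ↑e.2) = c}.ncard ≤
      {e | e ∈ G.edgeSet ∧ χ e = c}.ncard := by
  refine Set.ncard_le_ncard_of_injOn (fun e ↦ s(↑e.1, ↑e.2)) (fun _ he ↦ he) ?_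
  rintro ⟨a, b⟩ - ⟨a', b'⟩ - h
  rcases Sym2.eq_iff.1 h with ⟨ha, hb⟩ | ⟨ha, -⟩
  · exact Prod.ext (Subtype.ext ha) (Subtype.ext hb)
  · exact (hdisj.ne_of_mem a.2 b'.2 ha).elim

theorem rainbow_PM_in_extremal_general (hn : 10 ^ 6 ≤ n) (hε : ε ≤ 1 / 10 ^ 14)
    (hAB : A ∪ B = Set.univ) (hG : G.IsBipartiteWith A B) (hA : A.ncard = n) (hB : B.ncard = n)
    (hdeg : ∀ v, (n : ℝ) / 2 ≤ (G.neighborSet v).ncard) (hext : EpsExtremal G A B n ε)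
    {χ : Sym2 V → κ} (hχ : ∀ c, {e | e ∈ G.edgeSet ∧ χ e = c}.ncard ≤ (n / 10 ^ 9 : ℝ)) :
    ∃ M : G.Subgraph, M.IsPerfectMatching ∧ Set.InjOn χ M.edgeSet := by
  have hE := isDirac_adj hG hA hB hdeg
  obtain ⟨pA, pB, hsplit⟩ := hext.exists_isNearlySplit hE
  have hr : 10 ^ 13 * (3 * ε * n) ≤ n := by
    nlinarith [mul_le_mul_of_nonneg_right hε n.cast_nonneg]
  obtain ⟨σ, hσ, hχσ⟩ := hsplit.exists_rainbow hE hn hr (χ := fun e ↦ χ s(↑e.1, ↑e.2)) fun c ↦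
    (Nat.cast_le.2 (ncard_adj_and_color_eq_le hG.disjoint χ c)).trans (hχ c)
  refine ⟨equivSubgraph σ hσ, isPerfectMatching_equivSubgraph hAB hG.disjoint σ hσ, ?_⟩
  rw [edgeSet_equivSubgraph]
  rintro _ ⟨a, rfl⟩ _ ⟨a', rfl⟩ h
  rw [hχσ h]

end Transfer

/-- there is ε₀ ∈ (0,1) such that for every ε ∈ (0,ε₀] there are μ > 0 and
n₀ such that for every n ≥ n₀: every μn-bounded edge colouring of an ε-extremal Dirac
bipartite graph on 2n vertices contains a rainbow perfect matching. -/
theorem rainbow_PM_in_extremal :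
    ∃ ε₀ ∈ Set.Ioo (0 : ℝ) 1, ∀ ε ∈ Set.Ioc (0 : ℝ) ε₀,
    ∃ μ : ℝ, 0 < μ ∧ ∃ n₀ : ℕ, ∀ n : ℕ, n₀ ≤ n →
      ∀ (V : Type) [Fintype V] (G : SimpleGraph V) (A B : Set V),
        A ∪ B = Set.univ → Disjoint A B → A.ncard = n → B.ncard = n →
        (∀ u v : V, G.Adj u v → (u ∈ A ∧ v ∈ B) ∨ (u ∈ B ∧ v ∈ A)) →
        (∀ v : V, (n : ℝ) / 2 ≤ ((G.neighborSet v).ncard : ℝ)) →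
        EpsExtremal G A B n ε →
        ∀ χ : Sym2 V → ℕ,
          (∀ c : ℕ, (({e : Sym2 V | e ∈ G.edgeSet ∧ χ e = c}).ncard : ℝ) ≤ μ * n) →
          ∃ M : G.Subgraph, M.IsPerfectMatching ∧
            ∀ e ∈ M.edgeSet, ∀ f ∈ M.edgeSet, χ e = χ f → e = f := by
  refine ⟨1 / 10 ^ 14, by norm_num, fun ε hε ↦ ⟨1 / 10 ^ 9, by norm_num, 10 ^ 6, ?_⟩⟩
  intro n hn V _ G A B hAB hdisj hA hB hG hdeg hext χ hχ
  exact rainbow_PM_in_extremal_general hn hε.2 hAB ⟨hdisj, fun u v ↦ hG u v⟩ hA hB hdeg hext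
    fun c ↦ (hχ c).trans_eq (by ring)
end

section
/- For every positive integer t there exist a Dirac bipartite graph G on 2n vertices, where n = 4t(t+1), and an edge colouring χ of G that is (t+1)²-bounded (note (t+1)² = ((t+1)/(4t))·n), such that G contains no perfect matching that is rainbow with respect to χ. -/
/-!
Split each part of size `n = 4t(t+1)` into `k = 2t+1` blocks of size `m = t+1` and an exceptional
class of size `r = n - km`. Join the `i`-th blocks of the two parts completely, join every block to
the exceptional class of the opposite part, and leave the two exceptional classes unjoined. Give the
`m²` edges between the `i`-th blocks a common colour, and every other edge a colour of its own. In a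
perfect matching at most `r` of the `km` block vertices on the left are matched into the
exceptional class; the others use edges inside the `k` block pairs, at most one per block pair if
the matching is rainbow. So a rainbow perfect matching would force `km ≤ r + k`, whereas in fact
`km = r + k + 1`.
-/

open Function

section Fibers

theorem exists_map_ncard_fiber_eq {α ι : Type*} [Finite α] [Fintype ι] (c : ι → ℕ)
    (hc : ∑ i, c i = Nat.card α) : ∃ f : α → ι, ∀ i, (f ⁻¹' {i}).ncard = c i := by
  have hcard : Nat.card α = Nat.card (Σ i, Fin (c i)) := by simp [Nat.card_eq_fintype_card, hc]
  let e := (Finite.equivFinOfCardEq hcard).trans (Finite.equivFin _).symm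
  refine ⟨fun a ↦ (e a).1, fun i ↦ ?_⟩
  have hfiber : (fun a ↦ (e a).1) ⁻¹' {i} = e ⁻¹' Set.range (Sigma.mk i) := by
    rw [Set.range_sigmaMk]
    rfl
  rw [hfiber, Set.ncard_preimage_of_injective_subset_range e.injective (by simp),
    Set.ncard_range_of_injective sigma_mk_injective, Nat.card_fin]

theorem exists_blocks_of_card_eq {α : Type*} [Finite α] {k m r : ℕ}
    (h : Nat.card α = k * m + r) :
    ∃ f : α → Option (Fin k), (∀ i, (f ⁻¹' {some i}).ncard = m) ∧
      (f ⁻¹' {none}).ncard = r ∧ (f ⁻¹' {none})ᶜ.ncard = k * m := by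
  obtain ⟨f, hf⟩ := exists_map_ncard_fiber_eq (α := α)
    (fun a : Option (Fin k) ↦ a.elim r fun _ ↦ m) (by simp [h, add_comm])
  have hnone : (f ⁻¹' {none}).ncard = r := hf none
  refine ⟨f, fun i ↦ hf (some i), hnone, ?_⟩
  rw [Set.ncard_compl, h, hnone, Nat.add_sub_cancel]

theorem ncard_fiber_comp_le {α γ δ : Type*} {s : Set α} {χ : α → γ} {ι : γ → δ} (hι : Injective ι)
    {b : ℕ} (hb : ∀ c, {a | a ∈ s ∧ χ a = c}.ncard ≤ b) (d : δ) :
    {a | a ∈ s ∧ (ι ∘ χ) a = d}.ncard ≤ b := by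
  by_cases hd : d ∈ Set.range ι
  · obtain ⟨c, rfl⟩ := hd
    simpa [hι.eq_iff] using hb c
  · have hempty : {a | a ∈ s ∧ (ι ∘ χ) a = d} = ∅ :=
      Set.eq_empty_of_forall_notMem fun a ha ↦ hd ⟨χ a, ha.2⟩
    simp only [hempty, Set.ncard_empty, zero_le]

end Fibers

section Bipartite

variable {α β : Type*} {G : SimpleGraph (α ⊕ β)}

theorem exists_eq_inl_inr_of_mem_edgeSet (hG : G ≤ completeBipartiteGraph α β)
    {e : Sym2 (α ⊕ β)} (he : e ∈ G.edgeSet) : ∃ x y, e = s(Sum.inl x, Sum.inr y) := by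
  induction e with | _ u v
  have huv := hG he
  rcases u with x | y <;> rcases v with x' | y'
  · simp at huv
  · exact ⟨x, y', rfl⟩
  · exact ⟨x', y, Sym2.eq_swap⟩
  · simp at huv

theorem exists_injective_adj_of_isPerfectMatching (hG : G ≤ completeBipartiteGraph α β)
    {M : G.Subgraph} (hM : M.IsPerfectMatching) :
    ∃ p : α → β, Injective p ∧ ∀ x, M.Adj (Sum.inl x) (Sum.inr (p x)) := by
  have hpartner (x : α) : ∃ y, M.Adj (Sum.inl x) (Sum.inr y) := by
    obtain ⟨w, hw, -⟩ := hM.1 (hM.2 (Sum.inl x))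
    rcases w with x' | y
    · exact absurd (hG hw.adj_sub) (by simp)
    · exact ⟨y, hw⟩
  choose p hp using hpartner
  refine ⟨p, fun x x' hxx' ↦ Sum.inl_injective (hM.1.eq_of_adj_right (hp x) ?_), hp⟩
  exact hxx' ▸ hp x'

end Bipartite

section LabelColoring

variable {V L : Type*} (ℓ : V → L)

open Classical in
/-- The edge colouring induced by a vertex labelling `ℓ`: an edge whose two ends have the same label
is coloured by that label (recorded as a diagonal element of `Sym2 L`), any other edge by itself. -/
noncomputable def labelColoring (e : Sym2 V) : Sym2 L ⊕ Sym2 V :=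
  if (e.map ℓ).IsDiag then Sum.inl (e.map ℓ) else Sum.inr e

variable {ℓ}

theorem labelColoring_mk_of_eq {u v : V} (h : ℓ u = ℓ v) :
    labelColoring ℓ s(u, v) = Sum.inl s(ℓ u, ℓ u) := by
  simp [labelColoring, h]

theorem labelColoring_mk_eq_inl_iff {u v : V} {a b : L} :
    labelColoring ℓ s(u, v) = Sum.inl s(a, b) ↔ (ℓ u = a ∧ ℓ v = a) ∧ a = b := by
  by_cases h : ℓ u = ℓ v
  · rw [labelColoring_mk_of_eq h]
    grind
  · have hdiag : ¬((s(u, v)).map ℓ).IsDiag := h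
    simp only [labelColoring, if_neg hdiag]
    grind

theorem eq_of_labelColoring_eq_inr {e e' : Sym2 V} (h : labelColoring ℓ e = Sum.inr e') :
    e = e' := by
  unfold labelColoring at h
  split_ifs at h
  exact Sum.inr_injective h

theorem eq_of_injOn_labelColoring {E : Set (Sym2 V)} (hE : Set.InjOn (labelColoring ℓ) E)
    {u v u' v' : V} (huv : s(u, v) ∈ E) (huv' : s(u', v') ∈ E) (h : ℓ u = ℓ v) (h' : ℓ u' = ℓ v')
    (huu' : ℓ u = ℓ u') : s(u, v) = s(u', v') :=
  hE huv huv' <| by rw [labelColoring_mk_of_eq h, labelColoring_mk_of_eq h', huu']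

end LabelColoring

section BlockGraph

variable {α β κ : Type*} {f : α → Option κ} {g : β → Option κ}

/-- Compatibility of labels, where `some i` stands for the `i`-th block and `none` for the
exceptional class: equal blocks are compatible, and so are a block and the exceptional class, but
the exceptional class is not compatible with itself. -/
def BlockCompatible (a b : Option κ) : Prop :=
  Xor (a = b) (a = none ∨ b = none)

theorem BlockCompatible.symm {a b : Option κ} (h : BlockCompatible a b) : BlockCompatible b a := by
  simpa only [BlockCompatible, eq_comm, or_comm] using h

/-- The bipartite graph on `α ⊕ β` joining `x : α` to `y : β` when their labels are compatible. -/
def blockGraph (f : α → Option κ) (g : β → Option κ) : SimpleGraph (α ⊕ β) where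
  Adj u v := (completeBipartiteGraph α β).Adj u v ∧
    BlockCompatible (Sum.elim f g u) (Sum.elim f g v)
  symm := ⟨fun _ _ h ↦ ⟨h.1.symm, h.2.symm⟩⟩
  loopless := ⟨fun _ h ↦ h.1.ne rfl⟩

theorem blockGraph_le_completeBipartiteGraph : blockGraph f g ≤ completeBipartiteGraph α β :=
  fun _ _ h ↦ h.1

theorem blockGraph_adj_inl_inr {x : α} {y : β} :
    (blockGraph f g).Adj (Sum.inl x) (Sum.inr y) ↔ BlockCompatible (f x) (g y) := by
  simp [blockGraph]

theorem neighborSet_blockGraph_inl (x : α) :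
    (blockGraph f g).neighborSet (Sum.inl x) = Sum.inr '' {y | BlockCompatible (f x) (g y)} := by
  ext (x' | y) <;> simp [blockGraph]

theorem neighborSet_blockGraph_inr (y : β) :
    (blockGraph f g).neighborSet (Sum.inr y) = Sum.inl '' {x | BlockCompatible (g y) (f x)} := by
  ext (x | y') <;> simp [blockGraph]

theorem le_ncard_setOf_blockCompatible [Finite α] {d : ℕ} (hnone : d ≤ (f ⁻¹' {none})ᶜ.ncard)
    (hsome : ∀ i, d ≤ (f ⁻¹' {some i}).ncard + (f ⁻¹' {none}).ncard) (a : Option κ) :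
    d ≤ {x | BlockCompatible a (f x)}.ncard := by
  rcases a with _ | i
  · have hset : {x | BlockCompatible none (f x)} = (f ⁻¹' {none})ᶜ := by
      ext x
      simp [BlockCompatible, Xor, eq_comm]
    rwa [hset]
  · have hset : {x | BlockCompatible (some i) (f x)} = f ⁻¹' {some i} ∪ f ⁻¹' {none} := by
      ext x
      simp only [BlockCompatible, Set.mem_union]
      grind
    have hdisj : Disjoint (f ⁻¹' {some i}) (f ⁻¹' {none}) := Disjoint.preimage f (by simp)
    rw [hset, Set.ncard_union_eq hdisj]
    exact hsome i

theorem le_ncard_neighborSet_blockGraph [Finite α] [Finite β] {d : ℕ}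
    (hfnone : d ≤ (f ⁻¹' {none})ᶜ.ncard)
    (hfsome : ∀ i, d ≤ (f ⁻¹' {some i}).ncard + (f ⁻¹' {none}).ncard)
    (hgnone : d ≤ (g ⁻¹' {none})ᶜ.ncard)
    (hgsome : ∀ i, d ≤ (g ⁻¹' {some i}).ncard + (g ⁻¹' {none}).ncard) (v : α ⊕ β) :
    d ≤ ((blockGraph f g).neighborSet v).ncard := by
  rcases v with x | y
  · rw [neighborSet_blockGraph_inl, Set.ncard_image_of_injective _ Sum.inr_injective]
    exact le_ncard_setOf_blockCompatible hgnone hgsome (f x)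
  · rw [neighborSet_blockGraph_inr, Set.ncard_image_of_injective _ Sum.inl_injective]
    exact le_ncard_setOf_blockCompatible hfnone hfsome (g y)

theorem exists_block_of_labelColoring_eq_inl {e : Sym2 (α ⊕ β)} (he : e ∈ (blockGraph f g).edgeSet)
    {a a' : Option κ} (hcol : labelColoring (Sum.elim f g) e = Sum.inl s(a, a')) :
    ∃ i x y, a = some i ∧ f x = some i ∧ g y = some i ∧ e = s(Sum.inl x, Sum.inr y) := by
  obtain ⟨x, y, rfl⟩ := exists_eq_inl_inr_of_mem_edgeSet blockGraph_le_completeBipartiteGraph he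
  obtain ⟨⟨hx : f x = a, hy : g y = a⟩, -⟩ := labelColoring_mk_eq_inl_iff.1 hcol
  have hxy : BlockCompatible (f x) (g y) := blockGraph_adj_inl_inr.1 he
  have ha : a ≠ none := by
    rintro rfl
    simp [hx, hy, BlockCompatible] at hxy
  obtain ⟨i, rfl⟩ := Option.ne_none_iff_exists'.1 ha
  exact ⟨i, x, y, rfl, hx, hy, rfl⟩

theorem ncard_blockGraph_labelColoring_le [Finite α] [Finite β] {b : ℕ} (hb : 1 ≤ b)
    (hfg : ∀ i, (f ⁻¹' {some i}).ncard * (g ⁻¹' {some i}).ncard ≤ b)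
    (c : Sym2 (Option κ) ⊕ Sym2 (α ⊕ β)) :
    {e | e ∈ (blockGraph f g).edgeSet ∧ labelColoring (Sum.elim f g) e = c}.ncard ≤ b := by
  rcases c with d | e'
  · induction d with | _ a a'
    rcases a with _ | i
    · have hempty : {e | e ∈ (blockGraph f g).edgeSet ∧
          labelColoring (Sum.elim f g) e = Sum.inl s(none, a')} = ∅ := by
        refine Set.eq_empty_of_forall_notMem fun e he ↦ ?_
        obtain ⟨_, _, _, hnone, -⟩ := exists_block_of_labelColoring_eq_inl he.1 he.2
        cases hnone
      simp [hempty]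
    · calc _ ≤ ((fun z : α × β ↦ s(Sum.inl z.1, Sum.inr z.2)) ''
            ((f ⁻¹' {some i}) ×ˢ (g ⁻¹' {some i}))).ncard := by
            refine Set.ncard_le_ncard fun e he ↦ ?_
            obtain ⟨_, x, y, ⟨⟩, hx, hy, rfl⟩ := exists_block_of_labelColoring_eq_inl he.1 he.2
            exact ⟨(x, y), ⟨hx, hy⟩, rfl⟩
        _ ≤ ((f ⁻¹' {some i}) ×ˢ (g ⁻¹' {some i})).ncard := Set.ncard_image_le
        _ ≤ b := Set.ncard_prod.trans_le (hfg i)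
  · calc _ ≤ ({e'} : Set (Sym2 (α ⊕ β))).ncard :=
          Set.ncard_le_ncard fun e he ↦ eq_of_labelColoring_eq_inr he.2
      _ ≤ b := by simpa using hb

theorem ncard_compl_le_of_rainbow_isPerfectMatching [Finite β] [Finite κ]
    {M : (blockGraph f g).Subgraph} (hM : M.IsPerfectMatching)
    (hrainbow : Set.InjOn (labelColoring (Sum.elim f g)) M.edgeSet) :
    (f ⁻¹' {none})ᶜ.ncard ≤ (g ⁻¹' {none}).ncard + Nat.card κ := by
  obtain ⟨p, hp, hadj⟩ :=
    exists_injective_adj_of_isPerfectMatching blockGraph_le_completeBipartiteGraph hM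
  have : Finite α := .of_injective p hp
  have hsplit : (f ⁻¹' {none})ᶜ ⊆
      p ⁻¹' (g ⁻¹' {none}) ∪ {x | f x ≠ none ∧ f x = g (p x)} := by
    intro x hx
    rw [Set.mem_compl_iff, Set.mem_preimage, Set.mem_singleton_iff] at hx
    have hcomp : BlockCompatible (f x) (g (p x)) := blockGraph_adj_inl_inr.1 (hadj x).adj_sub
    simp only [BlockCompatible, Xor] at hcomp
    simp only [Set.mem_union, Set.mem_preimage, Set.mem_singleton_iff, Set.mem_ofPred_eq]
    tauto
  have hexceptional : (p ⁻¹' (g ⁻¹' {none})).ncard ≤ (g ⁻¹' {none}).ncard :=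
    Set.ncard_le_ncard_of_injOn p (fun _ hx ↦ hx) hp.injOn
  have hinj : Set.InjOn f {x | f x ≠ none ∧ f x = g (p x)} := by
    intro x hx x' hx' hff
    have hedge := eq_of_injOn_labelColoring hrainbow (hadj x) (hadj x') hx.2 hx'.2 hff
    simp only [Sym2.eq_iff, Sum.inl.injEq, reduceCtorEq, false_and, or_false] at hedge
    exact hedge.1
  have hblocks : {x | f x ≠ none ∧ f x = g (p x)}.ncard ≤ Nat.card κ :=
    calc _ ≤ (Set.range (some : κ → Option κ)).ncard :=
          Set.ncard_le_ncard_of_injOn f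
            (fun x hx ↦ Option.ne_none_iff_exists.1 hx.1) hinj
      _ = Nat.card κ := Set.ncard_range_of_injective (Option.some_injective κ)
  calc (f ⁻¹' {none})ᶜ.ncard ≤ _ := Set.ncard_le_ncard hsplit
    _ ≤ _ := Set.ncard_union_le _ _
    _ ≤ _ := Nat.add_le_add hexceptional hblocks

end BlockGraph

/-- for every positive integer t there exist a Dirac bipartite graph G on
2n vertices with n = 4t(t+1) and a (t+1)²-bounded edge colouring χ of G such that G has
no perfect matching that is rainbow with respect to χ. -/
theorem no_rainbow_PM_example :
    ∀ t : ℕ, 1 ≤ t →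
      ∃ G : SimpleGraph (Fin (4 * t * (t + 1)) ⊕ Fin (4 * t * (t + 1))),
      ∃ χ : Sym2 (Fin (4 * t * (t + 1)) ⊕ Fin (4 * t * (t + 1))) → ℕ,
        -- G is bipartite with parts of size n = 4t(t+1)
        (∀ a b, ¬ G.Adj (Sum.inl a) (Sum.inl b)) ∧
        (∀ a b, ¬ G.Adj (Sum.inr a) (Sum.inr b)) ∧
        -- G is Dirac: minimum degree at least n/2
        (∀ v, ((4 * t * (t + 1) : ℕ) : ℝ) / 2 ≤ ((G.neighborSet v).ncard : ℝ)) ∧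
        -- χ is (t+1)²-bounded
        (∀ c : ℕ, ({e : Sym2 (Fin (4 * t * (t + 1)) ⊕ Fin (4 * t * (t + 1))) |
            e ∈ G.edgeSet ∧ χ e = c}).ncard ≤ (t + 1) ^ 2) ∧
        -- G has no rainbow perfect matching
        (∀ M : G.Subgraph, M.IsPerfectMatching →
          ¬ (∀ e ∈ M.edgeSet, ∀ f ∈ M.edgeSet, χ e = χ f → e = f)) := by
  intro t ht
  have hblocks : (2 * t + 1) * (t + 1) ≤ 4 * t * (t + 1) := by gcongr; lia
  obtain ⟨r, hr⟩ := Nat.exists_eq_add_of_le hblocks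
  obtain ⟨f, hsome, hnone, hcompl⟩ := exists_blocks_of_card_eq ((Nat.card_fin _).trans hr)
  obtain ⟨ι, hι⟩ := Countable.exists_injective_nat
    (Sym2 (Option (Fin (2 * t + 1))) ⊕ Sym2 (Fin (4 * t * (t + 1)) ⊕ Fin (4 * t * (t + 1))))
  refine ⟨blockGraph f f, ι ∘ labelColoring (Sum.elim f f), by simp [blockGraph],
    by simp [blockGraph], fun v ↦ ?_, ncard_fiber_comp_le hι <|
      ncard_blockGraph_labelColoring_le (Nat.one_le_pow _ _ t.succ_pos) (by simp [hsome, sq]),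
    fun M hM hrainbow ↦ ?_⟩
  · have hexceptional : 2 * t * (t + 1) ≤ (f ⁻¹' {none})ᶜ.ncard := by rw [hcompl]; gcongr; lia
    have hblock i : 2 * t * (t + 1) ≤ (f ⁻¹' {some i}).ncard + (f ⁻¹' {none}).ncard := by
      rw [hsome, hnone]; lia
    have hdeg := le_ncard_neighborSet_blockGraph hexceptional hblock hexceptional hblock v
    rw [div_le_iff₀ two_pos]
    exact_mod_cast (by lia : 4 * t * (t + 1) ≤ ((blockGraph f f).neighborSet v).ncard * 2)
  · have hcount := ncard_compl_le_of_rainbow_isPerfectMatching hM (Set.InjOn.of_comp hrainbow)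
    rw [hcompl, hnone, Nat.card_fin] at hcount
    lia
end

section
/- For every ε ∈ (0,1) there exists n₀ ∈ ℕ such that for every n ≥ n₀ the following holds: if G = (A ∪ B, E) is a balanced bipartite graph on 2n vertices with minimum degree at least (1/2 + ε)n, then G is a bipartite robust (ε/8, 1/4)-expander. -/
/-!
Let `X ⊆ A`, let `ν` be the robustness parameter and `δ = 1/2 + ε` the degree density.

If `|X| ≥ n/2`, then inside `A` the neighbourhood of each `b ∈ B` overlaps `X` in at least
`δn + |X| - n ≥ εn ≥ νn` vertices, so every vertex of `B` is a robust neighbour of `X`.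

If `|X| < n/2`, count the edges between `X` and `B`. There are at least `|X| · δn` of them, while
robust neighbours receive at most `|X|` each and the other vertices of `B` fewer than `νn` each, so
`|X| · δn ≤ |RN| · |X| + n · νn`. As `|X| ≥ τn`, dividing by `|X|` gives `|RN| ≥ (δ - ν/τ)n`, which
exceeds `|X| + νn` because `ν + ν/τ ≤ ε`.
-/

/-- The `ν`-robust neighbourhood of `X`: vertices with at least `ν n` neighbours in `X`. -/
def robustNbhd {V : Type*} (G : SimpleGraph V) (n : ℕ) (ν : ℝ) (X : Set V) : Set V :=
  {v : V | ν * n ≤ ((G.neighborSet v ∩ X).ncard : ℝ)}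

/-- Bipartite robust `(ν,τ)`-expander. -/
def BipRobustExpander {V : Type*} (G : SimpleGraph V) (A B : Set V) (n : ℕ)
    (ν τ : ℝ) : Prop :=
  ∀ X : Set V, (X ⊆ A ∨ X ⊆ B) → τ * n ≤ (X.ncard : ℝ) → (X.ncard : ℝ) ≤ (1 - τ) * n →
    (X.ncard : ℝ) + ν * n ≤ ((robustNbhd G n ν X).ncard : ℝ)

section DoubleCounting

open Finset

variable {α β R : Type*} [Semiring R] [LinearOrder R] [IsOrderedRing R]

theorem card_mul_le_card_filter_le_mul_add_card_filter_lt_mul (r : α → β → Prop)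
    [∀ a b, Decidable (r a b)] {s : Finset α} {t : Finset β} {d : R} (c : R)
    (hd : ∀ a ∈ s, d ≤ #(t.bipartiteAbove r a)) :
    #s * d ≤ #{b ∈ t | c ≤ #(s.bipartiteBelow r b)} * #s
      + #{b ∈ t | (#(s.bipartiteBelow r b) : R) < c} * c := by
  have rich_le : ∀ b ∈ ({b ∈ t | c ≤ #(s.bipartiteBelow r b)} : Finset β),
      (#(s.bipartiteBelow r b) : R) ≤ #s := fun b _ ↦
    Nat.mono_cast (card_le_card (filter_subset _ s))
  have poor_le : ∀ b ∈ ({b ∈ t | (#(s.bipartiteBelow r b) : R) < c} : Finset β),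
      (#(s.bipartiteBelow r b) : R) ≤ c := fun b hb ↦ (mem_filter.mp hb).2.le
  calc (#s : R) * d
    _ ≤ ∑ a ∈ s, (#(t.bipartiteAbove r a) : R) := by
      simpa only [nsmul_eq_mul] using card_nsmul_le_sum s _ d hd
    _ = ∑ b ∈ t, (#(s.bipartiteBelow r b) : R) := by
      rw [← Nat.cast_sum, ← Nat.cast_sum, sum_card_bipartiteAbove_eq_sum_card_bipartiteBelow]
    _ = ∑ b ∈ t with c ≤ #(s.bipartiteBelow r b), (#(s.bipartiteBelow r b) : R)
        + ∑ b ∈ t with (#(s.bipartiteBelow r b) : R) < c, (#(s.bipartiteBelow r b) : R) := by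
      simpa only [not_le] using
        (sum_filter_add_sum_filter_not t (fun b ↦ c ≤ (#(s.bipartiteBelow r b) : R)) _).symm
    _ ≤ _ := by
      simpa only [nsmul_eq_mul] using
        add_le_add (sum_le_card_nsmul _ _ _ rich_le) (sum_le_card_nsmul _ _ _ poor_le)

end DoubleCounting

section RobustNbhd

variable {V : Type*} [Finite V] {G : SimpleGraph V} {A B X Y : Set V} {n : ℕ} {ε δ ν τ : ℝ}

theorem mem_robustNbhd_of_neighborSet_subset {v : V} (hv : G.neighborSet v ⊆ A) (hX : X ⊆ A)
    (h : A.ncard + ν * n ≤ ((G.neighborSet v).ncard : ℝ) + X.ncard) :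
    v ∈ robustNbhd G n ν X := by
  have union_le : (G.neighborSet v ∪ X).ncard ≤ A.ncard :=
    Set.ncard_le_ncard (Set.union_subset hv hX)
  have inter_ge : (G.neighborSet v).ncard + X.ncard ≤ (G.neighborSet v ∩ X).ncard + A.ncard := by
    rw [← Set.ncard_inter_add_ncard_union]
    gcongr
  have inter_ge' : ((G.neighborSet v).ncard : ℝ) + X.ncard
      ≤ (G.neighborSet v ∩ X).ncard + A.ncard := mod_cast inter_ge
  change ν * n ≤ ((G.neighborSet v ∩ X).ncard : ℝ)
  linarith

theorem ncard_mul_le_ncard_robustNbhd_mul_add {d : ℝ} (hν : 0 ≤ ν)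
    (hd : ∀ x ∈ X, d ≤ ((G.neighborSet x ∩ Y).ncard : ℝ)) :
    X.ncard * d ≤ (robustNbhd G n ν X).ncard * X.ncard + Y.ncard * (ν * n) := by
  classical
  lift X to Finset V using X.toFinite
  lift Y to Finset V using Y.toFinite
  have above (x : V) : (G.neighborSet x ∩ Y).ncard = (Y.bipartiteAbove G.Adj x).card := by
    rw [← Set.ncard_coe_finset, Finset.coe_bipartiteAbove, Set.inter_comm]
    rfl
  have below (y : V) : (G.neighborSet y ∩ X).ncard = (X.bipartiteBelow G.Adj y).card := by
    rw [← Set.ncard_coe_finset, Finset.coe_bipartiteBelow, Set.inter_comm]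
    simp only [G.adj_comm _ y]
    rfl
  have rich_le : {y ∈ Y | ν * n ≤ ((X.bipartiteBelow G.Adj y).card : ℝ)}.card
      ≤ (robustNbhd G n ν X).ncard := by
    rw [← Set.ncard_coe_finset]
    refine Set.ncard_le_ncard fun y hy ↦ ?_
    simpa only [robustNbhd, Set.mem_ofPred_eq, below] using (Finset.mem_filter.mp hy).2
  simp only [above, SetLike.mem_coe] at hd
  simp only [Set.ncard_coe_finset]
  refine (card_mul_le_card_filter_le_mul_add_card_filter_lt_mul G.Adj (ν * n) hd).trans ?_
  gcongr
  exact Finset.filter_subset _ Y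

theorem sub_div_mul_le_ncard_robustNbhd (hν : 0 ≤ ν) (hτ : 0 < τ) (hX : X.Nonempty)
    (hτX : τ * n ≤ X.ncard) (hY : Y.ncard ≤ n)
    (hdeg : ∀ x ∈ X, δ * n ≤ ((G.neighborSet x ∩ Y).ncard : ℝ)) :
    (δ - ν / τ) * n ≤ (robustNbhd G n ν X).ncard := by
  have X_pos : (0 : ℝ) < X.ncard := mod_cast hX.ncard_pos
  have poor_edges_le : Y.ncard * (ν * n) ≤ ν / τ * n * X.ncard := calc
    _ ≤ (n : ℝ) * (ν * n) := by gcongr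
    _ = ν / τ * n * (τ * n) := by field_simp
    _ ≤ ν / τ * n * X.ncard := by gcongr
  refine le_of_mul_le_mul_right ?_ X_pos
  linarith [ncard_mul_le_ncard_robustNbhd_mul_add (n := n) hν hdeg]

theorem ncard_add_le_ncard_robustNbhd_of_subset_left (hν : 0 ≤ ν) (hντ : ν ≤ τ) (hτ : 0 < τ)
    (hε : ν + ν / τ ≤ ε) (hG : G.IsBipartiteWith A B) (hA : A.ncard = n) (hB : B.ncard = n)
    (hdeg : ∀ v, (1 / 2 + ε) * n ≤ ((G.neighborSet v).ncard : ℝ)) (hXA : X ⊆ A)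
    (hτX : τ * n ≤ X.ncard) (hXτ : X.ncard ≤ (1 - τ) * n) :
    X.ncard + ν * n ≤ ((robustNbhd G n ν X).ncard : ℝ) := by
  have ν_div_nonneg : 0 ≤ ν / τ := by positivity
  have εn_ge : (ν + ν / τ) * n ≤ ε * n := by gcongr
  rcases le_or_gt (n / 2 : ℝ) X.ncard with large | small
  · have B_subset : B ⊆ robustNbhd G n ν X := fun b hb ↦ by
      have νn_le : ν * n ≤ ε * n := by gcongr; linarith
      refine mem_robustNbhd_of_neighborSet_subset
        (SimpleGraph.isBipartiteWith_neighborSet_subset' hG hb) hXA ?_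
      rw [hA]
      linarith [hdeg b]
    calc X.ncard + ν * n
      _ ≤ (1 - τ) * n + τ * n := by gcongr
      _ = B.ncard := by rw [hB]; ring
      _ ≤ (robustNbhd G n ν X).ncard := mod_cast Set.ncard_le_ncard B_subset
  · have X_nonempty : X.Nonempty := by
      have n_pos : (0 : ℝ) < n := by linarith [Nat.cast_nonneg (α := ℝ) X.ncard]
      have X_pos : (0 : ℝ) < X.ncard := (mul_pos hτ n_pos).trans_le hτX
      exact (Set.ncard_pos X.toFinite).mp (mod_cast X_pos)
    have hdegB : ∀ x ∈ X, (1 / 2 + ε) * n ≤ ((G.neighborSet x ∩ B).ncard : ℝ) := fun x hx ↦ by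
      rw [Set.inter_eq_left.mpr (SimpleGraph.isBipartiteWith_neighborSet_subset hG (hXA hx))]
      exact hdeg x
    calc X.ncard + ν * n
      _ ≤ (1 / 2 + ε - ν / τ) * n := by linarith
      _ ≤ (robustNbhd G n ν X).ncard :=
        sub_div_mul_le_ncard_robustNbhd hν hτ X_nonempty hτX hB.le hdegB

theorem min_degree_implies_robust_expander_general (hν : 0 ≤ ν) (hντ : ν ≤ τ) (hτ : 0 < τ)
    (hε : ν + ν / τ ≤ ε) (hG : G.IsBipartiteWith A B) (hA : A.ncard = n) (hB : B.ncard = n)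
    (hdeg : ∀ v, (1 / 2 + ε) * n ≤ ((G.neighborSet v).ncard : ℝ)) :
    BipRobustExpander G A B n ν τ := by
  rintro X (hXA | hXB) hτX hXτ
  · exact ncard_add_le_ncard_robustNbhd_of_subset_left hν hντ hτ hε hG hA hB hdeg hXA hτX hXτ
  · exact ncard_add_le_ncard_robustNbhd_of_subset_left hν hντ hτ hε hG.symm hB hA hdeg hXB hτX hXτ

end RobustNbhd

/-- every balanced bipartite graph on 2n vertices with minimum degree at
least (1/2 + ε)n is a bipartite robust (ε/8, 1/4)-expander (for n large enough). -/
theorem min_degree_implies_robust_expander :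
    ∀ ε : ℝ, ε ∈ Set.Ioo (0 : ℝ) 1 →
    ∃ n₀ : ℕ, ∀ n : ℕ, n₀ ≤ n →
      ∀ (V : Type) [Fintype V] (G : SimpleGraph V) (A B : Set V),
        A ∪ B = Set.univ → Disjoint A B → A.ncard = n → B.ncard = n →
        (∀ u v : V, G.Adj u v → (u ∈ A ∧ v ∈ B) ∨ (u ∈ B ∧ v ∈ A)) →
        (∀ v : V, (1 / 2 + ε) * n ≤ ((G.neighborSet v).ncard : ℝ)) →
        BipRobustExpander G A B n (ε / 8) (1 / 4) :=
  fun _ hε ↦ ⟨0, fun _ _ _ _ _ _ _ _ hdisj hA hB hadj hdeg ↦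
    min_degree_implies_robust_expander_general (by linarith [hε.1]) (by linarith [hε.2])
      (by norm_num) (by linarith [hε.1]) ⟨hdisj, hadj⟩ hA hB hdeg⟩
end

section
/- Let n ∈ ℕ with n ≥ 2 and let K_{n,n} be the complete bipartite graph on 2n vertices. Then for every (n−1)/16-bounded edge colouring χ of K_{n,n} there exists a perfect matching of K_{n,n} that is rainbow with respect to χ. -/
/-!
Choose a bijection `π : α ≃ β` uniformly at random; it is a perfect matching of `K_{α,β}`, and it is
rainbow unless it extends one of the pairs of equally coloured cells of `α × β`. Two such events
whose pairs of cells have no row or column in common are not independent, but they are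
*negatively* dependent: the lopsided local lemma only asks that avoiding the unrelated events does
not make a given pair more likely than `1 / (n (n - 1))`. This is seen by switching: a bijection
extending `P` and avoiding the unrelated events can have its values on the rows of `P` rerouted to
arbitrary distinct columns, reversibly and without creating an unrelated event. A pair meets at most
`4 n` cells, each with at most `(n - 1) / 16` others of its colour, so it is related to at most
`n (n - 1) / 4` pairs, which is exactly what the local lemma with `4 p d ≤ 1` tolerates.
-/

open Finset Function MeasureTheory

namespace ErdosSpencer

section LocalLemma

variable {Ω ι : Type*}

/-- The outcomes at which none of the events `A i`, `i ∈ S`, occurs. -/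
def avoiding (A : ι → Set Ω) (S : Finset ι) : Set Ω :=
  {ω | ∀ i ∈ S, ω ∉ A i}

theorem avoiding_anti (A : ι → Set Ω) {S T : Finset ι} (h : S ⊆ T) :
    avoiding A T ⊆ avoiding A S :=
  fun _ hω i hi ↦ hω i (h hi)

variable [MeasurableSpace Ω] {μ : Measure Ω} {A : ι → Set Ω} {Γ : ι → ι → Prop} {p : ℝ}

/-- `Γ` is a lopsidependency relation with probability bound `p` for the events `A`: each `A i` has
conditional probability at most `p` given that any finitely many events unrelated to it are avoided.
The bound is stated without division, so `μ` need not be normalised and the conditioning event may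
be null. -/
def IsLopsided (μ : Measure Ω) (A : ι → Set Ω) (Γ : ι → ι → Prop) (p : ℝ) : Prop :=
  ∀ i, ∀ S : Finset ι, (∀ j ∈ S, ¬ Γ i j) →
    μ.real (A i ∩ avoiding A S) ≤ p * μ.real (avoiding A S)

theorem measureReal_avoiding_le_add_sum [DecidableEq ι] [IsFiniteMeasure μ] (S T : Finset ι) :
    μ.real (avoiding A S) ≤
      μ.real (avoiding A (T ∪ S)) + ∑ i ∈ T, μ.real (A i ∩ avoiding A S) := by
  have hcover : avoiding A S ⊆ avoiding A (T ∪ S) ∪ ⋃ i ∈ T, A i ∩ avoiding A S := by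
    intro ω hω
    by_cases h : ∃ i ∈ T, ω ∈ A i
    · obtain ⟨i, hi, hωi⟩ := h
      exact .inr (Set.mem_biUnion hi ⟨hωi, hω⟩)
    · push Not at h
      exact .inl fun i hi ↦ (mem_union.1 hi).elim (h i) (hω i)
  calc μ.real (avoiding A S)
      ≤ μ.real (avoiding A (T ∪ S) ∪ ⋃ i ∈ T, A i ∩ avoiding A S) := measureReal_mono hcover
    _ ≤ μ.real (avoiding A (T ∪ S)) + μ.real (⋃ i ∈ T, A i ∩ avoiding A S) :=
        measureReal_union_le _ _
    _ ≤ _ := by gcongr; exact measureReal_biUnion_finset_le _ _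

theorem IsLopsided.measureReal_inter_avoiding_le [IsFiniteMeasure μ] (hA : IsLopsided μ A Γ p)
    (hp : 0 ≤ p) (hΓ : ∀ i, ∀ T : Finset ι, (∀ j ∈ T, Γ i j) → 4 * p * #T ≤ 1)
    (S : Finset ι) (i : ι) :
    μ.real (A i ∩ avoiding A S) ≤ 2 * p * μ.real (avoiding A S) := by
  classical
  induction S using Finset.strongInduction generalizing i with
  | H S ih =>
    let N := {j ∈ S | Γ i j}
    let F := {j ∈ S | ¬ Γ i j}
    have hterm : ∀ j ∈ N, μ.real (A j ∩ avoiding A F) ≤ 2 * p * μ.real (avoiding A F) := by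
      intro j hj
      obtain ⟨hjS, hij⟩ := mem_filter.1 hj
      exact ih F (filter_ssubset.2 ⟨j, hjS, not_not.2 hij⟩) j
    have hsum : ∑ j ∈ N, μ.real (A j ∩ avoiding A F) ≤ μ.real (avoiding A F) / 2 :=
      calc ∑ j ∈ N, μ.real (A j ∩ avoiding A F)
          ≤ #N * (2 * p * μ.real (avoiding A F)) := by
            simpa only [nsmul_eq_mul] using sum_le_card_nsmul N _ _ hterm
        _ = 4 * p * #N * (μ.real (avoiding A F) / 2) := by ring
        _ ≤ 1 * (μ.real (avoiding A F) / 2) := by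
            gcongr
            exact hΓ i N fun j hj ↦ (mem_filter.1 hj).2
        _ = μ.real (avoiding A F) / 2 := one_mul _
    have hhalf : μ.real (avoiding A F) ≤ 2 * μ.real (avoiding A S) := by
      have hunion := measureReal_avoiding_le_add_sum (μ := μ) (A := A) F N
      rw [show N ∪ F = S from filter_union_filter_not_eq _ S] at hunion
      linarith
    calc μ.real (A i ∩ avoiding A S)
        ≤ μ.real (A i ∩ avoiding A F) :=
          measureReal_mono (Set.inter_subset_inter_right _ (avoiding_anti A (filter_subset _ S)))
      _ ≤ p * μ.real (avoiding A F) := hA i F fun j hj ↦ (mem_filter.1 hj).2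
      _ ≤ p * (2 * μ.real (avoiding A S)) := by gcongr
      _ = 2 * p * μ.real (avoiding A S) := by ring

theorem IsLopsided.nonempty_avoiding [IsFiniteMeasure μ] [NeZero μ] (hA : IsLopsided μ A Γ p)
    (hp : 0 ≤ p) (hp' : p < 1 / 2)
    (hΓ : ∀ i, ∀ T : Finset ι, (∀ j ∈ T, Γ i j) → 4 * p * #T ≤ 1) (S : Finset ι) :
    (avoiding A S).Nonempty := by
  classical
  suffices hpos : 0 < μ.real (avoiding A S) from
    nonempty_of_measure_ne_zero (ENNReal.toReal_pos_iff.1 hpos).1.ne'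
  induction S using Finset.induction_on with
  | empty => simp [avoiding]
  | insert i S _ ih =>
    have hunion := measureReal_avoiding_le_add_sum (μ := μ) (A := A) S {i}
    rw [sum_singleton, ← insert_eq] at hunion
    have hcond := hA.measureReal_inter_avoiding_le hp hΓ S i
    have hstrict : 2 * p * μ.real (avoiding A S) < 1 * μ.real (avoiding A S) := by
      gcongr
      linarith
    linarith

end LocalLemma

section Bijections

variable {α β ι : Type*}

/-- The bijections whose graph contains all cells of `P`, that is, the perfect matchings of
`K_{α,β}` containing a given set `P` of edges. It is empty if `P` is not a matching. -/
def extensions (P : Finset (α × β)) : Set (α ≃ β) :=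
  {π | ∀ c ∈ P, π c.1 = c.2}

/-- Two sets of cells meet if a cell of one is in the same row or column as a cell of the other. -/
def Meets (P Q : Finset (α × β)) : Prop :=
  ∃ c ∈ P, ∃ d ∈ Q, c.1 = d.1 ∨ c.2 = d.2

theorem exists_perm_apply_eq_and_apply_mem_range [Finite ι] (b g : ι ↪ β) :
    ∃ τ : Equiv.Perm β, (∀ i, τ (b i) = g i) ∧
      ∀ x, x ∉ Set.range b → τ x = x ∨ τ x ∈ Set.range b := by
  classical
  have := Fintype.ofFinite ι
  suffices h : ∀ s : Finset ι, ∃ τ : Equiv.Perm β, (∀ i ∈ s, τ (b i) = g i) ∧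
      ∀ x, x ∉ b '' s → τ x = x ∨ τ x ∈ b '' s by
    simpa using h univ
  intro s
  induction s using Finset.induction_on with
  | empty => exact ⟨1, by simp⟩
  | insert i s hi ih =>
    obtain ⟨τ, hτ, hτ'⟩ := ih
    have hbi : b i ∉ b '' s := by simpa using hi
    -- Off `b '' insert i s`, the swap only redirects `τ⁻¹ (g i)`, and it does so to `τ (b i)`,
    -- which is `b i` or lies in `b '' s`.
    refine ⟨τ.trans (Equiv.swap (τ (b i)) (g i)), fun j hj ↦ ?_, fun x hx ↦ ?_⟩
    · rcases mem_insert.1 hj with rfl | hjs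
      · simp
      · have hji : j ≠ i := ne_of_mem_of_not_mem hjs hi
        rw [Equiv.trans_apply, hτ j hjs]
        refine Equiv.swap_apply_of_ne_of_ne ?_ (g.injective.ne hji)
        rw [← hτ j hjs]
        exact τ.injective.ne (b.injective.ne hji)
    · rw [coe_insert, Set.image_insert_eq, Set.mem_insert_iff, not_or] at hx
      have hne : τ x ≠ τ (b i) := τ.injective.ne hx.1
      rw [coe_insert, Set.image_insert_eq, Equiv.trans_apply]
      by_cases hxg : τ x = g i
      · rw [hxg, Equiv.swap_apply_right]
        exact .inr ((hτ' (b i) hbi).elim .inl .inr)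
      · rw [Equiv.swap_apply_of_ne_of_ne hne hxg]
        exact (hτ' x hx.2).imp_right .inr

theorem mem_extensions_of_trans_mem_extensions {P Q : Finset (α × β)} (hPQ : ¬ Meets P Q)
    {π : α ≃ β} (hπ : π ∈ extensions P) {τ : Equiv.Perm β}
    (hτ : ∀ x, x ∉ Prod.snd '' (P : Set (α × β)) → τ x = x ∨ τ x ∈ Prod.snd '' (P : Set (α × β)))
    (hQ : π.trans τ ∈ extensions Q) :
    π ∈ extensions Q := by
  intro d hd
  have hd' : τ (π d.1) = d.2 := hQ d hd
  have hrow : π d.1 ∉ Prod.snd '' (P : Set (α × β)) := by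
    rintro ⟨c, hc, hcd⟩
    exact hPQ ⟨c, hc, d, hd, .inl (π.injective ((hπ c hc).trans hcd))⟩
  rcases hτ _ hrow with h | ⟨c, hc, hcd⟩
  · exact h.symm.trans hd'
  · exact absurd ⟨c, hc, d, hd, .inr (hcd.trans hd')⟩ hPQ

theorem descFactorial_mul_ncard_extensions_inter_avoiding_le [Finite α] [Fintype β]
    {P : ι → Finset (α × β)} {i : ι} {S : Finset ι} (hS : ∀ j ∈ S, ¬ Meets (P i) (P j)) :
    (Fintype.card β).descFactorial #(P i) *
        (extensions (P i) ∩ avoiding (fun j ↦ extensions (P j)) S).ncard ≤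
      (avoiding (fun j ↦ extensions (P j)) S).ncard := by
  set X := extensions (P i) ∩ avoiding (fun j ↦ extensions (P j)) S
  obtain hempty | ⟨π₀, hπ₀, -⟩ := X.eq_empty_or_nonempty
  · simp [hempty]
  let b : P i ↪ β := ⟨fun c ↦ c.1.2, fun c d hcd ↦ Subtype.ext <| Prod.ext
    (π₀.injective (((hπ₀ c c.2).trans hcd).trans (hπ₀ d d.2).symm)) hcd⟩
  have hb : Set.range b = Prod.snd '' (P i : Set (α × β)) :=
    Set.ext fun x ↦ ⟨fun ⟨c, hc⟩ ↦ ⟨c.1, c.2, hc⟩, fun ⟨c, hc, hcx⟩ ↦ ⟨⟨c, hc⟩, hcx⟩⟩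
  choose τ hτ hτ' using fun g : P i ↪ β ↦ exists_perm_apply_eq_and_apply_mem_range b g
  have hcard : (Set.univ : Set (P i ↪ β)).ncard = (Fintype.card β).descFactorial #(P i) := by
    rw [Set.ncard_univ, Nat.card_eq_fintype_card, Fintype.card_embedding_eq, Fintype.card_coe]
  rw [← hcard, ← Set.ncard_prod]
  refine Set.ncard_le_ncard_of_injOn (fun x ↦ x.2.trans (τ x.1)) ?_ ?_
  · rintro ⟨g, π⟩ ⟨-, hπ, hav⟩ j hj hmem
    exact hav j hj (mem_extensions_of_trans_mem_extensions (hS j hj) hπ (hb ▸ hτ' g) hmem)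
  · rintro ⟨g, π⟩ ⟨-, hπ, -⟩ ⟨g', π'⟩ ⟨-, hπ', -⟩ (heq : π.trans (τ g) = π'.trans (τ g'))
    have happly (g : P i ↪ β) {π : α ≃ β} (hπ : π ∈ extensions (P i)) (c : P i) :
        π.trans (τ g) c.1.1 = g c := by
      rw [Equiv.trans_apply, hπ c c.2]
      exact hτ g c
    obtain rfl : g = g' := by
      ext c
      rw [← happly g hπ c, heq, happly g' hπ' c]
    have : π = π' := by
      ext a
      exact (τ g).injective (DFunLike.congr_fun heq a)
    rw [this]

theorem isLopsided_count_extensions [Finite α] [Fintype β] [MeasurableSpace (α ≃ β)]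
    [MeasurableSingletonClass (α ≃ β)] {k : ℕ} (hk : k ≤ Fintype.card β)
    {P : ι → Finset (α × β)} (hP : ∀ i, #(P i) = k) :
    IsLopsided Measure.count (fun i ↦ extensions (P i)) (fun i j ↦ Meets (P i) (P j))
      ((Fintype.card β).descFactorial k : ℝ)⁻¹ := by
  intro i S hS
  have hreal (s : Set (α ≃ β)) : Measure.count.real s = s.ncard := by
    rw [Measure.real, Measure.count_apply_finite s s.toFinite, ENNReal.toReal_natCast,
      ← Set.ncard_eq_toFinset_card s]
  have hpos : (0 : ℝ) < (Fintype.card β).descFactorial k :=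
    mod_cast Nat.descFactorial_pos.2 hk
  rw [hreal, hreal, le_inv_mul_iff₀ hpos, ← hP i]
  exact_mod_cast descFactorial_mul_ncard_extensions_inter_avoiding_le hS

end Bijections

section Rainbow

variable {α β C : Type*} {f : α × β → C}

/-- A set of two cells on which the colouring `f` is constant. -/
def IsMonochromaticPair (f : α × β → C) (P : Finset (α × β)) : Prop :=
  #P = 2 ∧ ∀ c ∈ P, ∀ d ∈ P, f c = f d

theorem injective_of_forall_notMem_extensions {π : α ≃ β}
    (hπ : ∀ P, IsMonochromaticPair f P → π ∉ extensions P) :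
    Injective fun a ↦ f (a, π a) := by
  classical
  intro a a' (h : f (a, π a) = f (a', π a'))
  by_contra hne
  refine hπ {(a, π a), (a', π a')} ⟨card_pair (by simp [hne]), ?_⟩ ?_
  · simp [h]
  · simp [extensions]

theorem IsMonochromaticPair.exists_ne {P : Finset (α × β)} (hP : IsMonochromaticPair f P)
    {c : α × β} (hc : c ∈ P) : ∃ d ∈ P, d ≠ c ∧ f d = f c := by
  obtain ⟨d, hd, hdc⟩ := exists_mem_ne (by rw [hP.1]; exact one_lt_two) c
  exact ⟨d, hd, hdc, hP.2 d hd c hc⟩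

variable [Fintype α] [Fintype β] [DecidableEq α] [DecidableEq β]

theorem card_cells_meeting_le (P : Finset (α × β)) :
    #{d : α × β | ∃ c ∈ P, c.1 = d.1 ∨ c.2 = d.2} ≤ #P * (Fintype.card α + Fintype.card β) := by
  have hsub : ({d : α × β | ∃ c ∈ P, c.1 = d.1 ∨ c.2 = d.2} : Finset (α × β)) ⊆
      P.biUnion fun c ↦ univ.image (c.1, ·) ∪ univ.image (·, c.2) := by
    rintro ⟨x, y⟩
    simp
  refine (card_le_card hsub).trans (card_biUnion_le_card_mul _ _ _ fun c _ ↦ ?_)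
  refine (card_union_le _ _).trans ?_
  rw [add_comm]
  exact Nat.add_le_add card_image_le card_image_le

theorem card_monochromaticPairs_meeting_le [DecidableEq C] {m : ℕ}
    (hf : ∀ c, #{d | d ≠ c ∧ f d = f c} ≤ m) (P : Finset (α × β))
    {T : Finset (Finset (α × β))} (hT : ∀ Q ∈ T, IsMonochromaticPair f Q ∧ Meets P Q) :
    #T ≤ #P * (Fintype.card α + Fintype.card β) * m := by
  have hsub : T ⊆ ({d : α × β | ∃ c ∈ P, c.1 = d.1 ∨ c.2 = d.2} : Finset (α × β)).biUnion
      fun d ↦ ({e | e ≠ d ∧ f e = f d} : Finset (α × β)).image fun e ↦ {d, e} := by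
    intro Q hQ
    obtain ⟨hpair, c, hc, d, hd, hcd⟩ := hT Q hQ
    obtain ⟨e, he, hed⟩ := hpair.exists_ne hd
    have hQde : {d, e} = Q := eq_of_subset_of_card_le (by simp [insert_subset_iff, hd, he])
      (by rw [hpair.1, card_pair hed.1.symm])
    exact mem_biUnion.2 ⟨d, by simpa using ⟨c.1, c.2, hc, hcd⟩,
      mem_image.2 ⟨e, by simpa using hed, hQde⟩⟩
  calc #T ≤ _ := card_le_card hsub
    _ ≤ #{d : α × β | ∃ c ∈ P, c.1 = d.1 ∨ c.2 = d.2} * m :=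
        card_biUnion_le_card_mul _ _ _ fun d _ ↦ card_image_le.trans (hf d)
    _ ≤ #P * (Fintype.card α + Fintype.card β) * m := by
        gcongr
        exact card_cells_meeting_le P

theorem IsMonochromaticPair.lt_card [DecidableEq C] {n : ℕ}
    (hf : ∀ c, 16 * #{d | d ≠ c ∧ f d = f c} < n) {P : Finset (α × β)}
    (hP : IsMonochromaticPair f P) : 16 < n := by
  obtain ⟨c, hc⟩ : P.Nonempty := card_pos.1 (by rw [hP.1]; exact two_pos)
  obtain ⟨d, -, hd⟩ := hP.exists_ne hc
  have hpos : 0 < #{d | d ≠ c ∧ f d = f c} := card_pos.2 ⟨d, by simpa using hd⟩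
  have := hf c
  omega

theorem four_mul_card_monochromaticPairs_meeting_le [DecidableEq C] {n : ℕ}
    (hα : Fintype.card α = n) (hβ : Fintype.card β = n)
    (hf : ∀ c, 16 * #{d | d ≠ c ∧ f d = f c} < n) {P : Finset (α × β)} (hP : #P = 2)
    {T : Finset (Finset (α × β))} (hT : ∀ Q ∈ T, IsMonochromaticPair f Q ∧ Meets P Q) :
    4 * #T ≤ n.descFactorial 2 := by
  have hmates (c : α × β) : #{d | d ≠ c ∧ f d = f c} ≤ (n - 1) / 16 := by
    have := hf c
    omega
  calc 4 * #T ≤ 4 * (#P * (Fintype.card α + Fintype.card β) * ((n - 1) / 16)) :=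
        Nat.mul_le_mul_left 4 (card_monochromaticPairs_meeting_le hmates P hT)
    _ = n * (16 * ((n - 1) / 16)) := by rw [hP, hα, hβ]; ring
    _ ≤ n * (n - 1) := Nat.mul_le_mul_left n (Nat.mul_div_le _ _)
    _ = n.descFactorial 2 := by simp [Nat.descFactorial_succ, mul_comm]

theorem exists_equiv_injective_colour [DecidableEq C] (hcard : Fintype.card α = Fintype.card β)
    (hf : ∀ c, 16 * #{d | d ≠ c ∧ f d = f c} < Fintype.card β) :
    ∃ π : α ≃ β, Injective fun a ↦ f (a, π a) := by
  suffices h : ∃ π : α ≃ β, ∀ P, IsMonochromaticPair f P → π ∉ extensions P from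
    h.imp fun π ↦ injective_of_forall_notMem_extensions
  have : Nonempty (α ≃ β) := ⟨Fintype.equivOfCardEq hcard⟩
  let ι := {P // IsMonochromaticPair f P}
  obtain hempty | ⟨P₀, hP₀⟩ := isEmpty_or_nonempty ι
  · exact ⟨Classical.arbitrary _, fun P hP ↦ hempty.elim ⟨P, hP⟩⟩
  set n := Fintype.card β
  have hn : 16 < n := hP₀.lt_card hf
  have hD : 2 < n.descFactorial 2 :=
    calc 2 < 2 ^ 2 := by norm_num
      _ ≤ (n + 1 - 2) ^ 2 := Nat.pow_le_pow_left (by omega) 2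
      _ ≤ n.descFactorial 2 := Nat.pow_sub_le_descFactorial n 2
  have hp : (n.descFactorial 2 : ℝ)⁻¹ < 1 / 2 := by
    rw [one_div]
    gcongr
    exact_mod_cast hD
  have hdeg (P : ι) (T : Finset ι) (hT : ∀ Q ∈ T, Meets P.1 Q.1) :
      4 * (n.descFactorial 2 : ℝ)⁻¹ * #T ≤ 1 := by
    have hle := four_mul_card_monochromaticPairs_meeting_le hcard rfl hf P.2.1
      (T := T.map (.subtype _)) (by simpa using fun Q hQ hQT ↦ ⟨hQ, hT ⟨Q, hQ⟩ hQT⟩)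
    rw [card_map] at hle
    rw [mul_right_comm, ← div_eq_mul_inv, div_le_one (by positivity)]
    exact_mod_cast hle
  let : MeasurableSpace (α ≃ β) := ⊤
  have : MeasurableSingletonClass (α ≃ β) := ⟨fun _ ↦ trivial⟩
  have hlop := isLopsided_count_extensions (α := α) (by omega : 2 ≤ n) fun P : ι ↦ P.2.1
  have : Fintype ι := Fintype.ofFinite ι
  obtain ⟨π, hπ⟩ := hlop.nonempty_avoiding (by positivity) hp hdeg univ
  exact ⟨π, fun P hP ↦ hπ ⟨P, hP⟩ (mem_univ _)⟩

end Rainbow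

section PerfectMatching

variable {α β C : Type*}

/-- The graph of a bijection `α ≃ β`, as a subgraph of `K_{α,β}`. -/
def matchingOfEquiv (π : α ≃ β) : (completeBipartiteGraph α β).Subgraph where
  verts := Set.univ
  Adj u v := ∃ a, s(.inl a, .inr (π a)) = s(u, v)
  adj_sub := by
    rintro u v ⟨a, h⟩
    rw [← SimpleGraph.mem_edgeSet, ← h]
    simp
  edge_vert _ := Set.mem_univ _
  symm := ⟨fun u v ⟨a, h⟩ ↦ ⟨a, h.trans Sym2.eq_swap⟩⟩

theorem mem_edgeSet_matchingOfEquiv {π : α ≃ β} {e : Sym2 (α ⊕ β)} :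
    e ∈ (matchingOfEquiv π).edgeSet ↔ ∃ a, s(.inl a, .inr (π a)) = e := by
  induction e using Sym2.ind
  rfl

theorem isPerfectMatching_matchingOfEquiv (π : α ≃ β) :
    (matchingOfEquiv π).IsPerfectMatching := by
  rw [SimpleGraph.Subgraph.isPerfectMatching_iff]
  rintro (a | b)
  · refine ⟨.inr (π a), ⟨a, rfl⟩, ?_⟩
    rintro w ⟨a', h⟩
    aesop
  · refine ⟨.inl (π.symm b), ⟨π.symm b, by simp [Sym2.eq_swap]⟩, ?_⟩
    rintro w ⟨a', h⟩
    aesop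

theorem card_filter_ne_and_eq_add_one {X : Type*} [Fintype X] [DecidableEq X] [DecidableEq C]
    (f : X → C) (x : X) : #{y | y ≠ x ∧ f y = f x} + 1 = #{y | f y = f x} := by
  rw [filter_and, filter_ne', erase_inter, univ_inter]
  exact card_erase_add_one (by simp)

theorem ncard_edges_eq_card_cells [Fintype α] [Fintype β] [DecidableEq C]
    (χ : Sym2 (α ⊕ β) → C) (k : C) :
    {e | e ∈ (completeBipartiteGraph α β).edgeSet ∧ χ e = k}.ncard =
      #{c : α × β | χ s(.inl c.1, .inr c.2) = k} := by
  have hinj : Injective fun c : α × β ↦ (s(.inl c.1, .inr c.2) : Sym2 (α ⊕ β)) := by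
    rintro ⟨a, b⟩ ⟨a', b'⟩ h
    simpa using h
  rw [← Set.ncard_coe_finset, ← Set.ncard_image_of_injective _ hinj]
  congr 1
  ext e
  rw [SimpleGraph.edgeSet_completeBipartiteGraph]
  aesop

end PerfectMatching

end ErdosSpencer

open ErdosSpencer in
/-- The `+ 1` appears because only the *other* edges of the colour of a given edge enter the degree
bound in the local lemma. -/
theorem erdos_spencer_rainbow_PM_general {α β C : Type*} [Fintype α] [Fintype β]
    (hcard : Fintype.card α = Fintype.card β) (χ : Sym2 (α ⊕ β) → C)
    (hχ : ∀ k, ({e | e ∈ (completeBipartiteGraph α β).edgeSet ∧ χ e = k}.ncard : ℝ) ≤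
      ((Fintype.card α : ℝ) - 1) / 16 + 1) :
    ∃ M : (completeBipartiteGraph α β).Subgraph,
      M.IsPerfectMatching ∧ ∀ e ∈ M.edgeSet, ∀ f ∈ M.edgeSet, χ e = χ f → e = f := by
  classical
  let f (c : α × β) : C := χ s(.inl c.1, .inr c.2)
  have hf (c : α × β) : 16 * #{d | d ≠ c ∧ f d = f c} < Fintype.card β := by
    have hclass := hχ (f c)
    rw [ncard_edges_eq_card_cells, ← card_filter_ne_and_eq_add_one f c, Nat.cast_add_one] at hclass
    suffices h : 16 * #{d | d ≠ c ∧ f d = f c} + 1 ≤ Fintype.card α by omega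
    have : (16 * #{d | d ≠ c ∧ f d = f c} + 1 : ℝ) ≤ Fintype.card α := by linarith
    exact_mod_cast this
  obtain ⟨π, hπ⟩ := exists_equiv_injective_colour hcard hf
  refine ⟨matchingOfEquiv π, isPerfectMatching_matchingOfEquiv π, ?_⟩
  simp only [mem_edgeSet_matchingOfEquiv]
  rintro _ ⟨a, rfl⟩ _ ⟨b, rfl⟩ h
  rw [hπ h]

/-- Erdős–Spencer: every (n−1)/16-bounded edge colouring of the complete
bipartite graph K_{n,n} contains a rainbow perfect matching. -/
theorem erdos_spencer_rainbow_PM (n : ℕ) (hn : 2 ≤ n)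
    (χ : Sym2 (Fin n ⊕ Fin n) → ℕ)
    (hbdd : ∀ c : ℕ,
      ((({e : Sym2 (Fin n ⊕ Fin n) |
          e ∈ (completeBipartiteGraph (Fin n) (Fin n)).edgeSet ∧ χ e = c}).ncard : ℝ)
        ≤ ((n : ℝ) - 1) / 16)) :
    ∃ M : (completeBipartiteGraph (Fin n) (Fin n)).Subgraph,
      M.IsPerfectMatching ∧ ∀ e ∈ M.edgeSet, ∀ f ∈ M.edgeSet, χ e = χ f → e = f := by
  exact erdos_spencer_rainbow_PM_general rfl χ fun k ↦
    (hbdd k).trans (by rw [Fintype.card_fin]; exact le_add_of_nonneg_right zero_le_one)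
end
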